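/- arXiv:1509.01376 — 2 statements merged into one kernel-verified Lean document; each statement's English description precedes it below -/
import Mathlib

section
/- Let n ≥ 2 and let w ∈ SU(2) ∗ Fₙ be a word whose content ε(w) equals the iterated commutator cₙ ∈ Fₙ, where c₁ = x₁ and cₖ = [xₖ, cₖ₋₁] = xₖcₖ₋₁xₖ⁻¹cₖ₋₁⁻¹. Then the word map SU(2)ⁿ → SU(2), sending (g₁,…,gₙ) to the image of w under the evaluation homomorphism (identity on SU(2), xᵢ ↦ gᵢ), is surjective; in particular there exist g₁,…,gₙ ∈ SU(2) with w(g₁,…,gₙ) = 1. -/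
/-- The special unitary group `SU(n)`: the subgroup of the unitary group
`U(n) = Matrix.unitaryGroup (Fin n) ℂ` consisting of matrices of determinant `1`. -/
def SU (n : ℕ) : Subgroup (Matrix.unitaryGroup (Fin n) ℂ) where
  carrier := {A | (A : Matrix (Fin n) (Fin n) ℂ).det = 1}
  mul_mem' := by
    intro a b ha hb
    simp only [Set.mem_setOf_eq] at *
    simp [Matrix.UnitaryGroup.mul_val, Matrix.det_mul, ha, hb]
  one_mem' := by simp
  inv_mem' := by
    intro a ha
    simp only [Set.mem_setOf_eq] at *
    show ((a⁻¹ : Matrix.unitaryGroup (Fin n) ℂ) : Matrix (Fin n) (Fin n) ℂ).det = 1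
    rw [Matrix.UnitaryGroup.inv_val, Matrix.star_eq_conjTranspose, Matrix.det_conjTranspose, ha]
    simp

/-- The iterated commutator `cₙ`:  `c₁(g₁) = g₁` and
`cₖ(g₁, …, gₖ) = [gₖ, cₖ₋₁(g₁, …, gₖ₋₁)]` where `[x,y] = x y x⁻¹ y⁻¹`. -/
def iteratedCommutator {G : Type*} [Group G] : (n : ℕ) → (Fin n → G) → G
  | 0, _ => 1
  | 1, g => g 0
  | (n + 2), g =>
      g (Fin.last (n + 1)) * iteratedCommutator (n + 1) (fun i => g i.castSucc) *
        (g (Fin.last (n + 1)))⁻¹ *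
          (iteratedCommutator (n + 1) (fun i => g i.castSucc))⁻¹

namespace WM
open Matrix ContinuousMap unitInterval

abbrev GU (ι : Type) [Fintype ι] [DecidableEq ι] := (Matrix ι ι ℂ)ˣ

section blocks
variable {ι κ Y : Type} [Fintype ι] [DecidableEq ι] [Fintype κ] [DecidableEq κ]
  [TopologicalSpace Y]

/-- block sum as a monoid homomorphism -/
def blkM (R ι κ : Type) [Semiring R] [Fintype ι] [DecidableEq ι] [Fintype κ] [DecidableEq κ] :
    Matrix ι ι R × Matrix κ κ R →* Matrix (ι ⊕ κ) (ι ⊕ κ) R where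
  toFun p := fromBlocks p.1 0 0 p.2
  map_one' := by simp
  map_mul' p q := by simp [fromBlocks_multiply]

def blk (a : GU ι) (b : GU κ) : GU (ι ⊕ κ) :=
  Units.map (blkM ℂ ι κ) (MulEquiv.prodUnits.symm (a, b))

@[simp] lemma blk_val (a : GU ι) (b : GU κ) :
    (blk a b : Matrix (ι ⊕ κ) (ι ⊕ κ) ℂ) = fromBlocks a 0 0 b := rfl
@[simp] lemma blk_inv_val (a : GU ι) (b : GU κ) :
    ((blk a b)⁻¹ : GU (ι ⊕ κ)).val = fromBlocks (a⁻¹ : GU ι) 0 0 (b⁻¹ : GU κ) := rfl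

lemma blk_mul (a a' : GU ι) (b b' : GU κ) : blk (a * a') (b * b') = blk a b * blk a' b' := by
  ext1; simp [fromBlocks_multiply]
lemma blk_one : blk (1 : GU ι) (1 : GU κ) = 1 := by
  ext1; simp
lemma blk_inv (a : GU ι) (b : GU κ) : (blk a b)⁻¹ = blk a⁻¹ b⁻¹ := by
  ext1; rfl

lemma continuous_blk : Continuous fun p : GU ι × GU κ => blk p.1 p.2 := by
  rw [Units.continuous_iff]
  refine ⟨?_, ?_⟩
  · exact Continuous.matrix_fromBlocks (Units.continuous_val.comp continuous_fst) continuous_const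
      continuous_const (Units.continuous_val.comp continuous_snd)
  · exact Continuous.matrix_fromBlocks (Units.continuous_val.comp continuous_fst.inv)
      continuous_const continuous_const (Units.continuous_val.comp continuous_snd.inv)

@[fun_prop] lemma _root_.Continuous.blk {f : Y → GU ι} {g : Y → GU κ} (hf : Continuous f)
    (hg : Continuous g) : Continuous fun y => blk (f y) (g y) :=
  continuous_blk.comp (hf.prodMk hg)

def rdx (e : ι ≃ κ) : GU ι ≃* GU κ := Units.mapEquiv (Matrix.reindexAlgEquiv ℂ ℂ e).toMulEquiv

@[simp] lemma rdx_val (e : ι ≃ κ) (a : GU ι) : (rdx e a : Matrix κ κ ℂ) = reindex e e a.val := rfl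

@[fun_prop] lemma continuous_rdx (e : ι ≃ κ) : Continuous (rdx e) := by
  rw [Units.continuous_iff]
  exact ⟨Continuous.matrix_reindex Units.continuous_val e e,
    Continuous.matrix_reindex (Units.continuous_val.comp continuous_inv) e e⟩

/-- rotation -/
noncomputable def rotM (ι : Type) [Fintype ι] [DecidableEq ι] (θ : ℝ) :
    Matrix (ι ⊕ ι) (ι ⊕ ι) ℂ :=
  fromBlocks ((Real.cos θ : ℂ) • 1) (-(Real.sin θ : ℂ) • 1) ((Real.sin θ : ℂ) • 1)
    ((Real.cos θ : ℂ) • 1)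

lemma rotM_mul (θ φ : ℝ) : rotM ι θ * rotM ι φ = rotM ι (θ + φ) := by
  simp only [rotM, fromBlocks_multiply, smul_mul_smul_comm, mul_one, ← add_smul, Real.cos_add,
    Real.sin_add]
  push_cast
  congr 2 <;> ring

lemma rotM_zero : rotM ι 0 = 1 := by simp [rotM]

noncomputable def rot (ι : Type) [Fintype ι] [DecidableEq ι] (θ : ℝ) : GU (ι ⊕ ι) where
  val := rotM ι θ
  inv := rotM ι (-θ)
  val_inv := by simp [rotM_mul, rotM_zero]
  inv_val := by simp [rotM_mul, rotM_zero]

lemma continuous_rotM : Continuous (rotM ι) := by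
  unfold rotM
  apply Continuous.matrix_fromBlocks <;> fun_prop

@[fun_prop] lemma continuous_rot : Continuous (rot ι) := by
  rw [Units.continuous_iff]
  exact ⟨continuous_rotM, continuous_rotM.comp continuous_neg⟩

@[simp] lemma rot_zero : rot ι 0 = 1 := by ext1; exact rotM_zero

lemma rot_pi_div_two (a b : GU ι) : rot ι (Real.pi / 2) * blk a b * (rot ι (Real.pi / 2))⁻¹
    = blk b a := by
  rw [mul_inv_eq_iff_eq_mul]
  ext1
  simp [rot, rotM, fromBlocks_multiply]

end blocks

section hom
variable {ι κ Y Z : Type} [Fintype ι] [DecidableEq ι] [Fintype κ] [DecidableEq κ]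
  [TopologicalSpace Y] [TopologicalSpace Z]

lemma _root_.ContinuousMap.Homotopic.mul' {H : Type} [Group H] [TopologicalSpace H]
    [IsTopologicalGroup H]
    {a b c d : C(Y, H)} (h : a.Homotopic b) (h' : c.Homotopic d) :
    (a * c).Homotopic (b * d) := by
  obtain ⟨F⟩ := h
  obtain ⟨F'⟩ := h'
  exact ⟨⟨⟨fun p => F p * F' p, by fun_prop⟩, by simp, by simp⟩⟩

lemma _root_.ContinuousMap.Homotopic.inv' {H : Type} [Group H] [TopologicalSpace H]
    [IsTopologicalGroup H]
    {a b : C(Y, H)} (h : a.Homotopic b) :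
    (a⁻¹).Homotopic (b⁻¹) := by
  obtain ⟨F⟩ := h
  exact ⟨⟨⟨fun p => (F p)⁻¹, by fun_prop⟩, by simp, by simp⟩⟩

noncomputable def cblk (a : C(Y, GU ι)) (b : C(Y, GU κ)) : C(Y, GU (ι ⊕ κ)) :=
  ⟨fun y => blk (a y) (b y), by fun_prop⟩
@[simp] lemma cblk_apply (a : C(Y, GU ι)) (b : C(Y, GU κ)) (y) : cblk a b y = blk (a y) (b y) := rfl
lemma cblk_mul (a a' : C(Y, GU ι)) (b b' : C(Y, GU κ)) :
    cblk (a * a') (b * b') = cblk a b * cblk a' b' := by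
  ext1 y; simp [blk_mul]
lemma cblk_inv (a : C(Y, GU ι)) (b : C(Y, GU κ)) :
    (cblk a b)⁻¹ = cblk a⁻¹ b⁻¹ := by
  ext1 y; simp [blk_inv]
lemma cblk_one : cblk (1 : C(Y, GU ι)) (1 : C(Y, GU κ)) = 1 := by
  ext1 y; simp [blk_one]

lemma cblk_homotopic {a a' : C(Y, GU ι)} {b b' : C(Y, GU κ)} (h : a.Homotopic a')
    (h' : b.Homotopic b') : (cblk a b).Homotopic (cblk a' b') := by
  obtain ⟨F⟩ := h
  obtain ⟨F'⟩ := h'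
  exact ⟨⟨⟨fun p => blk (F p) (F' p), by fun_prop⟩, by simp, by simp⟩⟩

noncomputable def crdx (e : ι ≃ κ) (a : C(Y, GU ι)) : C(Y, GU κ) := ⟨fun y => rdx e (a y), by fun_prop⟩
@[simp] lemma crdx_apply (e : ι ≃ κ) (a : C(Y, GU ι)) (y) : crdx e a y = rdx e (a y) := rfl
lemma crdx_mul (e : ι ≃ κ) (a b : C(Y, GU ι)) : crdx e (a * b) = crdx e a * crdx e b := by
  ext1 y; simp
lemma crdx_homotopic (e : ι ≃ κ) {a b : C(Y, GU ι)} (h : a.Homotopic b) :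
    (crdx e a).Homotopic (crdx e b) := by
  obtain ⟨F⟩ := h
  exact ⟨⟨⟨fun p => rdx e (F p), by fun_prop⟩, by simp, by simp⟩⟩

/-- `u v ⊕ 1 ~ u ⊕ v` -/
lemma whitehead (u v : C(Y, GU ι)) : (cblk (u * v) 1).Homotopic (cblk u v) := by
  refine ⟨⟨⟨fun p => blk (u p.2) 1 * (rot ι (Real.pi / 2 * p.1) * blk (v p.2) 1 *
    (rot ι (Real.pi / 2 * p.1))⁻¹), by fun_prop⟩, ?_, ?_⟩⟩
  · intro y; simp [← blk_mul]
  · intro y; simp [rot_pi_div_two, ← blk_mul]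

def Sq (a : C(Y, GU ι)) : Prop := ∃ u : C(Y, GU ι), a.Homotopic (u * u)

def Ev (a : C(Y, GU ι)) : Prop :=
  ∃ (κ : Type) (_ : Fintype κ) (_ : DecidableEq κ), Sq (cblk a (1 : C(Y, GU κ)))

lemma Sq.rdx (e : ι ≃ κ) {a : C(Y, GU ι)} (h : Sq a) : Sq (crdx e a) := by
  obtain ⟨u, hu⟩ := h
  exact ⟨crdx e u, by simpa [crdx_mul] using crdx_homotopic e hu⟩

lemma Sq.stab {a : C(Y, GU ι)} (h : Sq a) : Sq (cblk a (1 : C(Y, GU κ))) := by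
  obtain ⟨u, hu⟩ := h
  exact ⟨cblk u 1, by simpa [← cblk_mul] using cblk_homotopic hu (Homotopic.refl 1)⟩

lemma Sq.congr {a b : C(Y, GU ι)} (h : Sq a) (hab : b.Homotopic a) : Sq b := by
  obtain ⟨u, hu⟩ := h
  exact ⟨u, hab.trans hu⟩

lemma Ev.congr {a b : C(Y, GU ι)} (h : Ev a) (hab : b.Homotopic a) : Ev b := by
  obtain ⟨κ, _, _, h⟩ := h
  exact ⟨κ, _, _, h.congr (cblk_homotopic hab (Homotopic.refl 1))⟩

lemma rdx_assoc {μ : Type} [Fintype μ] [DecidableEq μ] (a : GU ι) (b : GU κ) (c : GU μ) :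
    WM.rdx (Equiv.sumAssoc ι κ μ) (blk (blk a b) c) = blk a (blk b c) := by
  ext1
  simp only [rdx_val, blk_val]
  ext i j
  rcases i with i | i | i <;> rcases j with j | j | j <;> simp

/-- general change of index sets -/
lemma Sq.ev {a : C(Y, GU ι)} {μ : Type} [Fintype μ] [DecidableEq μ] {b : C(Y, GU μ)}
    (h : Sq b) (e : μ ≃ ι ⊕ κ) (hb : crdx e b = cblk a 1) : Ev a :=
  ⟨κ, _, _, hb ▸ h.rdx e⟩

lemma Ev.of_stab {a : C(Y, GU ι)} (h : Ev (cblk a (1 : C(Y, GU κ)))) : Ev a := by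
  obtain ⟨μ, _, _, h⟩ := h
  refine h.ev (Equiv.sumAssoc ι κ μ) ?_
  ext1 y
  simp [rdx_assoc, blk_one]

lemma Ev.rdx (e : ι ≃ κ) {a : C(Y, GU ι)} (h : Ev a) : Ev (crdx e a) := by
  obtain ⟨μ, _, _, h⟩ := h
  refine h.ev (Equiv.sumCongr e (Equiv.refl μ)) ?_
  ext1 y; ext1
  simp only [crdx_apply, rdx_val, cblk_apply, blk_val]
  ext i j
  rcases i with i | i <;> rcases j with j | j <;> simp

lemma rdx_comm (a : GU ι) (b : GU κ) :
    WM.rdx (Equiv.sumComm ι κ) (blk a b) = blk b a := by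
  ext1
  simp only [rdx_val, blk_val]
  ext i j
  rcases i with i | i <;> rcases j with j | j <;> simp

lemma Ev.stab {a : C(Y, GU ι)} (h : Ev a) : Ev (cblk a (1 : C(Y, GU κ))) := by
  obtain ⟨μ, _, _, h⟩ := h
  have h1 := h.stab (κ := κ)
  have h2 := (h1.rdx (Equiv.sumAssoc ι μ κ)).rdx
    (Equiv.sumCongr (Equiv.refl ι) (Equiv.sumComm μ κ))
  refine h2.ev (Equiv.sumAssoc ι κ μ).symm ?_
  ext1 y; ext1
  simp only [crdx_apply, cblk_apply, rdx_assoc, ContinuousMap.one_apply, blk_one]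
  simp only [rdx_val, blk_val]
  ext i j
  rcases i with (i | i) | i <;> rcases j with (j | j) | j <;> simp [Matrix.one_apply]

lemma Ev.stab' {a : C(Y, GU ι)} (h : Ev a) : Ev (cblk (1 : C(Y, GU κ)) a) := by
  have := (h.stab (κ := κ)).rdx (Equiv.sumComm ι κ)
  convert this using 1
  ext1 y
  simp [rdx_comm]

lemma Ev.sq (a : C(Y, GU ι)) : Ev (a * a) :=
  ⟨Empty, inferInstance, inferInstance, Sq.stab ⟨a, Homotopic.refl _⟩⟩

lemma Ev.one : Ev (1 : C(Y, GU ι)) := by simpa using Ev.sq (1 : C(Y, GU ι))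

lemma Sq.mul {a b : C(Y, GU ι)} (ha : Sq a) (hb : Sq b) : Ev (a * b) := by
  obtain ⟨u, hu⟩ := ha
  obtain ⟨v, hv⟩ := hb
  refine ⟨ι, _, _, cblk u v, ?_⟩
  rw [← cblk_mul]
  exact (cblk_homotopic (hu.mul' hv) (Homotopic.refl _)).trans (whitehead _ _)

lemma Ev.mul {a b : C(Y, GU ι)} (ha : Ev a) (hb : Ev b) : Ev (a * b) := by
  obtain ⟨κ, _, _, ha⟩ := ha
  obtain ⟨μ, _, _, hb⟩ := hb
  have h1 : Sq (cblk a (1 : C(Y, GU (κ ⊕ μ)))) := by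
    have := (ha.stab (κ := μ)).rdx (Equiv.sumAssoc ι κ μ)
    convert this using 1
    ext1 y
    simp [rdx_assoc, blk_one]
  have h2 : Sq (cblk b (1 : C(Y, GU (κ ⊕ μ)))) := by
    have := ((hb.stab (κ := κ)).rdx (Equiv.sumAssoc ι μ κ)).rdx
      (Equiv.sumCongr (Equiv.refl ι) (Equiv.sumComm μ κ))
    convert this using 1
    ext1 y; ext1
    simp only [crdx_apply, cblk_apply, rdx_assoc, ContinuousMap.one_apply, blk_one]
    simp only [rdx_val, blk_val]
    ext i j
    rcases i with i | i | i <;> rcases j with j | j | j <;> simp [Matrix.one_apply]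
  refine Ev.of_stab (κ := κ ⊕ μ) ?_
  simpa [← cblk_mul] using h1.mul h2

lemma Ev.inv {a : C(Y, GU ι)} (ha : Ev a) : Ev a⁻¹ := by
  obtain ⟨κ, _, _, u, hu⟩ := ha
  refine ⟨κ, _, _, u⁻¹, ?_⟩
  simpa [cblk_inv] using hu.inv'

lemma Ev.conj {a : C(Y, GU ι)} (g : C(Y, GU ι)) (ha : Ev a) : Ev (g * a * g⁻¹) := by
  have h := (((Ev.sq g).mul (Ev.sq (g⁻¹ * a))).mul (Ev.sq a).inv).mul ha
  convert h using 1
  group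

lemma Ev.pull {a : C(Y, GU ι)} (h : Ev a) (f : C(Z, Y)) : Ev (a.comp f) := by
  obtain ⟨κ, _, _, u, hu⟩ := h
  exact ⟨κ, _, _, u.comp f, hu.comp (Homotopic.refl f)⟩

end hom
end WM

namespace WM
open Matrix ContinuousMap unitInterval

/-! ### the base case -/
section base

noncomputable def dgU (a b : ℂˣ) : GU (Fin 2) where
  val := !![(a : ℂ), 0; 0, b]
  inv := !![((a⁻¹ : ℂˣ) : ℂ), 0; 0, (b⁻¹ : ℂˣ)]
  val_inv := by ext i j; fin_cases i <;> fin_cases j <;> simp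
  inv_val := by ext i j; fin_cases i <;> fin_cases j <;> simp

lemma continuous_dgU : Continuous fun p : ℂˣ × ℂˣ => dgU p.1 p.2 := by
  rw [Units.continuous_iff]
  constructor
  · refine continuous_matrix fun i j => ?_
    fin_cases i <;> fin_cases j <;> simp [dgU] <;> fun_prop
  · refine continuous_matrix fun i j => ?_
    have h1 : Continuous fun p : ℂˣ × ℂˣ => ((p.1⁻¹ : ℂˣ) : ℂ) := by fun_prop
    have h2 : Continuous fun p : ℂˣ × ℂˣ => ((p.2⁻¹ : ℂˣ) : ℂ) := by fun_prop
    fin_cases i <;> fin_cases j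
    · exact h1
    · exact continuous_const
    · exact continuous_const
    · exact h2

@[fun_prop] lemma _root_.Continuous.dgU {Y : Type} [TopologicalSpace Y] {f g : Y → ℂˣ}
    (hf : Continuous f)
    (hg : Continuous g) : Continuous fun y => dgU (f y) (g y) :=
  continuous_dgU.comp (hf.prodMk hg)

lemma dgU_mul (a b c d : ℂˣ) : dgU a b * dgU c d = dgU (a * c) (b * d) := by
  ext1
  simp [dgU]

lemma dgU_one : dgU 1 1 = 1 := by
  ext i j; fin_cases i <;> fin_cases j <;> simp [dgU]

lemma continuous_toUnits : Continuous (Circle.toUnits : Circle → ℂˣ) := by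
  rw [Units.continuous_iff]
  constructor
  · exact continuous_subtype_val
  · have : Continuous fun z : Circle => ((z⁻¹ : Circle) : ℂ) :=
      continuous_subtype_val.comp continuous_inv
    convert this using 1
    ext z
    simp

/-- `C_0 = diag (z, 1)` -/
noncomputable def dz : C(Circle, GU (Fin 2)) :=
  ⟨fun z => dgU (Circle.toUnits z) 1, by
    have := continuous_toUnits
    fun_prop⟩

def sqSub (Y : Type) [TopologicalSpace Y] : Subgroup C(Y, ℂˣ) where
  carrier := {f | ∃ c : C(Y, ℂˣ), f = c * c}
  mul_mem' := by
    rintro _ _ ⟨c, rfl⟩ ⟨d, rfl⟩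
    exact ⟨c * d, by rw [mul_mul_mul_comm]⟩
  one_mem' := ⟨1, by simp⟩
  inv_mem' := by
    rintro _ ⟨c, rfl⟩
    exact ⟨c⁻¹, by simp⟩

lemma sqSub_open (Y : Type) [TopologicalSpace Y] [CompactSpace Y] :
    IsOpen (sqSub Y : Set C(Y, ℂˣ)) := by
  apply Subgroup.isOpen_of_mem_nhds (g := 1)
  have hop : IsOpen {f : C(Y, ℂˣ) | Set.MapsTo f Set.univ {u : ℂˣ | (u : ℂ) ∈ Complex.slitPlane}} :=
    ContinuousMap.isOpen_setOfPred_mapsTo isCompact_univ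
      (Complex.isOpen_slitPlane.preimage Units.continuous_val)
  refine Filter.mem_of_superset (hop.mem_nhds ?_) ?_
  · intro y _; simp
  · intro f hf
    have hc : Continuous fun y => Complex.exp (Complex.log (f y) / 2) := by
      refine Complex.continuous_exp.comp (Continuous.div_const ?_ _)
      rw [continuous_iff_continuousAt]
      intro y
      exact (ContinuousAt.clog (by fun_prop) (hf (Set.mem_univ y)))
    refine ⟨⟨fun y => Units.mk0 (Complex.exp (Complex.log (f y) / 2)) (Complex.exp_ne_zero _), ?_⟩,
      ?_⟩
    · rw [Units.continuous_iff]
      refine ⟨hc, ?_⟩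
      simp only [Units.val_inv_eq_inv_val,
        Units.val_mk0]
      exact hc.inv₀ fun _ => Complex.exp_ne_zero _
    · ext y
      simp only [ContinuousMap.mul_apply, Units.val_mul, ContinuousMap.coe_mk, Units.val_mk0]
      rw [← Complex.exp_add, add_halves, Complex.exp_log (f y).ne_zero]

lemma sqSub_of_homotopic {Y : Type} [TopologicalSpace Y] [CompactSpace Y] {f g : C(Y, ℂˣ)}
    (h : f.Homotopic g) (hg : g ∈ sqSub Y) : f ∈ sqSub Y := by
  obtain ⟨F⟩ := h
  have hcl : IsClopen (sqSub Y : Set C(Y, ℂˣ)) :=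
    ⟨Subgroup.isClosed_of_isOpen _ (sqSub_open Y), sqSub_open Y⟩
  have hc := F.curry.continuous
  have h2 : IsClopen ((F.curry) ⁻¹' (sqSub Y : Set C(Y, ℂˣ))) := hcl.preimage hc
  have h3 := h2.eq_univ ⟨1, by
    have : F.curry 1 = g := by ext y; simp [ContinuousMap.Homotopy.curry]
    rw [Set.mem_preimage, this]; exact hg⟩
  have h4 : (0 : I) ∈ ((F.curry) ⁻¹' (sqSub Y : Set C(Y, ℂˣ))) := by rw [h3]; trivial
  have : F.curry 0 = f := by ext y; simp [ContinuousMap.Homotopy.curry]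
  rw [Set.mem_preimage, this] at h4
  exact h4

lemma no_sqrt : (⟨Circle.toUnits, continuous_toUnits⟩ : C(Circle, ℂˣ)) ∉ sqSub Circle := by
  rintro ⟨c, hc⟩
  have hc' : ∀ z : Circle, (z : ℂ) = c z * c z := fun z => by
    have := congrArg (fun f : C(Circle, ℂˣ) => ((f z : ℂˣ) : ℂ)) hc
    simpa using this
  let φ : ℝ → ℂ := fun t => c (Circle.exp t) * Complex.exp (-(t * Complex.I) / 2)
  have hφ : Continuous φ := by fun_prop
  have hsq : ∀ t, φ t = 1 ∨ φ t = -1 := fun t => by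
    apply mul_self_eq_one_iff.1
    simp only [φ]
    rw [mul_mul_mul_comm, ← hc', Circle.coe_exp, ← Complex.exp_add, ← Complex.exp_add]
    ring_nf
    simp
  have hconst : φ (2 * Real.pi) = φ 0 := by
    have h := isPreconnected_univ (α := ℝ)
    have h2 : IsPreconnected (φ '' Set.univ) := h.image _ hφ.continuousOn
    have hfin : (φ '' Set.univ).Subsingleton := by
      have hf : (φ '' Set.univ).Finite := (Set.toFinite {(1 : ℂ), -1}).subset (by
        rintro _ ⟨t, -, rfl⟩
        simpa using hsq t)
      exact hf.countable.isTotallyDisconnected _ subset_rfl h2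
    exact hfin ⟨_, trivial, rfl⟩ ⟨_, trivial, rfl⟩
  simp only [φ] at hconst
  rw [Circle.exp_two_pi, Circle.exp_zero] at hconst
  have h5 : Complex.exp (-(((2 * Real.pi : ℝ) : ℂ) * Complex.I) / 2) = -1 := by
    rw [show -(((2 * Real.pi : ℝ) : ℂ) * Complex.I) / 2 = -(Real.pi * Complex.I) by push_cast; ring,
      Complex.exp_neg, Complex.exp_pi_mul_I]
    norm_num
  rw [h5] at hconst
  simp at hconst
  have hne : ((c 1 : ℂˣ) : ℂ) ≠ 0 := (c 1).ne_zero
  have : (2 : ℂ) * (c 1 : ℂˣ) = 0 := by linear_combination -hconst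
  simp at this

lemma not_ev_dz : ¬ Ev dz := by
  rintro ⟨κ, _, _, u, hu⟩
  have hdet : Continuous (Units.map (Matrix.detMonoidHom (n := Fin 2 ⊕ κ) (R := ℂ))) :=
    Continuous.units_map _ (by
      show Continuous fun M : Matrix (Fin 2 ⊕ κ) (Fin 2 ⊕ κ) ℂ => M.det
      exact continuous_id.matrix_det)
  let D : C(GU (Fin 2 ⊕ κ), ℂˣ) := ⟨_, hdet⟩
  have h1 : (D.comp (cblk dz 1)).Homotopic (D.comp (u * u)) := (Homotopic.refl D).comp hu
  have h2 := sqSub_of_homotopic h1 ⟨D.comp u, by ext y; simp [D]⟩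
  apply no_sqrt
  convert h2 using 1
  ext z
  simp [D, dz, dgU]

end base

/-! ### invertibility and straight-line homotopies -/
section inv
variable {ι Y : Type} [Fintype ι] [DecidableEq ι] [TopologicalSpace Y]

lemma continuous_matInv {f : Y → Matrix ι ι ℂ} (hf : Continuous f) (h : ∀ y, IsUnit (f y)) :
    Continuous fun y => (f y)⁻¹ := by
  simp only [Matrix.inv_def, Ring.inverse_eq_inv']
  refine Continuous.smul (hf.matrix_det.inv₀ fun y => ?_) hf.matrix_adjugate
  exact ((Matrix.isUnit_iff_isUnit_det _).1 (h y)).ne_zero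

lemma exists_unitMap {f : Y → Matrix ι ι ℂ} (hf : Continuous f) (h : ∀ y, IsUnit (f y)) :
    ∃ u : C(Y, GU ι), ∀ y, (u y : Matrix ι ι ℂ) = f y := by
  have hd : ∀ y, IsUnit (f y).det := fun y => (Matrix.isUnit_iff_isUnit_det _).1 (h y)
  refine ⟨⟨fun y => ⟨f y, (f y)⁻¹, Matrix.mul_nonsing_inv _ (hd y),
    Matrix.nonsing_inv_mul _ (hd y)⟩, ?_⟩, fun y => rfl⟩
  rw [Units.continuous_iff]
  exact ⟨hf, continuous_matInv hf h⟩

lemma homotopic_of_segment {a b : C(Y, GU ι)}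
    (h : ∀ (t : I) y, IsUnit ((1 - (t : ℝ) : ℂ) • (a y).val + ((t : ℝ) : ℂ) • (b y).val)) :
    a.Homotopic b := by
  obtain ⟨u, hu⟩ := exists_unitMap (Y := I × Y)
    (f := fun p => (1 - ((p.1 : ℝ)) : ℂ) • (a p.2).val + ((p.1 : ℝ) : ℂ) • (b p.2).val)
    (by fun_prop) (fun p => h p.1 p.2)
  refine ⟨⟨u, fun y => ?_, fun y => ?_⟩⟩
  · ext1; simp [hu]
  · ext1; simp [hu]

end inv
end WM

namespace WM
open Matrix ContinuousMap unitInterval Filter Topology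

/-! ### the coherent-state matrices -/
section V
open scoped Matrix.Norms.L2Operator

abbrev NN (k : ℕ) : ℕ := 2 * (k + 1)
abbrev ZK (k : ℕ) : Type := ZMod (NN k)
def LL (k : ℕ) : ℕ := Nat.sqrt (k + 1)

noncomputable def chi (k : ℕ) : AddChar (ZK k) Circle := ZMod.toCircle

lemma LL_pos (k : ℕ) : 1 ≤ LL k := Nat.sqrt_pos.2 (by omega)
lemma LL_sq (k : ℕ) : LL k * LL k ≤ k + 1 := Nat.sqrt_le _
lemma LL_lt (k : ℕ) : LL k < NN k := by
  have := Nat.sqrt_le_self (k + 1)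
  unfold LL NN; omega

lemma tendsto_LL : Tendsto LL atTop atTop := by
  refine tendsto_atTop_atTop.2 fun b => ⟨b * b, fun a ha => ?_⟩
  unfold LL
  rw [Nat.le_sqrt]; omega

noncomputable def gw (k : ℕ) (m : ZK k) : ℝ := if m.val < LL k then 1 / √(LL k) else 0

lemma gw_sq (k : ℕ) (m : ZK k) : gw k m ^ 2 = if m.val < LL k then 1 / (LL k : ℝ) else 0 := by
  unfold gw; split_ifs <;> simp

lemma card_val_lt (k : ℕ) : (Finset.univ.filter fun m : ZK k => m.val < LL k).card = LL k := by
  have : (Finset.univ.filter fun m : ZK k => m.val < LL k)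
      = (Finset.range (LL k)).image (fun i : ℕ => (i : ZK k)) := by
    ext m
    simp only [Finset.mem_filter, Finset.mem_univ, true_and, Finset.mem_image, Finset.mem_range]
    constructor
    · intro h; exact ⟨m.val, h, ZMod.natCast_zmod_val m⟩
    · rintro ⟨i, hi, rfl⟩
      rwa [ZMod.val_natCast_of_lt (hi.trans (LL_lt k))]
  rw [this, Finset.card_image_of_injOn, Finset.card_range]
  intro i hi j hj hij
  simp only [Finset.coe_range, Set.mem_Iio] at hi hj
  have := congrArg ZMod.val hij
  simpa [ZMod.val_natCast_of_lt (hi.trans (LL_lt k)), ZMod.val_natCast_of_lt (hj.trans (LL_lt k))]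
    using this

lemma sum_gw_sq (k : ℕ) : ∑ m : ZK k, gw k m ^ 2 = 1 := by
  simp only [gw_sq]
  rw [← Finset.sum_filter, Finset.sum_const, card_val_lt]
  have : (LL k : ℝ) ≠ 0 := by have := LL_pos k; positivity
  simp [this]

/-- general phase-space matrix -/
noncomputable def Wm (k : ℕ) (c : ZK k → ZK k → ℂ) : Matrix (ZK k × ZK k) (ZK k) ℂ :=
  fun p j => (1 / √(NN k) : ℝ) * c p.1 j * chi k (-(p.2 * j))

lemma sum_chi (k : ℕ) (b : ZK k) :
    ∑ x : ZK k, ((chi k (x * b) : Circle) : ℂ) = if b = 0 then (NN k : ℂ) else 0 := by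
  have := AddChar.sum_mulShift b (ZMod.isPrimitive_stdAddChar (NN k))
  rw [ZMod.card] at this
  rw [show (if b = 0 then (NN k : ℂ) else 0) = ((if b = 0 then NN k else 0 : ℕ) : ℂ) by
    split_ifs <;> simp, ← this]
  rfl

lemma Wm_mul (k : ℕ) (c : ZK k → ZK k → ℂ) :
    (Wm k c)ᴴ * Wm k c = diagonal fun j => ((∑ i, ‖c i j‖ ^ 2 : ℝ) : ℂ) := by
  ext j j'
  simp only [Matrix.mul_apply, conjTranspose_apply, Wm, Fintype.sum_prod_type, diagonal_apply]
  have key : ∀ i m : ZK k, star (((1 / √(NN k) : ℝ) : ℂ) * c i j * (chi k (-(m * j)) : Circle)) *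
      (((1 / √(NN k) : ℝ) : ℂ) * c i j' * (chi k (-(m * j')) : Circle)) =
      (1 / (NN k : ℂ)) * (star (c i j) * c i j') * (chi k (m * (j - j')) : Circle) := by
    intro i m
    have h1 : chi k (m * (j - j')) = (chi k (-(m * j)))⁻¹ * chi k (-(m * j')) := by
      rw [← AddChar.map_neg_eq_inv, ← AddChar.map_add_eq_mul]; congr 1; ring
    rw [h1]
    have h2 : (((1 / √(NN k) : ℝ) : ℂ)) * ((1 / √(NN k) : ℝ) : ℂ) = 1 / (NN k : ℂ) := by
      rw [← Complex.ofReal_mul, div_mul_div_comm, one_mul, Real.mul_self_sqrt (by positivity)]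
      push_cast; rfl
    rw [← h2]
    simp only [star_mul', Circle.coe_mul, Circle.coe_inv_eq_conj, RCLike.star_def, Complex.conj_ofReal]
    ring
  simp only [key, ← Finset.mul_sum, sum_chi]
  split_ifs with h h' h'
  · subst h'
    rw [← Finset.sum_mul, ← Finset.mul_sum]
    have : (NN k : ℂ) ≠ 0 := by exact_mod_cast NeZero.ne (NN k)
    field_simp
    push_cast
    refine Finset.sum_congr rfl fun i _ => ?_
    rw [RCLike.star_def, ← Complex.normSq_eq_conj_mul_self, Complex.normSq_eq_norm_sq]
    push_cast; rfl
  · exact absurd (sub_eq_zero.1 h) h'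
  · exact absurd (sub_eq_zero.2 h') h
  · simp

lemma Wm_norm_le (k : ℕ) (c : ZK k → ZK k → ℂ) (C : ℝ) (hC : 0 ≤ C)
    (h : ∀ j, ∑ i, ‖c i j‖ ^ 2 ≤ C ^ 2) : ‖Wm k c‖ ≤ C := by
  refine abs_le_of_sq_le_sq' ?_ hC |>.2
  rw [pow_two, ← l2_opNorm_conjTranspose_mul_self, Wm_mul, l2_opNorm_diagonal]
  refine (pi_norm_le_iff_of_nonneg (sq_nonneg C)).2 fun j => ?_
  rw [Complex.norm_real, Real.norm_of_nonneg (Finset.sum_nonneg fun _ _ => sq_nonneg _)]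
  exact h j

noncomputable def Vm (k : ℕ) : Matrix (ZK k × ZK k) (ZK k) ℂ :=
  Wm k fun i j => (gw k (j - i) : ℝ)

lemma sum_gw_shift (k : ℕ) (j : ZK k) : ∑ i, gw k (j - i) ^ 2 = 1 := by
  rw [← sum_gw_sq k]
  exact Fintype.sum_equiv (Equiv.subLeft j) _ _ fun i => rfl

lemma Vm_iso (k : ℕ) : (Vm k)ᴴ * Vm k = 1 := by
  rw [Vm, Wm_mul]
  simp [sum_gw_shift]

lemma Vm_norm (k : ℕ) : ‖Vm k‖ ≤ 1 := by
  refine Wm_norm_le _ _ 1 zero_le_one fun j => ?_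
  simp [sum_gw_shift]

lemma VmH_norm (k : ℕ) : ‖(Vm k)ᴴ‖ ≤ 1 := by
  rw [l2_opNorm_conjTranspose]; exact Vm_norm k

/-- shift matrix -/
noncomputable def Um (k : ℕ) : Matrix (ZK k) (ZK k) ℂ := fun i j => if i + 1 = j then 1 else 0

lemma Um_mul (k : ℕ) : (Um k)ᴴ * Um k = 1 := by
  ext i j
  simp only [Matrix.mul_apply, conjTranspose_apply, Um, Matrix.one_apply]
  rw [Finset.sum_eq_single (i - 1)]
  · simp
  · intro b _ hb
    rw [if_neg (fun h => hb (by rw [← h]; ring))]; simp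
  · simp

lemma Um_mul' (k : ℕ) : Um k * (Um k)ᴴ = 1 := mul_eq_one_comm.1 (Um_mul k)

lemma norm_one_le' (n : Type) [Fintype n] [DecidableEq n] : ‖(1 : Matrix n n ℂ)‖ ≤ 1 := by
  rw [← diagonal_one, l2_opNorm_diagonal]
  exact (pi_norm_le_iff_of_nonneg zero_le_one).2 fun j => by simp

lemma Um_norm (k : ℕ) : ‖Um k‖ ≤ 1 := by
  refine abs_le_of_sq_le_sq' ?_ zero_le_one |>.2
  rw [pow_two, ← l2_opNorm_conjTranspose_mul_self, Um_mul]
  simp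

lemma UmH_norm (k : ℕ) : ‖(Um k)ᴴ‖ ≤ 1 := by
  rw [l2_opNorm_conjTranspose]; exact Um_norm k

/-- diagonal matrix of `χ` -/
noncomputable def Mz (k : ℕ) : Matrix (ZK k × ZK k) (ZK k × ZK k) ℂ :=
  diagonal fun p => ((chi k p.2 : Circle) : ℂ)

lemma Mz_norm (k : ℕ) : ‖Mz k‖ ≤ 1 := by
  rw [Mz, l2_opNorm_diagonal]
  exact (pi_norm_le_iff_of_nonneg zero_le_one).2 fun j => (Circle.norm_coe _).le

lemma Mz_V (k : ℕ) : Mz k * Vm k - Vm k * Um k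
    = Mz k * Wm k (fun i j => ((gw k (j - i) - gw k (j - 1 - i) : ℝ) : ℂ)) := by
  have hVU : Vm k * Um k = Mz k * Wm k (fun i j => ((gw k (j - 1 - i) : ℝ) : ℂ)) := by
    ext ⟨i, m⟩ j
    rw [Mz, diagonal_mul, Matrix.mul_apply, Finset.sum_eq_single (j - 1)]
    · simp only [Vm, Wm, Um]
      have : chi k (-(m * (j - 1))) = chi k m * chi k (-(m * j)) := by
        rw [← AddChar.map_add_eq_mul]; congr 1; ring
      rw [this]
      simp
      ring
    · intro b _ hb
      simp only [Um]
      rw [if_neg (fun h => hb (by rw [← h]; ring))]; simp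
    · simp
  rw [hVU, ← Matrix.mul_sub]
  congr 1
  ext p j
  simp only [Matrix.sub_apply, Vm, Wm]
  push_cast
  ring

lemma gw_diff (k : ℕ) : ∑ m : ZK k, (gw k m - gw k (m - 1)) ^ 2 ≤ 2 / LL k := by
  have h0 : ∀ m : ZK k, (gw k m - gw k (m - 1)) ^ 2 ≤
      (if m = 0 then 1 / (LL k : ℝ) else 0) + (if m = (LL k : ZK k) then 1 / (LL k : ℝ) else 0) := by
    intro m
    by_cases h1 : m.val < LL k <;> by_cases h2 : (m - 1).val < LL k
    · simp only [gw, h1, h2, if_true, sub_self]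
      have : (0 : ℝ) ≤ 1 / LL k := by positivity
      split_ifs <;> linarith [sq_nonneg (0 : ℝ)]
    · have hm : m = 0 := by
        by_contra hm
        apply h2
        have : (m - 1).val = m.val - 1 := by
          have hv : 1 ≤ m.val := Nat.one_le_iff_ne_zero.2 (by simpa using hm)
          have : m - 1 = ((m.val - 1 : ℕ) : ZK k) := by
            rw [Nat.cast_sub hv, ZMod.natCast_zmod_val]; simp
          rw [this, ZMod.val_natCast_of_lt]
          have := ZMod.val_lt m; omega
        omega
      rw [if_pos hm]
      have h3 : (gw k m - gw k (m - 1)) ^ 2 = 1 / LL k := by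
        have : gw k (m - 1) = 0 := by simp only [gw, h2, if_false]
        rw [this, sub_zero, gw_sq, if_pos h1]
      rw [h3]
      have : (0 : ℝ) ≤ 1 / LL k := by positivity
      split_ifs <;> linarith
    · have hm : m = (LL k : ZK k) := by
        have hlt : (m - 1).val + 1 < NN k := by have := LL_lt k; omega
        have h4 : m.val = (m - 1).val + 1 := by
          have : m = (((m - 1).val + 1 : ℕ) : ZK k) := by
            rw [Nat.cast_add, ZMod.natCast_zmod_val]; simp
          conv_lhs => rw [this]
          rw [ZMod.val_natCast_of_lt hlt]
        have : m.val = LL k := by omega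
        rw [← this, ZMod.natCast_zmod_val]
      rw [if_pos hm]
      have h3 : (gw k m - gw k (m - 1)) ^ 2 = 1 / LL k := by
        have : gw k m = 0 := by simp only [gw, h1, if_false]
        rw [this, zero_sub, neg_sq, gw_sq, if_pos h2]
      rw [h3]
      have : (0 : ℝ) ≤ 1 / LL k := by positivity
      split_ifs <;> linarith
    · simp only [gw, h1, h2, if_false, sub_self]
      have : (0 : ℝ) ≤ 1 / LL k := by positivity
      split_ifs <;> linarith [sq_nonneg (0 : ℝ)]
  refine (Finset.sum_le_sum fun m _ => h0 m).trans (le_of_eq ?_)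
  rw [Finset.sum_add_distrib]
  simp
  ring

lemma Mz_V_norm (k : ℕ) : ‖Mz k * Vm k - Vm k * Um k‖ ≤ √(2 / LL k) := by
  rw [Mz_V]
  refine (l2_opNorm_mul _ _).trans ?_
  have : ‖Wm k (fun i j => ((gw k (j - i) - gw k (j - 1 - i) : ℝ) : ℂ))‖ ≤ √(2 / LL k) := by
    refine Wm_norm_le _ _ _ (Real.sqrt_nonneg _) fun j => ?_
    rw [Real.sq_sqrt (by positivity)]
    refine le_trans (le_of_eq ?_) (gw_diff k)
    refine Fintype.sum_equiv (Equiv.subLeft j) _ _ fun i => ?_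
    simp only [Complex.norm_real, Real.norm_eq_abs, sq_abs, Equiv.subLeft_apply]
    rw [sub_right_comm]
  calc _ ≤ 1 * √(2 / LL k) := mul_le_mul (Mz_norm k) this (norm_nonneg _) zero_le_one
    _ = _ := one_mul _

lemma Mz_mul (k : ℕ) : (Mz k)ᴴ * Mz k = 1 := by
  rw [Mz, diagonal_conjTranspose, diagonal_mul_diagonal, ← diagonal_one]
  congr 1
  ext p
  simp [← Complex.normSq_eq_conj_mul_self]

lemma MzH_V_norm (k : ℕ) : ‖(Mz k)ᴴ * Vm k - Vm k * (Um k)ᴴ‖ ≤ √(2 / LL k) := by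
  have : (Mz k)ᴴ * Vm k - Vm k * (Um k)ᴴ =
      -((Mz k)ᴴ * (Mz k * Vm k - Vm k * Um k) * (Um k)ᴴ) := by
    rw [Matrix.mul_sub, Matrix.sub_mul, ← Matrix.mul_assoc, Mz_mul, Matrix.one_mul, Matrix.mul_assoc,
      Matrix.mul_assoc, Um_mul', Matrix.mul_one, neg_sub]
  rw [this, norm_neg]
  refine (l2_opNorm_mul _ _).trans ?_
  have h1 := (l2_opNorm_mul (Mz k)ᴴ (Mz k * Vm k - Vm k * Um k))
  have h2 : ‖(Mz k)ᴴ‖ ≤ 1 := by rw [l2_opNorm_conjTranspose]; exact Mz_norm k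
  have h3 := Mz_V_norm k
  have h4 := UmH_norm k
  have h5 := norm_nonneg (Mz k * Vm k - Vm k * Um k)
  have h6 := norm_nonneg (Um k)ᴴ
  have h7 : ‖(Mz k)ᴴ * (Mz k * Vm k - Vm k * Um k)‖ ≤ √(2 / LL k) := by nlinarith
  have h8 := norm_nonneg ((Mz k)ᴴ * (Mz k * Vm k - Vm k * Um k))
  nlinarith

lemma tendsto_sqrt_LL : Tendsto (fun k => √(2 / (LL k : ℝ))) atTop (𝓝 0) := by
  have h1 : Tendsto (fun k => (2 / (LL k : ℝ))) atTop (𝓝 0) :=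
    Tendsto.const_div_atTop (tendsto_natCast_atTop_atTop.comp tendsto_LL) 2
  simpa using h1.sqrt

end V
end WM

namespace WM
open Matrix ContinuousMap unitInterval Filter Topology

/-! ### quantization -/
section T
set_option linter.unusedSectionVars false
open scoped Matrix.Norms.L2Operator
variable {Y : Type} [TopologicalSpace Y]

abbrev XX (Y : Type) [TopologicalSpace Y] := UnitAddCircle × Circle × Y

noncomputable def Mh (k : ℕ) (h : C(XX Y, ℂ)) (y : Y) : Matrix (ZK k × ZK k) (ZK k × ZK k) ℂ :=
  diagonal fun p => h (ZMod.toAddCircle p.1, chi k p.2, y)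

lemma continuous_Mh (k : ℕ) (h : C(XX Y, ℂ)) : Continuous (Mh k h) := by
  refine continuous_matrix fun i j => ?_
  simp only [Mh, diagonal_apply]
  split_ifs <;> fun_prop

noncomputable def Tk (k : ℕ) (h : C(XX Y, ℂ)) : C(Y, Matrix (ZK k) (ZK k) ℂ) :=
  ⟨fun y => (Vm k)ᴴ * Mh k h y * Vm k, by
    have := continuous_Mh k h
    fun_prop⟩

lemma Tk_apply (k : ℕ) (h : C(XX Y, ℂ)) (y : Y) : Tk k h y = (Vm k)ᴴ * Mh k h y * Vm k := rfl

lemma Mh_add (k : ℕ) (h h' : C(XX Y, ℂ)) (y : Y) : Mh k (h + h') y = Mh k h y + Mh k h' y := by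
  simp [Mh, diagonal_add]
lemma Mh_mul (k : ℕ) (h h' : C(XX Y, ℂ)) (y : Y) : Mh k (h * h') y = Mh k h y * Mh k h' y := by
  simp [Mh, diagonal_mul_diagonal]
lemma Mh_one (k : ℕ) (y : Y) : Mh k (1 : C(XX Y, ℂ)) y = 1 := by
  simp [Mh]
lemma Mh_sub (k : ℕ) (h h' : C(XX Y, ℂ)) (y : Y) : Mh k (h - h') y = Mh k h y - Mh k h' y := by
  simp [Mh, diagonal_sub]
lemma Tk_add (k : ℕ) (h h' : C(XX Y, ℂ)) : Tk k (h + h') = Tk k h + Tk k h' := by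
  ext1 y
  simp [Tk_apply, Mh_add, Matrix.mul_add, Matrix.add_mul]
lemma Tk_one (k : ℕ) : Tk k (1 : C(XX Y, ℂ)) = 1 := by
  ext1 y
  simp [Tk_apply, Mh_one, Vm_iso]

variable [CompactSpace Y]

lemma Mh_norm (k : ℕ) (h : C(XX Y, ℂ)) (y : Y) : ‖Mh k h y‖ ≤ ‖h‖ := by
  rw [Mh, l2_opNorm_diagonal]
  exact (pi_norm_le_iff_of_nonneg (norm_nonneg _)).2 fun j => h.norm_coe_le_norm _

/-- defect projection -/
noncomputable def Dp (k : ℕ) : Matrix (ZK k × ZK k) (ZK k × ZK k) ℂ := 1 - Vm k * (Vm k)ᴴ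

lemma Dp_V (k : ℕ) : Dp k * Vm k = 0 := by
  rw [Dp, Matrix.sub_mul, Matrix.mul_assoc, Vm_iso]; simp

lemma Dp_norm (k : ℕ) : ‖Dp k‖ ≤ 2 := by
  refine (norm_sub_le _ _).trans ?_
  have h1 := norm_one_le' (ZK k × ZK k)
  have h2 := l2_opNorm_mul (Vm k) (Vm k)ᴴ
  have h3 := Vm_norm k
  have h4 := VmH_norm k
  have h5 := norm_nonneg (Vm k)
  have h6 := norm_nonneg (Vm k)ᴴ
  nlinarith

def Kp (h : C(XX Y, ℂ)) : Prop :=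
  ∀ ε > 0, ∀ᶠ k in atTop, ∀ y, ‖Dp k * Mh k h y * Vm k‖ ≤ ε

def Ap (h : C(XX Y, ℂ)) (D : ∀ k, Y → Matrix (ZK k) (ZK k) ℂ) : Prop :=
  ∀ ε > 0, ∀ᶠ k in atTop, ∀ y, ‖Mh k h y * Vm k - Vm k * D k y‖ ≤ ε

lemma Ap.kp {h : C(XX Y, ℂ)} {D : ∀ k, Y → Matrix (ZK k) (ZK k) ℂ} (H : Ap h D) : Kp h := by
  intro ε hε
  filter_upwards [H (ε / 2) (by positivity)] with k hk y
  have : Dp k * Mh k h y * Vm k = Dp k * (Mh k h y * Vm k - Vm k * D k y) := by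
    rw [Matrix.mul_sub, ← Matrix.mul_assoc, ← Matrix.mul_assoc, Dp_V]; simp
  rw [this]
  refine (l2_opNorm_mul _ _).trans ?_
  have := Dp_norm k
  have := hk y
  have := norm_nonneg (Dp k)
  have := norm_nonneg (Mh k h y * Vm k - Vm k * D k y)
  nlinarith

lemma Ap.tk {h : C(XX Y, ℂ)} {D : ∀ k, Y → Matrix (ZK k) (ZK k) ℂ} (H : Ap h D) :
    ∀ ε > 0, ∀ᶠ k in atTop, ∀ y, ‖Tk k h y - D k y‖ ≤ ε := by
  intro ε hε
  filter_upwards [H ε hε] with k hk y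
  have : Tk k h y - D k y = (Vm k)ᴴ * (Mh k h y * Vm k - Vm k * D k y) := by
    rw [Tk_apply, Matrix.mul_sub, ← Matrix.mul_assoc, ← Matrix.mul_assoc, Vm_iso]; simp
  rw [this]
  refine (l2_opNorm_mul _ _).trans ?_
  have := VmH_norm k
  have := hk y
  have := norm_nonneg (Vm k)ᴴ
  have := norm_nonneg (Mh k h y * Vm k - Vm k * D k y)
  nlinarith

lemma Kp.add {h h' : C(XX Y, ℂ)} (H : Kp h) (H' : Kp h') : Kp (h + h') := by
  intro ε hε
  filter_upwards [H (ε / 2) (by positivity), H' (ε / 2) (by positivity)] with k h1 h2 y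
  rw [Mh_add, Matrix.mul_add, Matrix.add_mul]
  refine (norm_add_le _ _).trans ?_
  linarith [h1 y, h2 y]

lemma DpMV_le (k : ℕ) (h : C(XX Y, ℂ)) (y : Y) : ‖Dp k * Mh k h y * Vm k‖ ≤ 2 * ‖h‖ := by
  refine (l2_opNorm_mul _ _).trans ?_
  have h1 := l2_opNorm_mul (Dp k) (Mh k h y)
  have h2 := Dp_norm k
  have h3 := Mh_norm k h y
  have h4 := Vm_norm k
  have h5 : ‖Dp k * Mh k h y‖ ≤ 2 * ‖h‖ :=
    h1.trans (mul_le_mul h2 h3 (norm_nonneg _) zero_le_two)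
  calc _ ≤ (2 * ‖h‖) * 1 := mul_le_mul h5 h4 (norm_nonneg _) (by positivity)
    _ = _ := mul_one _

lemma split_aux {m n : Type} [Fintype m] [Fintype n] [DecidableEq m]
    (D M M' : Matrix m m ℂ) (V : Matrix m n ℂ) (W : Matrix n m ℂ) :
    D * (M * M') * V = (D * M * V) * (W * M' * V) + (D * M) * ((1 - V * W) * M' * V) := by
  simp only [Matrix.mul_assoc, Matrix.sub_mul, Matrix.mul_sub, Matrix.one_mul]
  rw [add_sub_cancel]

lemma split_aux' {m n : Type} [Fintype m] [Fintype n] [DecidableEq m]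
    (M M' : Matrix m m ℂ) (V : Matrix m n ℂ) (W : Matrix n m ℂ) :
    W * (M * M') * V - (W * M * V) * (W * M' * V) = (W * M) * ((1 - V * W) * M' * V) := by
  simp only [Matrix.mul_assoc, Matrix.sub_mul, Matrix.mul_sub, Matrix.one_mul]

lemma Kp.mul {h h' : C(XX Y, ℂ)} (H : Kp h) (H' : Kp h') : Kp (h * h') := by
  intro ε hε
  have hp : 0 < ε / (2 * (‖h'‖ + 1)) := by positivity
  have hp' : 0 < ε / (4 * (‖h‖ + 1)) := by positivity
  filter_upwards [H _ hp, H' _ hp'] with k h1 h2 y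
  have hsplit : Dp k * Mh k (h * h') y * Vm k =
      (Dp k * Mh k h y * Vm k) * Tk k h' y + (Dp k * Mh k h y) * (Dp k * Mh k h' y * Vm k) := by
    rw [Mh_mul, Tk_apply]
    exact split_aux (Dp k) (Mh k h y) (Mh k h' y) (Vm k) (Vm k)ᴴ
  rw [hsplit]
  refine (norm_add_le _ _).trans ?_
  have hT : ‖Tk k h' y‖ ≤ ‖h'‖ := by
    rw [Tk_apply]
    refine (l2_opNorm_mul _ _).trans ?_
    have a1 := l2_opNorm_mul (Vm k)ᴴ (Mh k h' y)
    have a2 := VmH_norm k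
    have a3 := Mh_norm k h' y
    have a4 := Vm_norm k
    have a5 : ‖(Vm k)ᴴ * Mh k h' y‖ ≤ 1 * ‖h'‖ :=
      a1.trans (mul_le_mul a2 a3 (norm_nonneg _) zero_le_one)
    calc _ ≤ (1 * ‖h'‖) * 1 := mul_le_mul a5 a4 (norm_nonneg _) (by positivity)
      _ = _ := by ring
  have hA : ‖(Dp k * Mh k h y * Vm k) * Tk k h' y‖ ≤ ε / (2 * (‖h'‖ + 1)) * ‖h'‖ :=
    (l2_opNorm_mul _ _).trans (mul_le_mul (h1 y) hT (norm_nonneg _) hp.le)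
  have hB : ‖(Dp k * Mh k h y) * (Dp k * Mh k h' y * Vm k)‖ ≤ (2 * ‖h‖) * (ε / (4 * (‖h‖ + 1))) := by
    refine (l2_opNorm_mul _ _).trans (mul_le_mul ?_ (h2 y) (norm_nonneg _) (by positivity))
    exact (l2_opNorm_mul _ _).trans
      (mul_le_mul (Dp_norm k) (Mh_norm k h y) (norm_nonneg _) zero_le_two)
  have hA' : ε / (2 * (‖h'‖ + 1)) * ‖h'‖ ≤ ε / 2 := by
    rw [div_mul_eq_mul_div, div_le_div_iff₀ (by positivity) (by positivity)]
    nlinarith [norm_nonneg h']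
  have hB' : (2 * ‖h‖) * (ε / (4 * (‖h‖ + 1))) ≤ ε / 2 := by
    rw [mul_div_assoc', div_le_div_iff₀ (by positivity) (by positivity)]
    nlinarith [norm_nonneg h]
  linarith

lemma Tk_norm (k : ℕ) (h : C(XX Y, ℂ)) : ‖Tk k h‖ ≤ ‖h‖ := by
  refine (ContinuousMap.norm_le _ (norm_nonneg _)).2 fun y => ?_
  rw [Tk_apply]
  refine (l2_opNorm_mul _ _).trans ?_
  have a1 := l2_opNorm_mul (Vm k)ᴴ (Mh k h y)
  have a2 := VmH_norm k
  have a3 := Mh_norm k h y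
  have a4 := Vm_norm k
  have a5 : ‖(Vm k)ᴴ * Mh k h y‖ ≤ 1 * ‖h‖ :=
    a1.trans (mul_le_mul a2 a3 (norm_nonneg _) zero_le_one)
  calc _ ≤ (1 * ‖h‖) * 1 := mul_le_mul a5 a4 (norm_nonneg _) (by positivity)
    _ = _ := by ring

lemma Kp.closed {h : C(XX Y, ℂ)} (H : ∀ ε > 0, ∃ h', Kp h' ∧ ‖h - h'‖ ≤ ε) : Kp h := by
  intro ε hε
  obtain ⟨h', H', hh⟩ := H (ε / 4) (by positivity)
  filter_upwards [H' (ε / 2) (by positivity)] with k hk y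
  have : Dp k * Mh k h y * Vm k = Dp k * Mh k h' y * Vm k + Dp k * Mh k (h - h') y * Vm k := by
    rw [Mh_sub]; simp only [Matrix.mul_sub, Matrix.sub_mul]; abel
  rw [this]
  refine (norm_add_le _ _).trans ?_
  linarith [hk y, DpMV_le k (h - h') y]

/-- functions of `(s, y)` -/
noncomputable def fsy (h : C(UnitAddCircle × Y, ℂ)) : C(XX Y, ℂ) :=
  ⟨fun p => h (p.1, p.2.2), by fun_prop⟩

noncomputable def dK (k : ℕ) (d : ZK k → ℂ) : Matrix (ZK k) (ZK k) ℂ := diagonal d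

lemma mul_dK (k : ℕ) (d : ZK k → ℂ) (M : Matrix (ZK k × ZK k) (ZK k) ℂ) (p j) :
    (M * dK k d) p j = M p j * d j := by
  rw [dK, mul_diagonal]

lemma ap_fsy (h : C(UnitAddCircle × Y, ℂ)) :
    Ap (fsy h) (fun k y => dK k fun j => h (ZMod.toAddCircle j, y)) := by
  intro ε hε
  have huc := CompactSpace.uniformContinuous_of_continuous h.curry.continuous
  obtain ⟨δ, hδ, hd⟩ := Metric.uniformContinuous_iff.1 huc ε hε
  have hL : ∀ᶠ k in atTop, (1 / (LL k : ℝ)) < δ :=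
    (Tendsto.const_div_atTop (tendsto_natCast_atTop_atTop.comp tendsto_LL) (1 : ℝ)).eventually
      (gt_mem_nhds hδ)
  filter_upwards [hL] with k hk y
  have hW : Mh k (fsy h) y * Vm k - Vm k * (dK k fun j => h (ZMod.toAddCircle j, y)) =
      Wm k (fun i j => (h (ZMod.toAddCircle i, y) - h (ZMod.toAddCircle j, y)) * (gw k (j - i) : ℝ)) := by
    ext p j
    rw [Matrix.sub_apply, Mh, diagonal_mul, mul_dK]
    simp only [Vm, Wm, fsy, ContinuousMap.coe_mk]
    ring
  rw [hW]
  refine Wm_norm_le _ _ _ hε.le fun j => ?_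
  have hb : ∀ i, ‖(h (ZMod.toAddCircle i, y) - h (ZMod.toAddCircle j, y)) * (gw k (j - i) : ℝ)‖ ^ 2
      ≤ ε ^ 2 * gw k (j - i) ^ 2 := by
    intro i
    rw [norm_mul, mul_pow, Complex.norm_real, Real.norm_eq_abs, sq_abs]
    by_cases hlt : (j - i).val < LL k
    · refine mul_le_mul_of_nonneg_right ?_ (sq_nonneg _)
      refine pow_le_pow_left₀ (norm_nonneg _) ?_ 2
      have hdist : dist (ZMod.toAddCircle i) (ZMod.toAddCircle j) < δ := by
        rw [dist_comm, dist_eq_norm, ← map_sub, ZMod.toAddCircle_apply]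
        refine lt_of_le_of_lt (QuotientAddGroup.norm_mk_le_norm) ?_
        refine lt_of_le_of_lt ?_ hk
        rw [Real.norm_of_nonneg (by positivity), div_le_div_iff₀ (by positivity)
          (by have := LL_pos k; positivity)]
        have h1 := LL_sq k
        have h2 : ((j - i).val : ℝ) ≤ LL k := by exact_mod_cast hlt.le
        have h3 : ((LL k * LL k : ℕ) : ℝ) ≤ (k + 1 : ℕ) := by exact_mod_cast h1
        push_cast at h3 ⊢
        nlinarith [Nat.cast_nonneg (α := ℝ) (LL k)]
      have := hd hdist
      have h4 := (ContinuousMap.dist_apply_le_dist (f := h.curry (ZMod.toAddCircle i))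
        (g := h.curry (ZMod.toAddCircle j)) y)
      rw [dist_eq_norm] at h4
      exact (h4.trans_lt this).le
    · simp [gw, hlt]
  refine (Finset.sum_le_sum fun i _ => hb i).trans (le_of_eq ?_)
  rw [← Finset.mul_sum, sum_gw_shift, mul_one]

noncomputable def fz (Y : Type) [TopologicalSpace Y] : C(XX Y, ℂ) :=
  ⟨fun p => (p.2.1 : ℂ), by fun_prop⟩

lemma ap_fz : Ap (fz Y) (fun k _ => Um k) := by
  intro ε hε
  filter_upwards [tendsto_sqrt_LL.eventually (gt_mem_nhds hε)] with k hk y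
  exact (Mz_V_norm k).trans hk.le

lemma ap_fz_star : Ap (star (fz Y)) (fun k _ => (Um k)ᴴ) := by
  intro ε hε
  filter_upwards [tendsto_sqrt_LL.eventually (gt_mem_nhds hε)] with k hk y
  refine le_trans (le_of_eq ?_) ((MzH_V_norm k).trans hk.le)
  congr 3
  rw [Mz, diagonal_conjTranspose]
  rfl

lemma kp_const (c : ℂ) : Kp (ContinuousMap.const (XX Y) c) :=
  (ap_fsy (ContinuousMap.const _ c)).kp

lemma ks_star {a : C(XX Y, ℂ)} (h : Kp a ∧ Kp (star a)) : Kp (star a) ∧ Kp (star (star a)) :=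
  ⟨h.2, (star_star a).symm ▸ h.1⟩

/-- the star subalgebra of good symbols -/
noncomputable def KS (Y : Type) [TopologicalSpace Y] [CompactSpace Y] :
    StarSubalgebra ℂ C(XX Y, ℂ) where
  carrier := {h | Kp h ∧ Kp (star h)}
  mul_mem' := by
    rintro a b ⟨h1, h2⟩ ⟨h3, h4⟩
    refine ⟨h1.mul h3, ?_⟩
    rw [star_mul]
    exact h4.mul h2
  add_mem' := by
    rintro a b ⟨h1, h2⟩ ⟨h3, h4⟩
    refine ⟨h1.add h3, ?_⟩
    rw [star_add]
    exact h2.add h4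
  algebraMap_mem' c := by
    have h1 : algebraMap ℂ C(XX Y, ℂ) c = ContinuousMap.const (XX Y) c := by
      ext x; simp
    have h2 : star (ContinuousMap.const (XX Y) c) = ContinuousMap.const (XX Y) (star c) := by
      ext x; simp
    rw [h1]
    refine ⟨kp_const c, ?_⟩
    rw [h2]
    exact kp_const _
  star_mem' := fun h => ks_star h

lemma kp_all [T2Space Y] (h : C(XX Y, ℂ)) : Kp h := by
  have hsep : (KS Y).SeparatesPoints := by
    rintro ⟨s, z, y⟩ ⟨s', z', y'⟩ hne
    by_cases hsy : (s, y) = (s', y')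
    · obtain ⟨rfl, rfl⟩ := Prod.mk.inj hsy
      have hz : z ≠ z' := fun h => hne (by rw [h])
      refine ⟨fz Y, ⟨fz Y, ⟨ap_fz.kp, ap_fz_star.kp⟩, rfl⟩, ?_⟩
      exact fun h => hz (Circle.ext h)
    · obtain ⟨f, hf0, hf1, -⟩ := exists_continuous_zero_one_of_isClosed
        (isClosed_singleton (x := (s, y))) (isClosed_singleton (x := (s', y')))
        (by simpa using fun h h' => hsy (by rw [h, h']))
      let F : C(UnitAddCircle × Y, ℂ) := ⟨fun p => (f p : ℂ), by fun_prop⟩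
      have hF : Kp (star (fsy F)) := by
        have : star (fsy F) = fsy (star F) := by ext x; simp [fsy]
        rw [this]; exact (ap_fsy (star F)).kp
      refine ⟨fsy F, ⟨fsy F, ⟨(ap_fsy F).kp, hF⟩, rfl⟩, ?_⟩
      have h0 : f (s, y) = 0 := hf0 rfl
      have h1 : f (s', y') = 1 := hf1 rfl
      simp [fsy, F, h0, h1]
  have htop := ContinuousMap.starSubalgebra_topologicalClosure_eq_top_of_separatesPoints (KS Y) hsep
  have hmem : h ∈ (KS Y).topologicalClosure := by rw [htop]; trivial
  refine Kp.closed fun ε hε => ?_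
  obtain ⟨h', hh', hd⟩ := Metric.mem_closure_iff.1 hmem ε hε
  exact ⟨h', hh'.1, by rw [← dist_eq_norm]; exact hd.le⟩

lemma Tk_mul_approx [T2Space Y] (h h' : C(XX Y, ℂ)) :
    Tendsto (fun k => ‖Tk k (h * h') - Tk k h * Tk k h'‖) atTop (𝓝 0) := by
  rw [Metric.tendsto_atTop']
  intro ε hε
  have hp : 0 < ε / (2 * (‖h‖ + 1)) := by positivity
  obtain ⟨n, hn⟩ := eventually_atTop.1 (kp_all h' _ hp)
  refine ⟨n, fun k hk => ?_⟩
  rw [dist_zero_right, norm_norm]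
  refine lt_of_le_of_lt (b := ε / 2) ((ContinuousMap.norm_le _ (by positivity)).2 fun y => ?_)
    (by linarith)
  have : (Tk k (h * h') - Tk k h * Tk k h') y =
      ((Vm k)ᴴ * Mh k h y) * (Dp k * Mh k h' y * Vm k) := by
    simp only [ContinuousMap.sub_apply, ContinuousMap.mul_apply, Tk_apply, Mh_mul]
    exact split_aux' (Mh k h y) (Mh k h' y) (Vm k) (Vm k)ᴴ
  rw [this]
  have h1 : ‖(Vm k)ᴴ * Mh k h y‖ ≤ 1 * ‖h‖ :=
    (l2_opNorm_mul _ _).trans (mul_le_mul (VmH_norm k) (Mh_norm k h y) (norm_nonneg _) zero_le_one)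
  refine ((l2_opNorm_mul _ _).trans (mul_le_mul h1 (hn k hk.le y) (norm_nonneg _) (by positivity))).trans ?_
  rw [one_mul, mul_div_assoc', div_le_div_iff₀ (by positivity) (by positivity)]
  nlinarith [norm_nonneg h]

end T
end WM

namespace WM
open Matrix ContinuousMap unitInterval Filter Topology

/-! ### the asymptotic ring -/
section asym
open scoped Matrix.Norms.L2Operator
set_option linter.unusedSectionVars false

abbrev BK (k : ℕ) := Matrix (ZK k) (ZK k) ℂ
abbrev Fam (Y : Type) [TopologicalSpace Y] := ∀ k, C(Y, BK k)

variable {Y : Type} [TopologicalSpace Y] [CompactSpace Y]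

lemma norm_one_C (k : ℕ) : ‖(1 : C(Y, BK k))‖ ≤ 1 :=
  (ContinuousMap.norm_le _ zero_le_one).2 fun _ => norm_one_le' (ZK k)

def BdSub (Y : Type) [TopologicalSpace Y] [CompactSpace Y] : Subring (Fam Y) where
  carrier := {f | ∃ C : ℝ, ∀ k, ‖f k‖ ≤ C}
  mul_mem' := by
    rintro a b ⟨C, hC⟩ ⟨D, hD⟩
    refine ⟨C * D, fun k => (norm_mul_le _ _).trans ?_⟩
    exact mul_le_mul (hC k) (hD k) (norm_nonneg _) ((norm_nonneg _).trans (hC k))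
  add_mem' := by
    rintro a b ⟨C, hC⟩ ⟨D, hD⟩
    exact ⟨C + D, fun k => (norm_add_le _ _).trans (add_le_add (hC k) (hD k))⟩
  one_mem' := ⟨1, fun k => norm_one_C k⟩
  zero_mem' := ⟨0, fun k => by simp⟩
  neg_mem' := by
    rintro a ⟨C, hC⟩
    exact ⟨C, fun k => by simpa using hC k⟩

def NullRel (a b : BdSub Y) : Prop := Tendsto (fun k => ‖a.1 k - b.1 k‖) atTop (𝓝 0)

lemma NullRel.add {a b c d : BdSub Y} (h : NullRel a b) (h' : NullRel c d) :
    NullRel (a + c) (b + d) := by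
  refine squeeze_zero (fun _ => norm_nonneg _) (fun k => ?_) (by simpa using Tendsto.add h h')
  calc _ = ‖(a.1 k - b.1 k) + (c.1 k - d.1 k)‖ := by
        congr 1
        show a.1 k + c.1 k - (b.1 k + d.1 k) = _
        abel
    _ ≤ _ := norm_add_le _ _

lemma gen_sub {R : Type*} [Ring R] (a b c d : R) :
    a * c - b * d = (a - b) * c + b * (c - d) := by noncomm_ring

lemma NullRel.mul {a b c d : BdSub Y} (h : NullRel a b) (h' : NullRel c d) :
    NullRel (a * c) (b * d) := by
  obtain ⟨C, hC⟩ := c.2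
  obtain ⟨B, hB⟩ := b.2
  have hlim : Tendsto (fun k => ‖a.1 k - b.1 k‖ * C + B * ‖c.1 k - d.1 k‖) atTop (𝓝 0) := by
    simpa using (Tendsto.mul_const C h).add (Tendsto.const_mul B h')
  refine squeeze_zero (fun _ => norm_nonneg _) (fun k => ?_) hlim
  calc _ = ‖(a.1 k - b.1 k) * c.1 k + b.1 k * (c.1 k - d.1 k)‖ := by
        congr 1
        show a.1 k * c.1 k - b.1 k * d.1 k = _
        exact gen_sub _ _ _ _
    _ ≤ _ := (norm_add_le _ _).trans (add_le_add ((norm_mul_le _ _).trans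
        (mul_le_mul_of_nonneg_left (hC k) (norm_nonneg _))) ((norm_mul_le _ _).trans
        (mul_le_mul_of_nonneg_right (hB k) (norm_nonneg _))))

def nullCon (Y : Type) [TopologicalSpace Y] [CompactSpace Y] : RingCon (BdSub Y) where
  r := NullRel
  iseqv :=
    { refl := fun a => by simp [NullRel]
      symm := fun {a b} h => by simpa only [NullRel, norm_sub_rev] using h
      trans := fun {a b c} h h' => by
        refine squeeze_zero (fun _ => norm_nonneg _) (fun k => ?_) (by simpa using Tendsto.add h h')
        exact norm_sub_le_norm_sub_add_norm_sub _ _ _ }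
  add' := NullRel.add
  mul' := NullRel.mul

def BI (Y : Type) [TopologicalSpace Y] [CompactSpace Y] : Type := (nullCon Y).Quotient

noncomputable instance (Y : Type) [TopologicalSpace Y] [CompactSpace Y] : Ring (BI Y) :=
  inferInstanceAs (Ring (nullCon Y).Quotient)

noncomputable def bmk (Y : Type) [TopologicalSpace Y] [CompactSpace Y] : BdSub Y →+* BI Y := (nullCon Y).mk'

lemma bmk_eq {a b : BdSub Y} : bmk Y a = bmk Y b ↔ NullRel a b := (RingCon.eq (nullCon Y))

lemma bmk_surj : Function.Surjective (bmk Y) := (nullCon Y).mk'_surjective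

variable {ι κ : Type} [Fintype ι] [DecidableEq ι] [Fintype κ] [DecidableEq κ]

/-- quotient on matrices -/
noncomputable def qM (ι Y : Type) [Fintype ι] [DecidableEq ι] [TopologicalSpace Y] [CompactSpace Y] :
    Matrix ι ι (BdSub Y) →+* Matrix ι ι (BI Y) := (bmk Y).mapMatrix

lemma qM_surj : Function.Surjective (qM ι Y) := by
  intro M
  choose f hf using fun i j => bmk_surj (M i j)
  exact ⟨f, by ext i j; exact hf i j⟩

noncomputable def atK (k : ℕ) : Matrix ι ι (BdSub Y) →+* Matrix ι ι C(Y, BK k) :=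
  ((Pi.evalRingHom (fun k => C(Y, BK k)) k).comp (BdSub Y).subtype).mapMatrix

noncomputable def evC (k : ℕ) (y : Y) : C(Y, BK k) →+* BK k where
  toFun f := f y
  map_one' := rfl
  map_mul' _ _ := rfl
  map_zero' := rfl
  map_add' _ _ := rfl

noncomputable def bigY (k : ℕ) (y : Y) : Matrix ι ι C(Y, BK k) →+* Matrix (ι × ZK k) (ι × ZK k) ℂ :=
  (Matrix.compRingEquiv ι (ZK k) ℂ).toRingHom.comp (evC k y).mapMatrix

lemma bigY_apply (k : ℕ) (y : Y) (M : Matrix ι ι C(Y, BK k)) (p q : ι × ZK k) :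
    bigY k y M p q = M p.1 q.1 y p.2 q.2 := rfl

noncomputable def evM (k : ℕ) (y : Y) : Matrix ι ι (BdSub Y) →+* Matrix (ι × ZK k) (ι × ZK k) ℂ :=
  (bigY k y).comp (atK k)

lemma evM_apply (k : ℕ) (y : Y) (M : Matrix ι ι (BdSub Y)) (p q : ι × ZK k) :
    evM k y M p q = (M p.1 q.1).1 k y p.2 q.2 := rfl

lemma continuous_evM (k : ℕ) (M : Matrix ι ι (BdSub Y)) : Continuous fun y => evM k y M := by
  refine continuous_matrix fun p q => ?_
  have h1 : Continuous fun y => (M p.1 q.1).1 k y := ((M p.1 q.1).1 k).continuous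
  exact h1.matrix_elem p.2 q.2

section linf
attribute [local instance] Matrix.linftyOpNormedRing

lemma linf_le {R : Type} [NormedRing R] (A : Matrix ι ι R) : ‖A‖ ≤ ∑ i, ∑ j, ‖A i j‖ := by
  rw [Matrix.linfty_opNorm_def]
  have : (Finset.univ.sup fun i => ∑ j, ‖A i j‖₊) ≤ ∑ i, ∑ j, ‖A i j‖₊ :=
    Finset.sup_le fun i _ => Finset.single_le_sum (f := fun i => ∑ j, ‖A i j‖₊)
      (fun _ _ => zero_le) (Finset.mem_univ i)
  refine le_trans (NNReal.coe_le_coe.2 this) (le_of_eq ?_)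
  push_cast
  rfl

lemma atK_tendsto (A B : Matrix ι ι (BdSub Y)) (h : qM ι Y A = qM ι Y B) :
    Tendsto (fun k => ‖atK k A - atK k B‖) atTop (𝓝 0) := by
  refine squeeze_zero (fun _ => norm_nonneg _) (fun k => linf_le _) ?_
  have : ∀ i j, Tendsto (fun k => ‖(atK k A - atK k B) i j‖) atTop (𝓝 0) := fun i j => by
    have h1 : bmk Y (A i j) = bmk Y (B i j) := congrFun (congrFun h i) j
    exact bmk_eq.1 h1
  simpa using tendsto_finsetSum (Finset.univ : Finset ι) fun i _ =>
    tendsto_finsetSum (Finset.univ : Finset ι) fun j _ => this i j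

lemma seg_gen {A : Type} [NormedRing A] [NormedSpace ℂ A] [CompleteSpace A] {x y : A}
    (hx : ‖x - 1‖ < 1) (hy : ‖y - 1‖ < 1) (t : I) :
    IsUnit ((1 - (t : ℝ) : ℂ) • x + ((t : ℝ) : ℂ) • y) := by
  have h : (1 - (t : ℝ)) • x + (t : ℝ) • y ∈ Metric.ball (1 : A) 1 :=
    convex_ball (1 : A) 1 (by simpa [dist_eq_norm] using hx) (by simpa [dist_eq_norm] using hy)
      (by linarith [t.2.2]) t.2.1 (by ring)
  have h2 : (1 - (t : ℝ) : ℂ) • x + ((t : ℝ) : ℂ) • y = (1 - (t : ℝ)) • x + (t : ℝ) • y := by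
    rw [← Complex.ofReal_one, ← Complex.ofReal_sub, Complex.coe_smul, Complex.coe_smul]
  rw [h2]
  have h3 : ‖1 - ((1 - (t : ℝ)) • x + (t : ℝ) • y)‖ < 1 := by
    rw [norm_sub_rev]; simpa [dist_eq_norm] using h
  simpa only [sub_sub_cancel] using isUnit_one_sub_of_norm_lt_one h3

lemma seg_mat {R : Type} [NormedRing R] [NormedSpace ℂ R] [CompleteSpace R]
    {x y : Matrix ι ι R}
    (hx : ‖x - 1‖ < 1) (hy : ‖y - 1‖ < 1) (t : I) :
    IsUnit ((1 - (t : ℝ) : ℂ) • x + ((t : ℝ) : ℂ) • y) := by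
  let _ : NormedSpace ℂ (Matrix ι ι R) := Matrix.linftyOpNormedSpace
  have hc : @CompleteSpace (Matrix ι ι R) (@PseudoMetricSpace.toUniformSpace _
      (NormedRing.toSeminormedRing.toPseudoMetricSpace)) :=
    @Pi.complete _ _ _ fun _ => @Pi.complete _ _ _ fun _ => ‹CompleteSpace R›
  exact @seg_gen _ _ _ hc _ _ hx hy t

lemma segment_unit (M M' N : Matrix ι ι (BdSub Y)) (h : qM ι Y (M * N) = 1)
    (h' : qM ι Y (M' * N) = 1) :
    ∀ᶠ k in atTop, ∀ (t : I) y,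
      IsUnit ((1 - (t : ℝ) : ℂ) • evM k y M + ((t : ℝ) : ℂ) • evM k y M') := by
  have e1 := (atK_tendsto (M * N) 1 (by rw [h, map_one])).eventually (gt_mem_nhds one_pos)
  have e2 := (atK_tendsto (M' * N) 1 (by rw [h', map_one])).eventually (gt_mem_nhds one_pos)
  filter_upwards [e1, e2] with k h1 h2 t y
  rw [map_one] at h1 h2
  have hu := (seg_mat h1 h2 t).map (bigY k y)
  have heq : bigY k y ((1 - (t : ℝ) : ℂ) • atK k (M * N) + ((t : ℝ) : ℂ) • atK k (M' * N))
      = ((1 - (t : ℝ) : ℂ) • evM k y M + ((t : ℝ) : ℂ) • evM k y M') * evM k y N := by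
    rw [map_add]
    show (1 - (t : ℝ) : ℂ) • evM k y (M * N) + ((t : ℝ) : ℂ) • evM k y (M' * N) = _
    rw [map_mul, map_mul, add_mul, smul_mul_assoc, smul_mul_assoc]
  rw [heq, Matrix.isUnit_iff_isUnit_det, Matrix.det_mul] at hu
  exact (Matrix.isUnit_iff_isUnit_det _).2 (isUnit_of_mul_isUnit_left hu)

end linf

/-- `g` represents `M` at stage `k`. -/
def Rp (k : ℕ) (M : Matrix ι ι (BdSub Y)) (g : C(Y, GU (ι × ZK k))) : Prop :=
  ∀ y, (g y).val = evM k y M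

lemma Rp.mul {k : ℕ} {M M' : Matrix ι ι (BdSub Y)} {g g' : C(Y, GU (ι × ZK k))}
    (h : Rp k M g) (h' : Rp k M' g') : Rp k (M * M') (g * g') := fun y => by
  rw [map_mul, ← h y, ← h' y]; rfl

lemma Rp.unique {k : ℕ} {M : Matrix ι ι (BdSub Y)} {g g' : C(Y, GU (ι × ZK k))}
    (h : Rp k M g) (h' : Rp k M g') : g = g' := by
  ext1 y; ext1; rw [h y, h' y]

lemma rp_homotopic (u : (Matrix ι ι (BI Y))ˣ) (M M' : Matrix ι ι (BdSub Y))
    (h : qM ι Y M = u) (h' : qM ι Y M' = u) :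
    ∀ᶠ k in atTop, ∃ g g', Rp k M g ∧ Rp k M' g' ∧ g.Homotopic g' := by
  obtain ⟨N, hN⟩ := qM_surj (u⁻¹).val
  have e := segment_unit M M' N (by rw [map_mul, h, hN]; simp) (by rw [map_mul, h', hN]; simp)
  filter_upwards [e] with k hk
  obtain ⟨g, hg⟩ := exists_unitMap (continuous_evM k M) (fun y => by simpa using hk 0 y)
  obtain ⟨g', hg'⟩ := exists_unitMap (continuous_evM k M') (fun y => by simpa using hk 1 y)
  refine ⟨g, g', hg, hg', homotopic_of_segment fun t y => ?_⟩
  rw [hg, hg']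
  exact hk t y

lemma rp_exists (u : (Matrix ι ι (BI Y))ˣ) (M : Matrix ι ι (BdSub Y))
    (h : qM ι Y M = u) : ∀ᶠ k in atTop, ∃ g, Rp k M g := by
  filter_upwards [rp_homotopic u M M h h] with k ⟨g, _, hg, _⟩
  exact ⟨g, hg⟩

def Tv (u : (Matrix ι ι (BI Y))ˣ) : Prop :=
  ∃ M : Matrix ι ι (BdSub Y), qM ι Y M = u ∧ ∀ᶠ k in atTop, ∃ g, Rp k M g ∧ Ev g

lemma Tv.all {u : (Matrix ι ι (BI Y))ˣ} (h : Tv u) (M : Matrix ι ι (BdSub Y))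
    (hM : qM ι Y M = u) : ∀ᶠ k in atTop, ∃ g, Rp k M g ∧ Ev g := by
  obtain ⟨M', hM', h'⟩ := h
  filter_upwards [h', rp_homotopic u M M' hM hM'] with k ⟨g', hg', he⟩ ⟨g, g'', h1, h2, h3⟩
  obtain rfl := hg'.unique h2
  exact ⟨g, h1, he.congr h3⟩

lemma Tv.one : Tv (1 : (Matrix ι ι (BI Y))ˣ) := by
  refine ⟨1, by simp, Eventually.of_forall fun k => ⟨1, fun y => by simp, Ev.one⟩⟩

lemma Tv.mul {u v : (Matrix ι ι (BI Y))ˣ} (hu : Tv u) (hv : Tv v) : Tv (u * v) := by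
  obtain ⟨M, hM, h⟩ := hu
  obtain ⟨M', hM', h'⟩ := hv
  refine ⟨M * M', by simp [hM, hM'], ?_⟩
  filter_upwards [h, h'] with k ⟨g, hg, he⟩ ⟨g', hg', he'⟩
  exact ⟨g * g', hg.mul hg', he.mul he'⟩

lemma Tv.sq (u : (Matrix ι ι (BI Y))ˣ) : Tv (u * u) := by
  obtain ⟨M, hM⟩ := qM_surj u.val
  refine ⟨M * M, by simp [hM], ?_⟩
  filter_upwards [rp_exists u M hM] with k ⟨g, hg⟩
  exact ⟨g * g, hg.mul hg, Ev.sq g⟩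

lemma Tv.inv {u : (Matrix ι ι (BI Y))ˣ} (hu : Tv u) : Tv u⁻¹ := by
  have := hu.mul (Tv.sq u⁻¹)
  convert this using 1
  group

lemma Tv.comm_left {u v : (Matrix ι ι (BI Y))ˣ} : Tv (u * v * u⁻¹ * v⁻¹) := by
  have := ((Tv.sq u).mul (Tv.sq (u⁻¹ * v))).mul (Tv.sq v⁻¹)
  convert this using 1
  group

lemma Tv.conj {u : (Matrix ι ι (BI Y))ˣ} (v : (Matrix ι ι (BI Y))ˣ) (hu : Tv u) :
    Tv (v * u * v⁻¹) := by
  have := (Tv.comm_left (u := v) (v := u)).mul hu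
  convert this using 1
  group

end asym
end WM

namespace WM
open Matrix ContinuousMap unitInterval Filter Topology

/-! ### the quantization homomorphism -/
section Q
open scoped Matrix.Norms.L2Operator
set_option linter.unusedSectionVars false
variable {Y : Type} [TopologicalSpace Y] [CompactSpace Y] [T2Space Y]
variable {ι κ : Type} [Fintype ι] [DecidableEq ι] [Fintype κ] [DecidableEq κ]

noncomputable def tB (h : C(XX Y, ℂ)) : BdSub Y := ⟨fun k => Tk k h, ‖h‖, fun k => Tk_norm k h⟩

lemma tB_val (h : C(XX Y, ℂ)) (k : ℕ) : (tB h).1 k = Tk k h := rfl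

lemma tB_add (h h' : C(XX Y, ℂ)) : tB (h + h') = tB h + tB h' :=
  Subtype.ext (funext fun k => Tk_add k h h')

lemma tB_one : tB (1 : C(XX Y, ℂ)) = 1 :=
  Subtype.ext (funext fun k => Tk_one k)

lemma tB_zero : tB (0 : C(XX Y, ℂ)) = 0 := by
  have := tB_add (0 : C(XX Y, ℂ)) 0
  rw [add_zero] at this
  exact left_eq_add.1 this

noncomputable def TT (Y : Type) [TopologicalSpace Y] [CompactSpace Y] [T2Space Y] :
    C(XX Y, ℂ) →+* BI Y where
  toFun h := bmk Y (tB h)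
  map_one' := by rw [tB_one, map_one]
  map_mul' h h' := by
    rw [← map_mul, bmk_eq]
    exact Tk_mul_approx h h'
  map_zero' := by rw [tB_zero, map_zero]
  map_add' h h' := by rw [tB_add, map_add]

lemma TT_of_tk (h : C(XX Y, ℂ)) (b : BdSub Y)
    (H : ∀ ε > 0, ∀ᶠ k in atTop, ∀ y, ‖Tk k h y - b.1 k y‖ ≤ ε) : TT Y h = bmk Y b := by
  refine bmk_eq.2 ?_
  refine Metric.tendsto_atTop.2 fun ε hε => ?_
  obtain ⟨K, hK⟩ := eventually_atTop.1 (H (ε / 2) (by positivity))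
  refine ⟨K, fun k hk => ?_⟩
  rw [dist_zero_right, norm_norm]
  refine lt_of_le_of_lt ((ContinuousMap.norm_le _ (by positivity)).2 fun y => hK k hk y) ?_
  linarith

section mE
variable {X : Type} [TopologicalSpace X]

/-- a continuous matrix-valued function as a matrix of functions. -/
noncomputable def mE (f : C(X, Matrix ι ι ℂ)) : Matrix ι ι C(X, ℂ) :=
  Matrix.of fun i j => ⟨fun x => f x i j, f.continuous.matrix_elem i j⟩

lemma mE_apply (f : C(X, Matrix ι ι ℂ)) (i j : ι) (x : X) : mE f i j x = f x i j := rfl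

lemma mE_mul (f g h : C(X, Matrix ι ι ℂ)) (H : ∀ x, f x * g x = h x) :
    mE f * mE g = mE h := by
  ext i j x
  have := congrFun (congrFun (H x) i) j
  rw [Matrix.mul_apply] at this
  rw [Matrix.mul_apply, mE_apply, ← this, ContinuousMap.coe_sum, Finset.sum_apply]
  rfl

lemma mE_one (f : C(X, Matrix ι ι ℂ)) (H : ∀ x, f x = 1) : mE f = 1 := by
  ext i j x
  rw [mE_apply, H, Matrix.one_apply, Matrix.one_apply]
  split_ifs <;> rfl

noncomputable def vC (f : C(X, GU ι)) : C(X, Matrix ι ι ℂ) := ⟨fun x => (f x).val, by fun_prop⟩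

/-- a continuous map into the general linear group as an invertible matrix of functions. -/
noncomputable def mU : C(X, GU ι) →* (Matrix ι ι C(X, ℂ))ˣ where
  toFun f :=
    { val := mE (vC f)
      inv := mE (vC f⁻¹)
      val_inv := by
        rw [mE_mul _ _ (vC 1), mE_one]
        · intro x; rfl
        · intro x; exact (f x).mul_inv
      inv_val := by
        rw [mE_mul _ _ (vC 1), mE_one]
        · intro x; rfl
        · intro x; exact (f x).inv_mul }
  map_one' := by
    ext1; exact mE_one _ fun x => rfl
  map_mul' f g := by
    ext1; exact (mE_mul _ _ _ fun x => rfl).symm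
end mE

lemma mU_apply {X : Type} [TopologicalSpace X] (f : C(X, GU ι)) (i j : ι) (x : X) :
    (mU f).val i j x = (f x).val i j := rfl

noncomputable def QQ : C(XX Y, GU ι) →* (Matrix ι ι (BI Y))ˣ :=
  (Units.map (TT Y).mapMatrix.toMonoidHom).comp mU

lemma QQ_val (f : C(XX Y, GU ι)) : (QQ f).val = (TT Y).mapMatrix (mU f).val := rfl

noncomputable def lf (f : C(XX Y, GU ι)) : Matrix ι ι (BdSub Y) := fun i j => tB ((mU f).val i j)

lemma qM_lf (f : C(XX Y, GU ι)) : qM ι Y (lf f) = QQ f := rfl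

def Triv (f : C(XX Y, GU ι)) : Prop := Tv (QQ f)

lemma Triv.one : Triv (1 : C(XX Y, GU ι)) := by rw [Triv, map_one]; exact Tv.one
lemma Triv.mul {f g : C(XX Y, GU ι)} (hf : Triv f) (hg : Triv g) : Triv (f * g) := by
  rw [Triv, map_mul]; exact Tv.mul hf hg
lemma Triv.inv {f : C(XX Y, GU ι)} (hf : Triv f) : Triv f⁻¹ := by
  rw [Triv, map_inv]; exact Tv.inv hf
lemma Triv.conj {f : C(XX Y, GU ι)} (g : C(XX Y, GU ι)) (hf : Triv f) : Triv (g * f * g⁻¹) := by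
  rw [Triv, map_mul, map_mul, map_inv]; exact Tv.conj _ hf

lemma Triv.congr {f f' : C(XX Y, GU ι)} (hf : Triv f) (h : f.Homotopic f') : Triv f' := by
  obtain ⟨H⟩ := h
  let F : C(XX (Y × I), GU ι) := ⟨fun p => H (p.2.2.2, (p.1, p.2.1, p.2.2.1)), by fun_prop⟩
  refine ⟨lf f', qM_lf f', ?_⟩
  filter_upwards [hf.all (lf f) (qM_lf f), rp_exists (QQ F) (lf F) (qM_lf F)] with
    k ⟨g, hg, he⟩ ⟨G, hG⟩
  have key : ∀ (y : Y) (t : I) (f₁ : C(XX Y, GU ι)), (∀ x, H (t, x) = f₁ x) →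
      (G (y, t)).val = evM k y (lf f₁) := by
    intro y t f₁ h1
    rw [hG]
    ext p q
    rw [evM_apply, evM_apply]
    show Tk k _ (y, t) p.2 q.2 = Tk k _ y p.2 q.2
    rw [Tk_apply, Tk_apply]
    have : ∀ (h : C(XX (Y × I), ℂ)) (h' : C(XX Y, ℂ)), (∀ s z, h (s, z, y, t) = h' (s, z, y)) →
        Mh k h (y, t) = Mh k h' y := fun h h' hh => by
      unfold Mh
      congr 1
      ext r
      exact hh _ _
    rw [this _ ((mU f₁).val p.1 q.1)]
    intro s z
    rw [mU_apply, mU_apply, ← h1]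
    rfl
  let g' : C(Y, GU (ι × ZK k)) := ⟨fun y => G (y, 1), by fun_prop⟩
  refine ⟨g', fun y => key y 1 f' fun x => H.apply_one x, he.congr ?_⟩
  refine Homotopic.symm ⟨⟨⟨fun p => G (p.2, p.1), by fun_prop⟩, fun y => ?_, fun y => rfl⟩⟩
  ext1
  rw [hg y]
  exact key y 0 f fun x => H.apply_zero x

/-! #### even functions -/

/-- constant family -/
noncomputable def kB (A : ∀ k, BK k) (hA : ∀ k, ‖A k‖ ≤ 1) : BdSub Y :=
  ⟨fun k => ContinuousMap.const Y (A k), 1, fun k =>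
    (ContinuousMap.norm_le _ zero_le_one).2 fun _ => hA k⟩

lemma kB_val (A : ∀ k, BK k) (hA : ∀ k, ‖A k‖ ≤ 1) (k : ℕ) (y : Y) : (kB A hA : BdSub Y).1 k y = A k := rfl

lemma Bd_ext {a b : BdSub Y} (h : ∀ k y, a.1 k y = b.1 k y) : a = b :=
  Subtype.ext (funext fun k => ContinuousMap.ext fun y => h k y)

noncomputable def uB (Y : Type) [TopologicalSpace Y] [CompactSpace Y] [T2Space Y] : (BdSub Y)ˣ where
  val := kB Um Um_norm
  inv := kB (fun k => (Um k)ᴴ) UmH_norm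
  val_inv := Bd_ext fun k y => Um_mul' k
  inv_val := Bd_ext fun k y => Um_mul k

lemma TT_fz : TT Y (fz Y) = bmk Y (uB Y).val := TT_of_tk _ _ ap_fz.tk

noncomputable def Pe (k : ℕ) : BK k := diagonal fun j => if j.val % 2 = 0 then 1 else 0

lemma Pe_norm (k : ℕ) : ‖Pe k‖ ≤ 1 := by
  rw [Pe, l2_opNorm_diagonal]
  exact (pi_norm_le_iff_of_nonneg zero_le_one).2 fun j => by split_ifs <;> simp

noncomputable def pB (Y : Type) [TopologicalSpace Y] [CompactSpace Y] : BdSub Y := kB Pe Pe_norm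

lemma pB_idem : pB Y * pB Y = pB Y := Bd_ext fun k y => by
  show Pe k * Pe k = Pe k
  rw [Pe, diagonal_mul_diagonal]
  congr 1; ext j; split_ifs <;> simp

lemma val_succ (k : ℕ) (j : ZK k) : (j + 1).val = if j.val + 1 = NN k then 0 else j.val + 1 := by
  have : Fact (1 < NN k) := ⟨by unfold NN; omega⟩
  have hlt : j.val < NN k := ZMod.val_lt j
  rw [ZMod.val_add, ZMod.val_one]
  split_ifs with h
  · rw [h, Nat.mod_self]
  · exact Nat.mod_eq_of_lt (by omega)

lemma Um_dK (k : ℕ) (d : ZK k → ℂ) : Um k * diagonal d = diagonal (fun j => d (j + 1)) * Um k := by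
  ext i j
  rw [mul_diagonal, diagonal_mul, Um]
  split_ifs with h
  · rw [h, mul_comm]
  · simp

lemma uB_pB : (uB Y).val * pB Y = (1 - pB Y) * (uB Y).val := Bd_ext fun k y => by
  show Um k * Pe k = (1 - Pe k) * Um k
  rw [Pe, Um_dK, ← diagonal_one, diagonal_sub]
  congr 2; ext j
  have hlt : j.val < NN k := ZMod.val_lt j
  rw [val_succ]
  have h2 : NN k % 2 = 0 := by unfold NN; omega
  split_ifs <;> first | omega | simp

lemma chi_halfN (k : ℕ) : chi k ((k + 1 : ℕ) : ZK k) = -1 := by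
  apply Circle.ext
  rw [chi, ZMod.toCircle_natCast]
  have : (2 * (Real.pi : ℂ) * Complex.I * ((k + 1 : ℕ) : ℂ) / ((NN k : ℕ) : ℂ)) = Real.pi * Complex.I := by
    have h : ((k : ℂ) + 1) ≠ 0 := by exact_mod_cast Nat.succ_ne_zero k
    push_cast [NN]
    field_simp
  rw [this, Complex.exp_pi_mul_I]
  simp

lemma chi_half (k : ℕ) (j : ZK k) :
    ((chi k (-(((k + 1 : ℕ) : ZK k) * j)) : Circle) : ℂ) = if j.val % 2 = 0 then 1 else -1 := by
  have h1 : -(((k + 1 : ℕ) : ZK k) * j) = j.val • (-((k + 1 : ℕ) : ZK k)) := by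
    rw [nsmul_eq_mul, ZMod.natCast_zmod_val]; ring
  rw [h1, AddChar.map_nsmul_eq_pow, AddChar.map_neg_eq_inv, chi_halfN]
  have h2 : (((-1 : Circle)⁻¹ : Circle) : ℂ) = -1 := by simp
  rw [Circle.coe_pow, h2]
  split_ifs with h
  · exact Even.neg_one_pow (Nat.even_iff.2 h)
  · exact Odd.neg_one_pow (Nat.odd_iff.2 (by omega))

def EvenZ (f : C(XX Y, GU ι)) : Prop := ∀ s z y, f (s, -z, y) = f (s, z, y)

lemma Tk_even (h : C(XX Y, ℂ)) (he : ∀ s z y, h (s, -z, y) = h (s, z, y)) (k : ℕ) (y : Y) (i j : ZK k)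
    (hij : ¬ (i.val % 2 = j.val % 2)) : Tk k h y i j = 0 := by
  set e : ZK k → ℂ := fun j => if j.val % 2 = 0 then 1 else -1 with he'
  have hV : ∀ a m j, Vm k (a, m + ((k + 1 : ℕ) : ZK k)) j = Vm k (a, m) j * e j := by
    intro a m j
    simp only [Vm, Wm]
    rw [add_mul, neg_add, AddChar.map_add_eq_mul, Circle.coe_mul, chi_half]
    ring
  have hse : ∀ j, star (e j) = e j := fun j => by simp only [he']; split_ifs <;> simp
  have hee : e i * e j = -1 := by
    simp only [he']; split_ifs <;> first | omega | simp
  have hT : Tk k h y i j = ∑ p, star (Vm k p i) * h (ZMod.toAddCircle p.1, chi k p.2, y) * Vm k p j := by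
    rw [Tk_apply, Matrix.mul_apply]
    refine Finset.sum_congr rfl fun p _ => ?_
    rw [Mh, mul_diagonal, conjTranspose_apply]
  have h2 : Tk k h y i j = - Tk k h y i j := by
    conv_lhs => rw [hT]
    rw [← (Equiv.prodCongr (Equiv.refl (ZK k)) (Equiv.addRight ((k + 1 : ℕ) : ZK k))).sum_comp, hT,
      ← Finset.sum_neg_distrib]
    refine Finset.sum_congr rfl fun p _ => ?_
    obtain ⟨a, m⟩ := p
    simp only [Equiv.prodCongr_apply, Prod.map_apply, Equiv.refl_apply, Equiv.coe_addRight]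
    rw [hV, hV, AddChar.map_add_eq_mul, chi_halfN, mul_neg, mul_one, he, star_mul', hse]
    linear_combination (star (Vm k (a, m) i) * h (ZMod.toAddCircle a, chi k m, y) * Vm k (a, m) j) * hee
  exact CharZero.eq_neg_self_iff.1 h2

lemma pB_comm (h : C(XX Y, ℂ)) (he : ∀ s z y, h (s, -z, y) = h (s, z, y)) :
    pB Y * tB h = tB h * pB Y := Bd_ext fun k y => by
  show Pe k * Tk k h y = Tk k h y * Pe k
  ext i j
  rw [Pe, diagonal_mul, mul_diagonal]
  by_cases hij : i.val % 2 = j.val % 2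
  · rw [hij, mul_comm]
  · rw [Tk_even h he k y i j hij]; simp

lemma even_gen {R : Type} [Ring R] (M u : Rˣ) (p : R) (hp : p * p = p) (hpM : p * M = M * p)
    (hu : u * p = (1 - p) * u) (huM : (u : R) * M = M * u) :
    ∃ A : Rˣ, M = A * (u * A * u⁻¹) := by
  have hpM' : p * (M⁻¹ : Rˣ) = (M⁻¹ : Rˣ) * p := by
    have := (show Commute p M from hpM).units_inv_right
    exact this
  have hq : (1 - p) * p = 0 := by rw [sub_mul, hp, one_mul, sub_self]
  have hq' : p * (1 - p) = 0 := by rw [mul_sub, hp, mul_one, sub_self]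
  have hqq : (1 - p) * (1 - p) = 1 - p := by rw [mul_sub, hq, mul_one, sub_zero]
  have hmm : ∀ x y : R, p * x = x * p → (p * x + (1 - p)) * (p * y + (1 - p)) = p * (x * y) + (1 - p) := by
    intro x y hx
    have e1 : p * x * (p * y) = p * (x * y) := by
      rw [hx, mul_assoc, ← mul_assoc p p, hp, ← mul_assoc, ← hx, mul_assoc]
    have e2 : p * x * (1 - p) = 0 := by rw [hx, mul_assoc, hq', mul_zero]
    have e3 : (1 - p) * (p * y) = 0 := by rw [← mul_assoc, hq, zero_mul]
    rw [add_mul, mul_add, mul_add, e1, e2, e3, hqq]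
    abel
  let A : Rˣ :=
    { val := p * M + (1 - p)
      inv := p * (M⁻¹ : Rˣ) + (1 - p)
      val_inv := by rw [hmm _ _ hpM]; simp
      inv_val := by rw [hmm _ _ hpM']; simp }
  refine ⟨A, ?_⟩
  rw [← mul_assoc, eq_mul_inv_iff_mul_eq]
  ext1
  show (M : R) * u = (p * M + (1 - p)) * (u * (p * M + (1 - p)))
  have hu2 : (u : R) * (1 - p) = p * u := by rw [mul_sub, hu, sub_mul]; simp
  have : (u : R) * (p * M + (1 - p)) = ((1 - p) * M + p) * u := by
    rw [mul_add, ← mul_assoc, hu, hu2, mul_assoc, huM, add_mul, mul_assoc]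
  rw [this, ← mul_assoc]
  congr 1
  have e1 : p * M * ((1 - p) * M) = 0 := by
    rw [hpM, mul_assoc, ← mul_assoc p, hq', zero_mul, mul_zero]
  have e2 : p * M * p = p * M := by rw [mul_assoc, ← hpM, ← mul_assoc, hp]
  have e3 : (1 - p) * ((1 - p) * M) = (1 - p) * M := by rw [← mul_assoc, hqq]
  rw [add_mul, mul_add, mul_add, e1, e2, e3, hq, sub_mul]
  simp

lemma Triv.even {f : C(XX Y, GU ι)} (hf : EvenZ f) : Triv f := by
  have hsc : ∀ (x : BI Y) (M : Matrix ι ι (BI Y)), (∀ i j, x * M i j = M i j * x) →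
      Matrix.scalar ι x * M = M * Matrix.scalar ι x := by
    intro x M h
    ext i j
    simp [h]
  let u : (Matrix ι ι (BI Y))ˣ := Units.map ((Matrix.scalar ι).comp (bmk Y)).toMonoidHom (uB Y)
  have hu : u.val = Matrix.scalar ι (bmk Y (uB Y).val) := rfl
  obtain ⟨A, hA⟩ := even_gen (QQ f) u (Matrix.scalar ι (bmk Y (pB Y)))
    (by rw [← map_mul, ← map_mul, pB_idem])
    (hsc _ _ fun i j => by
      show bmk Y _ * bmk Y _ = bmk Y _ * bmk Y _
      rw [← map_mul, pB_comm, map_mul]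
      intro s z y
      rw [mU_apply, mU_apply, hf])
    (by rw [hu, ← map_mul, ← map_mul, uB_pB, map_mul, map_mul, map_sub, map_sub, map_one, map_one])
    (hsc _ _ fun i j => by
      show bmk Y (uB Y).val * TT Y _ = TT Y _ * bmk Y (uB Y).val
      rw [← TT_fz, ← map_mul, mul_comm, map_mul])
  rw [Triv, hA]
  have := (Tv.sq A).mul (Tv.comm_left (u := A⁻¹) (v := u))
  convert this using 1
  group

/-! #### blocks -/
lemma Triv.blk_right {f : C(XX Y, GU ι)} (hf : Triv f) :
    Triv (cblk (1 : C(XX Y, GU κ)) f) := by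
  refine ⟨_, qM_lf _, ?_⟩
  filter_upwards [hf.all (lf f) (qM_lf f)] with k ⟨g, hg, he⟩
  refine ⟨crdx (Equiv.sumProdDistrib κ ι (ZK k)).symm (cblk 1 g), fun y => ?_, (he.stab').rdx _⟩
  ext ⟨p, a⟩ ⟨q, b⟩
  rw [evM_apply]
  simp only [crdx_apply, rdx_val, cblk_apply, blk_val, reindex_apply, submatrix_apply,
    Equiv.symm_symm]
  have hz : ∀ h : C(XX Y, ℂ), h = 0 → Tk k h = 0 := by
    rintro h rfl
    have := congrArg (fun b : BdSub Y => b.1 k) (tB_zero (Y := Y))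
    exact this
  rcases p with p | p <;> rcases q with q | q
  · simp only [Equiv.sumProdDistrib_apply_left, fromBlocks_apply₁₁]
    show (1 : Matrix (κ × ZK k) (κ × ZK k) ℂ) (p, a) (q, b) = Tk k _ y a b
    by_cases hpq : p = q
    · subst hpq
      have : (mU (cblk (1 : C(XX Y, GU κ)) f)).val (Sum.inl p) (Sum.inl p) = 1 := by
        ext x
        show (1 : Matrix κ κ ℂ) p p = 1
        simp
      rw [this, Tk_one]
      show _ = (1 : BK k) a b
      simp [Matrix.one_apply]
    · rw [hz]
      · simp [Matrix.one_apply, hpq]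
      · ext x
        show (1 : Matrix κ κ ℂ) p q = 0
        simp [hpq]
  · simp only [Equiv.sumProdDistrib_apply_left, Equiv.sumProdDistrib_apply_right, fromBlocks_apply₁₂]
    show _ = Tk k _ y a b
    rw [hz]
    · rfl
    · ext x; rfl
  · simp only [Equiv.sumProdDistrib_apply_left, Equiv.sumProdDistrib_apply_right, fromBlocks_apply₂₁]
    show _ = Tk k _ y a b
    rw [hz]
    · rfl
    · ext x; rfl
  · simp only [Equiv.sumProdDistrib_apply_right, fromBlocks_apply₂₂]
    rw [hg, evM_apply]
    rfl

end Q
end WM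

namespace WM
open Matrix ContinuousMap unitInterval Filter Topology

/-! ### the clutching computation -/
section Phi
open scoped Matrix.Norms.L2Operator
set_option linter.unusedSectionVars false
variable {Y : Type} [TopologicalSpace Y] [CompactSpace Y] [T2Space Y]
variable {ι κ : Type} [Fintype ι] [DecidableEq ι] [Fintype κ] [DecidableEq κ]

noncomputable def dC (k : ℕ) (r : ZK k → I) (h : C(I × Y, ℂ)) : C(Y, BK k) :=
  ⟨fun y => diagonal fun j => h (r j, y), by
    refine continuous_matrix fun i j => ?_
    simp only [diagonal_apply]
    split_ifs <;> fun_prop⟩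

lemma dC_apply (k : ℕ) (r : ZK k → I) (h : C(I × Y, ℂ)) (y : Y) :
    dC k r h y = diagonal fun j => h (r j, y) := rfl

/-- diagonal families -/
noncomputable def dB (r : ∀ k, ZK k → I) : C(I × Y, ℂ) →+* BdSub Y where
  toFun h := ⟨fun k => dC k (r k) h, ‖h‖, fun k =>
    (ContinuousMap.norm_le _ (norm_nonneg _)).2 fun y => by
      rw [dC_apply, l2_opNorm_diagonal]
      exact (pi_norm_le_iff_of_nonneg (norm_nonneg _)).2 fun j => h.norm_coe_le_norm _⟩
  map_one' := Bd_ext fun k y => diagonal_one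
  map_mul' h h' := Bd_ext fun k y => (diagonal_mul_diagonal _ _).symm
  map_zero' := Bd_ext fun k y => diagonal_zero
  map_add' h h' := Bd_ext fun k y => (diagonal_add _ _).symm

lemma dB_val (r : ∀ k, ZK k → I) (h : C(I × Y, ℂ)) (k : ℕ) (y : Y) :
    (dB r h).1 k y = diagonal fun j => h (r k j, y) := rfl

lemma dB_close (r r' : ∀ k, ZK k → I) (hr : ∀ ε > 0, ∀ᶠ k in atTop, ∀ j, dist (r k j) (r' k j) < ε)
    (h : C(I × Y, ℂ)) : bmk Y (dB r h) = bmk Y (dB r' h) := by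
  refine bmk_eq.2 (Metric.tendsto_atTop.2 fun ε hε => ?_)
  let hc : C(I, C(Y, ℂ)) := h.curry
  obtain ⟨δ, hδ, H⟩ := Metric.uniformContinuous_iff.1
    (CompactSpace.uniformContinuous_of_continuous hc.continuous) (ε / 2) (by positivity)
  obtain ⟨K, hK⟩ := eventually_atTop.1 (hr δ hδ)
  refine ⟨K, fun k hk => ?_⟩
  rw [dist_zero_right, norm_norm]
  refine lt_of_le_of_lt ((ContinuousMap.norm_le _ (by positivity : 0 ≤ ε / 2)).2 fun y => ?_)
    (by linarith)
  show ‖(dB r h).1 k y - (dB r' h).1 k y‖ ≤ _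
  rw [dB_val, dB_val, diagonal_sub, l2_opNorm_diagonal]
  refine (pi_norm_le_iff_of_nonneg (by positivity)).2 fun j => ?_
  have := (H (hK k hk j)).le
  rw [dist_eq_norm] at this
  exact ((hc (r k j) - hc (r' k j)).norm_coe_le_norm y).trans this

/-- the three site labellings -/
noncomputable def r0 (k : ℕ) (j : ZK k) : I :=
  ⟨(j.val : ℝ) / NN k, by positivity, by
    rw [div_le_one (by positivity)]
    exact_mod_cast (ZMod.val_lt j).le⟩
noncomputable def r1 (k : ℕ) (j : ZK k) : I :=
  ⟨((j.val + 1 : ℕ) : ℝ) / NN k, by positivity, by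
    rw [div_le_one (by positivity)]
    exact_mod_cast (ZMod.val_lt j)⟩
noncomputable def r2 (k : ℕ) (j : ZK k) : I := if j.val + 1 = NN k then 1 else 0

lemma r01 (ε : ℝ) (hε : ε > 0) : ∀ᶠ k in atTop, ∀ j, dist (r0 k j) (r1 k j) < ε := by
  have : Tendsto (fun k : ℕ => (1 : ℝ) / ((k : ℝ) + 1)) atTop (𝓝 0) := tendsto_one_div_add_atTop_nhds_zero_nat
  filter_upwards [this.eventually (gt_mem_nhds hε)] with k hk j
  refine lt_of_le_of_lt ?_ hk
  rw [Subtype.dist_eq, Real.dist_eq]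
  have : (r0 k j : ℝ) - r1 k j = - (1 / (2 * (k + 1))) := by
    simp only [r0, r1, NN]
    push_cast
    ring
  rw [this, abs_neg, abs_of_nonneg (by positivity)]
  apply one_div_le_one_div_of_le <;> linarith

lemma r0_coe (k : ℕ) (j : ZK k) : ((r0 k j : ℝ) : UnitAddCircle) = ZMod.toAddCircle j := by
  rw [ZMod.toAddCircle_apply]; rfl

lemma r_succ (k : ℕ) (j : ZK k) :
    (r0 k (j + 1) = 0 ∧ r1 k j = 1 ∧ r2 k j = 1) ∨ (r0 k (j + 1) = r1 k j ∧ r2 k j = 0) := by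
  have hs := val_succ k j
  by_cases h : j.val + 1 = NN k
  · left
    rw [if_pos h] at hs
    refine ⟨?_, ?_, ?_⟩
    · apply Subtype.ext; simp [r0, hs]
    · apply Subtype.ext
      simp only [r1, h]
      exact div_self (by positivity)
    · simp [r2, h]
  · right
    rw [if_neg h] at hs
    refine ⟨?_, ?_⟩
    · apply Subtype.ext; simp [r0, r1, hs]
    · simp [r2, h]

/-- constants -/
noncomputable def cB (Y : Type) [TopologicalSpace Y] [CompactSpace Y] : ℂ →+* BdSub Y where
  toFun c := ⟨fun k => ContinuousMap.const Y (diagonal fun _ => c), ‖c‖, fun k =>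
    (ContinuousMap.norm_le _ (norm_nonneg _)).2 fun y => by
      rw [ContinuousMap.const_apply, l2_opNorm_diagonal]
      exact (pi_norm_le_iff_of_nonneg (norm_nonneg _)).2 fun j => le_rfl⟩
  map_one' := Subtype.ext (funext fun k => ContinuousMap.ext fun y => diagonal_one)
  map_mul' h h' := Subtype.ext (funext fun k => ContinuousMap.ext fun y => (diagonal_mul_diagonal _ _).symm)
  map_zero' := Subtype.ext (funext fun k => ContinuousMap.ext fun y => diagonal_zero)
  map_add' h h' := Subtype.ext (funext fun k => ContinuousMap.ext fun y => (diagonal_add _ _).symm)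

lemma cB_val (c : ℂ) (k : ℕ) (y : Y) : (cB Y c).1 k y = diagonal fun _ => c := rfl

lemma cB_comm (c : ℂ) (b : BdSub Y) : cB Y c * b = b * cB Y c := Bd_ext fun k y => by
  show (diagonal fun _ => c) * b.1 k y = b.1 k y * diagonal fun _ => c
  ext i j
  rw [diagonal_mul, mul_diagonal, mul_comm]

lemma dB_const (r : ∀ k, ZK k → I) (c : ℂ) : dB r (ContinuousMap.const (I × Y) c) = cB Y c :=
  Bd_ext fun _ _ => rfl

lemma TT_const (c : ℂ) : TT Y (ContinuousMap.const (XX Y) c) = bmk Y (cB Y c) := by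
  have : tB (ContinuousMap.const (XX Y) c) = cB Y c := Bd_ext fun k y => by
    show Tk k _ y = diagonal fun _ => c
    rw [Tk_apply]
    have h1 : Mh k (ContinuousMap.const (XX Y) c) y = c • 1 := by
      rw [Mh, ← diagonal_one, ← diagonal_smul]; congr 1; ext; simp
    rw [h1, Matrix.mul_smul, Matrix.mul_one, Matrix.smul_mul, Vm_iso, ← diagonal_one, ← diagonal_smul]
    congr 1; ext; simp
  show bmk Y (tB _) = _
  rw [this]

lemma TT_fsy (e : C(UnitAddCircle × Y, ℂ)) (e' : C(I × Y, ℂ))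
    (h : ∀ t y, e' (t, y) = e (((t : ℝ) : UnitAddCircle), y)) : TT Y (fsy e) = bmk Y (dB r0 e') := by
  refine TT_of_tk _ _ fun ε hε => ?_
  filter_upwards [(ap_fsy e).tk ε hε] with k hk y
  refine le_trans (le_of_eq ?_) (hk y)
  congr 2
  rw [dB_val, dK]
  congr 1
  ext j
  rw [h, r0_coe]

/-- the idempotent loop -/
noncomputable def zp (p : Matrix ι ι ℂ) (hp : p * p = p) : C(Circle, GU ι) where
  toFun z :=
    { val := (z : ℂ) • p + (1 - p)
      inv := ((z⁻¹ : Circle) : ℂ) • p + (1 - p)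
      val_inv := by
        have hz : (z : ℂ) * ((z⁻¹ : Circle) : ℂ) = 1 := by simp
        have h1 : p * (1 - p) = 0 := by rw [mul_sub, hp, mul_one, sub_self]
        have h2 : (1 - p) * p = 0 := by rw [sub_mul, hp, one_mul, sub_self]
        have h3 : (1 - p) * (1 - p) = 1 - p := by rw [mul_sub, h2, mul_one, sub_zero]
        rw [add_mul, mul_add, mul_add, smul_mul_smul_comm, hz, hp, smul_mul_assoc, h1, mul_smul_comm,
          h2, h3]
        simp
      inv_val := by
        have hz : ((z⁻¹ : Circle) : ℂ) * (z : ℂ) = 1 := by simp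
        have h1 : p * (1 - p) = 0 := by rw [mul_sub, hp, mul_one, sub_self]
        have h2 : (1 - p) * p = 0 := by rw [sub_mul, hp, one_mul, sub_self]
        have h3 : (1 - p) * (1 - p) = 1 - p := by rw [mul_sub, h2, mul_one, sub_zero]
        rw [add_mul, mul_add, mul_add, smul_mul_smul_comm, hz, hp, smul_mul_assoc, h1, mul_smul_comm,
          h2, h3]
        simp }
  continuous_toFun := by
    rw [Units.continuous_iff]
    have hc : Continuous fun z : Circle => (z : ℂ) := continuous_subtype_val
    constructor
    · show Continuous fun z : Circle => (z : ℂ) • p + (1 - p)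
      fun_prop
    · show Continuous fun z : Circle => ((z⁻¹ : Circle) : ℂ) • p + (1 - p)
      have := hc.comp (continuous_inv (G := Circle))
      exact (this.smul continuous_const).add continuous_const

lemma zp_val (p : Matrix ι ι ℂ) (hp : p * p = p) (z : Circle) :
    (zp p hp z).val = (z : ℂ) • p + (1 - p) := rfl

/-- the algebra behind the clutching computation -/
lemma phi_gen {R : Type} [Ring R] (p U D L Z X : R) (hp : p * p = p)
    (D' : R) (hDD : D * D' = 1) (hDD' : D' * D = 1)
    (hUp : U * p = p * U) (hLp : L * p = p * L) (hUD : U * D = D * L * U)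
    (hZ : Z = U * p + (1 - p)) (hX : X = U * (D * p * D') + (1 - D * p * D')) :
    X = D * (p * L + (1 - p)) * Z * D' := by
  have h1 : p * (1 - p) = 0 := by rw [mul_sub, hp, mul_one, sub_self]
  have h2 : (1 - p) * p = 0 := by rw [sub_mul, hp, one_mul, sub_self]
  have h3 : (1 - p) * (1 - p) = 1 - p := by rw [mul_sub, h2, mul_one, sub_zero]
  have e : (p * L + (1 - p)) * Z = L * U * p + (1 - p) := by
    rw [hZ, hUp, add_mul, mul_add, mul_add, ← mul_assoc (1 - p), h2, zero_mul, ← hLp, h3,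
      mul_assoc L p (1 - p), h1, mul_zero, mul_assoc L p, ← mul_assoc p p U, hp, ← hUp, mul_assoc L]
    simp
  rw [mul_assoc D, e, hX, mul_add, add_mul, ← mul_assoc U, ← mul_assoc U, hUD]
  congr 1
  · simp only [mul_assoc]
  · rw [mul_sub, sub_mul, mul_one, hDD]

lemma dB_congr (r r' : ∀ k, ZK k → I) (A B : Matrix ι ι C(I × Y, ℂ))
    (h : ∀ k j y i i', A i i' (r k j, y) = B i i' (r' k j, y)) :
    (dB r).mapMatrix A = (dB r').mapMatrix B := by
  ext1 i i'
  refine Bd_ext fun k y => ?_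
  show (dB r (A i i')).1 k y = (dB r' (B i i')).1 k y
  rw [dB_val, dB_val]
  congr 1
  ext j
  exact h k j y i i'

noncomputable def qd (r : ∀ k, ZK k → I) : Matrix ι ι C(I × Y, ℂ) →+* Matrix ι ι (BI Y) :=
  (qM ι Y).comp (dB r).mapMatrix

noncomputable def kC {X : Type} [TopologicalSpace X] (p : Matrix ι ι ℂ) : Matrix ι ι C(X, ℂ) :=
  mE (ContinuousMap.const X p)

lemma qd_kC (r r' : ∀ k, ZK k → I) (p : Matrix ι ι ℂ) :
    qd r (kC p : Matrix ι ι C(I × Y, ℂ)) = qd r' (kC p) := by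
  show qM ι Y _ = qM ι Y _
  rw [dB_congr r r' (kC p) (kC p)]
  intros; rfl

lemma qd_01 (A : Matrix ι ι C(I × Y, ℂ)) : qd r0 A = qd r1 A := by
  ext1 i j
  exact dB_close r0 r1 r01 (A i j)

noncomputable def atky (k : ℕ) (y : Y) : BdSub Y →+* BK k :=
  (evC k y).comp ((Pi.evalRingHom (fun k => C(Y, BK k)) k).comp (BdSub Y).subtype)

lemma atky_apply (k : ℕ) (y : Y) (b : BdSub Y) : atky k y b = b.1 k y := rfl

noncomputable def uA (ι Y : Type) [Fintype ι] [DecidableEq ι] [TopologicalSpace Y] [CompactSpace Y]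
    [T2Space Y] : Matrix ι ι (BI Y) := Matrix.scalar ι (bmk Y (uB Y).val)

lemma uA_comm (r : ∀ k, ZK k → I) (p : Matrix ι ι ℂ) :
    uA ι Y * qd r (kC p) = qd r (kC p) * uA ι Y := by
  ext1 i j
  rw [uA, Matrix.scalar_apply, diagonal_mul, mul_diagonal]
  show bmk Y _ * bmk Y (dB r (ContinuousMap.const _ (p i j))) = bmk Y (dB r (ContinuousMap.const _ (p i j))) * _
  rw [dB_const, ← map_mul, ← map_mul, cB_comm]

lemma uA_D (R : C(I × Y, GU ι)) (hR0 : ∀ y, R (0, y) = 1) :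
    uA ι Y * qd r0 (mU R).val = qd r1 (mU R).val * qd r2 (mU R⁻¹).val * uA ι Y := by
  have h : qd r1 (mU R).val * qd r2 (mU R⁻¹).val
      = qM ι Y ((dB r1).mapMatrix (mU R).val * (dB r2).mapMatrix (mU R⁻¹).val) := by
    rw [map_mul]; rfl
  rw [h]
  ext1 i j
  rw [uA, Matrix.scalar_apply, diagonal_mul, mul_diagonal]
  show bmk Y _ * bmk Y (dB r0 ((mU R).val i j)) = bmk Y _ * bmk Y _
  rw [← map_mul, ← map_mul]
  congr 1
  refine Bd_ext fun k y => ?_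
  rw [← atky_apply, ← atky_apply, map_mul, map_mul, Matrix.mul_apply, map_sum]
  show Um k * diagonal _ = _ * Um k
  rw [Um_dK]
  congr 1
  have : ∀ m, atky k y ((dB r1).mapMatrix (mU R).val i m * (dB r2).mapMatrix (mU R⁻¹).val m j)
      = diagonal fun a => (R (r1 k a, y)).val i m * ((R (r2 k a, y))⁻¹).val m j := by
    intro m
    rw [map_mul]
    exact diagonal_mul_diagonal _ _
  rw [Finset.sum_congr rfl fun m _ => this m]
  ext a b
  rw [Matrix.sum_apply]
  by_cases hab : a = b
  · subst hab
    simp only [diagonal_apply_eq]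
    rw [← Matrix.mul_apply, mU_apply, ← Units.val_mul]
    congr 2
    rcases r_succ k a with ⟨h1, h2, h3⟩ | ⟨h1, h2⟩
    · rw [h1, h2, h3, hR0]; simp
    · rw [h1, h2, hR0]; simp
  · simp [diagonal_apply_ne _ hab]

lemma TT_scalar (A : Matrix ι ι C(XX Y, ℂ)) (f : C(XX Y, GU ι))
    (h : ∀ x i j, (f x).val i j = fz Y x * A i j x + ((1 : Matrix ι ι ℂ) i j - A i j x)) :
    (QQ f).val = uA ι Y * (TT Y).mapMatrix A + (1 - (TT Y).mapMatrix A) := by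
  have : (mU f).val = Matrix.scalar ι (fz Y) * A + (1 - A) := by
    ext i j x
    rw [mU_apply, h]
    rw [Matrix.add_apply, Matrix.sub_apply, Matrix.scalar_apply, diagonal_mul, Matrix.one_apply,
      Matrix.one_apply]
    split_ifs <;> rfl
  rw [QQ_val, this, map_add, map_mul, map_sub, map_one]
  congr 2
  ext1 i j
  rw [uA, ← TT_fz, Matrix.scalar_apply, Matrix.scalar_apply]
  simp only [RingHom.mapMatrix_apply, Matrix.map_apply, diagonal_apply]
  split_ifs <;> simp

theorem clutching (p : Matrix ι ι ℂ) (hp : p * p = p) (R : C(I × Y, GU ι))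
    (hR0 : ∀ y, R (0, y) = 1) (hR1 : ∀ y, (R (1, y)).val * p = p * (R (1, y)).val)
    (f : C(XX Y, GU ι))
    (hf : ∀ (t : I) z y, f (((t : ℝ) : UnitAddCircle), z, y)
      = (zp p hp z)⁻¹ * R (t, y) * zp p hp z * (R (t, y))⁻¹)
    (hT : Triv f) (a : C(Y, GU ι)) (ha : ∀ y, (a y).val = p * (R (1, y)).val + (1 - p)) : Ev a := by
  -- the idempotent loop `e = R p R⁻¹`
  let g : C(XX Y, GU ι) := ⟨fun x => zp p hp x.2.1 * f x, by fun_prop⟩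
  let ζ : C(XX Y, GU ι) := ⟨fun x => zp p hp x.2.1, by fun_prop⟩
  have hgf : g = ζ * f := rfl
  have hg : ∀ (t : I) z y, (g (((t : ℝ) : UnitAddCircle), z, y)).val =
      (z : ℂ) • ((R (t, y)).val * p * ((R (t, y))⁻¹).val) +
        (1 - (R (t, y)).val * p * ((R (t, y))⁻¹).val) := by
    intro t z y
    have : g (((t : ℝ) : UnitAddCircle), z, y) = R (t, y) * zp p hp z * (R (t, y))⁻¹ := by
      show zp p hp z * f _ = _
      rw [hf]; group
    rw [this, Units.val_mul, Units.val_mul, zp_val, mul_add, add_mul, mul_smul_comm, smul_mul_assoc,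
      mul_sub, sub_mul, mul_one, Units.mul_inv]
  let e : C(UnitAddCircle × Y, Matrix ι ι ℂ) :=
    ⟨fun x => (1 / 2 : ℂ) • (1 - (g (x.1, -1, x.2)).val), by fun_prop⟩
  have he : ∀ (t : I) y, e (((t : ℝ) : UnitAddCircle), y)
      = (R (t, y)).val * p * ((R (t, y))⁻¹).val := by
    intro t y
    show (1 / 2 : ℂ) • (1 - (g (_, -1, y)).val) = _
    rw [hg]
    set Q := (R (t, y)).val * p * ((R (t, y))⁻¹).val
    have : (((-1 : Circle) : ℂ)) = -1 := by simp
    rw [this]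
    ext i j
    simp only [Matrix.smul_apply, Matrix.sub_apply, Matrix.add_apply, smul_eq_mul]
    ring
  have hsurj : ∀ s : UnitAddCircle, ∃ t : I, ((t : ℝ) : UnitAddCircle) = s := by
    intro s
    obtain ⟨t, ht, rfl⟩ : s ∈ ((fun x : ℝ => (x : UnitAddCircle)) '' Set.Icc 0 (0 + 1)) := by
      rw [AddCircle.coe_image_Icc_eq]; trivial
    exact ⟨⟨t, by simpa using ht⟩, rfl⟩
  let A : Matrix ι ι C(XX Y, ℂ) := Matrix.of fun i j => fsy (mE e i j)
  have hX := TT_scalar A g (fun ⟨s, z, y⟩ i j => by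
    obtain ⟨t, rfl⟩ := hsurj s
    rw [hg]
    show _ = (z : ℂ) * (e (_, y)) i j + (_ - (e (_, y)) i j)
    rw [he]
    simp [Matrix.add_apply])
  have hZ := TT_scalar (kC p) ζ (fun ⟨s, z, y⟩ i j => by
    show (zp p hp z).val i j = (z : ℂ) * p i j + (_ - p i j)
    rw [zp_val]
    simp [Matrix.add_apply])
  have hZ' : (TT Y).mapMatrix (kC p) = qd r0 (kC p) := by
    ext1 i j
    show TT Y (ContinuousMap.const _ (p i j)) = bmk Y (dB r0 (ContinuousMap.const _ (p i j)))
    rw [dB_const, TT_const]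
  have hA : (TT Y).mapMatrix A = qd r0 (mU R).val * qd r0 (kC p) * qd r0 (mU R⁻¹).val := by
    rw [← map_mul, ← map_mul]
    have : (mU R).val * kC p * (mU R⁻¹).val
        = mE ⟨fun x => (R x).val * p * ((R x)⁻¹).val, by fun_prop⟩ := by
      show mE (vC R) * mE _ * mE (vC R⁻¹) = _
      rw [mE_mul _ _ ⟨fun x => (R x).val * p, by fun_prop⟩ fun x => rfl]
      exact mE_mul _ _ _ fun x => rfl
    rw [this]
    ext1 i j
    refine TT_fsy (mE e i j) _ fun t y => ?_
    show _ = e _ i j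
    rw [he]
    rfl
  have hinv : (mU R⁻¹).val = ((mU R)⁻¹).val := by rw [map_inv]
  have hLp : qd r2 (mU R⁻¹).val * qd r0 (kC p) = qd r0 (kC p) * qd r2 (mU R⁻¹).val := by
    rw [qd_kC r0 r2, ← map_mul, ← map_mul]
    show qM ι Y _ = qM ι Y _
    rw [dB_congr r2 r2]
    intro k j y i i'
    have hc : ((R (r2 k j, y))⁻¹).val * p = p * ((R (r2 k j, y))⁻¹).val := by
      have h1 : (R (r2 k j, y)).val * p = p * (R (r2 k j, y)).val := by
        unfold r2
        split_ifs
        · exact hR1 y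
        · rw [hR0]; simp
      exact (show Commute ((R (r2 k j, y)).val) p from h1).units_inv_left
    have e1 : (mU R⁻¹).val * kC p = mE ⟨fun x => ((R x)⁻¹).val * p, by fun_prop⟩ :=
      mE_mul _ _ _ fun x => rfl
    have e2 : kC p * (mU R⁻¹).val = mE ⟨fun x => p * ((R x)⁻¹).val, by fun_prop⟩ :=
      mE_mul _ _ _ fun x => rfl
    rw [e1, e2, mE_apply, mE_apply]
    exact congrFun (congrFun hc i) i'
  have key := phi_gen (qd r0 (kC p)) (uA ι Y) (qd r0 (mU R).val) (qd r2 (mU R⁻¹).val) (QQ ζ).val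
    (QQ g).val
    (by rw [← map_mul]; congr 1; exact mE_mul _ _ _ fun x => hp)
    (qd r0 (mU R⁻¹).val)
    (by rw [← map_mul, hinv, Units.mul_inv, map_one])
    (by rw [← map_mul, hinv, Units.inv_mul, map_one])
    (uA_comm r0 p) hLp (by rw [uA_D R hR0, qd_01]) (by rw [hZ, hZ']) (by rw [hX, hA])
  let D : (Matrix ι ι (BI Y))ˣ := Units.map (qd r0).toMonoidHom (mU R)
  have hD : D.val = qd r0 (mU R).val := rfl
  have hD' : (D⁻¹).val = qd r0 (mU R⁻¹).val := by rw [hinv]; rfl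
  let E0 : (Matrix ι ι (BI Y))ˣ := D⁻¹ * QQ g * D * (QQ ζ)⁻¹
  have hE0 : E0.val = qd r0 (kC p) * qd r2 (mU R⁻¹).val + (1 - qd r0 (kC p)) := by
    show (D⁻¹).val * (QQ g).val * D.val * ((QQ ζ)⁻¹).val = _
    rw [key, ← hD', ← hD]
    set B := qd r0 (kC p) * qd r2 (mU R⁻¹).val + (1 - qd r0 (kC p))
    simp only [mul_assoc]
    simp
  have hTE : Tv E0 := by
    have h1 : Tv (QQ f) := hT
    have h2 := ((h1.conj (QQ ζ)).conj D⁻¹).mul (Tv.comm_left (u := D⁻¹) (v := QQ ζ))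
    convert h2 using 1
    show D⁻¹ * QQ g * D * (QQ ζ)⁻¹ = _
    rw [hgf, map_mul]
    group
  let n : C(I × Y, Matrix ι ι ℂ) := ⟨fun x => p * ((R x)⁻¹).val + (1 - p), by fun_prop⟩
  have hn : mE n = kC p * (mU R⁻¹).val + (1 - kC p) := by
    have e2 : kC p * (mU R⁻¹).val = mE ⟨fun x => p * ((R x)⁻¹).val, by fun_prop⟩ :=
      mE_mul _ _ _ fun x => rfl
    rw [e2]
    ext i j x
    rw [Matrix.add_apply, Matrix.sub_apply, Matrix.one_apply]
    show (p * ((R x)⁻¹).val + (1 - p)) i j = _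
    rw [Matrix.add_apply, Matrix.sub_apply, Matrix.one_apply]
    split_ifs <;> rfl
  have hM0 : qM ι Y ((dB r2).mapMatrix (mE n)) = E0.val := by
    rw [hE0, qd_kC r0 r2]
    show qd r2 (mE n) = _
    rw [hn, map_add, map_mul, map_sub, map_one]
  obtain ⟨k, G, hG, hEG⟩ := (hTE.all _ hM0).exists
  -- one-site matrix
  have hlast : ∃ l : ZK k, l.val + 1 = NN k := by
    refine ⟨((NN k - 1 : ℕ) : ZK k), ?_⟩
    rw [ZMod.val_natCast, Nat.mod_eq_of_lt] <;> unfold NN <;> omega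
  obtain ⟨l, hl⟩ := hlast
  have hr2 : ∀ j : ZK k, j ≠ l → r2 k j = 0 := fun j hj => by
    rw [r2, if_neg]
    intro h
    exact hj (ZMod.val_injective _ (by omega))
  have hr2l : r2 k l = 1 := by rw [r2, if_pos hl]
  let F : ι ⊕ (ι × {j : ZK k // j ≠ l}) → ι × ZK k :=
    Sum.elim (fun i => (i, l)) (fun q => (q.1, q.2.1))
  have hF : Function.Bijective F := by
    constructor
    · rintro (i | ⟨i, j, hj⟩) (i' | ⟨i', j', hj'⟩) h
      · simpa [F] using h
      · simp only [F, Sum.elim_inl, Sum.elim_inr, Prod.mk.injEq] at h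
        exact absurd h.2.symm hj'
      · simp only [F, Sum.elim_inl, Sum.elim_inr, Prod.mk.injEq] at h
        exact absurd h.2 hj
      · simpa [F] using h
    · rintro ⟨i, j⟩
      by_cases h : j = l
      · exact ⟨Sum.inl i, by simp [F, h]⟩
      · exact ⟨Sum.inr (i, ⟨j, h⟩), rfl⟩
  have hent : ∀ y i j i' j', (G y).val (i, j) (i', j') =
      if j = j' then (p * ((R (r2 k j, y))⁻¹).val + (1 - p)) i i' else 0 := by
    intro y i j i' j'
    rw [hG y, evM_apply]
    show (diagonal fun j => n (r2 k j, y) i i') j j' = _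
    rw [diagonal_apply]
    rfl
  have hai : ∀ y, ((a y)⁻¹).val = p * ((R (1, y))⁻¹).val + (1 - p) := by
    intro y
    apply Units.inv_eq_of_mul_eq_one_right
    rw [ha]
    have hc : p * (R (1, y)).val = (R (1, y)).val * p := (hR1 y).symm
    have h1 : p * (1 - p) = 0 := by rw [mul_sub, hp, mul_one, sub_self]
    have h2 : (1 - p) * p = 0 := by rw [sub_mul, hp, one_mul, sub_self]
    have h3 : (1 - p) * (1 - p) = 1 - p := by rw [mul_sub, h2, mul_one, sub_zero]
    rw [add_mul, mul_add, mul_add, h3, ← mul_assoc (1 - p), h2, zero_mul, hc, mul_assoc _ p (1 - p), h1,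
      mul_zero, mul_assoc _ p, ← mul_assoc p p, hp, ← mul_assoc, ← hc, mul_assoc, Units.mul_inv]
    simp
  have hfin := hEG.rdx (Equiv.ofBijective F hF).symm
  have heq : crdx (Equiv.ofBijective F hF).symm G = cblk a⁻¹ 1 := by
    ext1 y
    ext x x'
    simp only [crdx_apply, rdx_val, cblk_apply, blk_val, reindex_apply, submatrix_apply,
      Equiv.symm_symm, Equiv.ofBijective_apply]
    rcases x with i | ⟨i, j, hj⟩ <;> rcases x' with i' | ⟨i', j', hj'⟩
    · show (G y).val (i, l) (i', l) = ((a y)⁻¹).val i i'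
      rw [hent, if_pos rfl, hr2l, hai]
    · show (G y).val (i, l) (i', j') = 0
      rw [hent, if_neg (Ne.symm hj')]
    · show (G y).val (i, j) (i', l) = 0
      rw [hent, if_neg hj]
    · show (G y).val (i, j) (i', j') = (1 : Matrix (ι × {j : ZK k // j ≠ l}) (ι × {j : ZK k // j ≠ l}) ℂ) _ _
      rw [hent, hr2 j hj, hR0]
      simp only [inv_one, Units.val_one, mul_one, add_sub_cancel, Matrix.one_apply, Prod.mk.injEq,
        Subtype.mk.injEq]
      by_cases h1 : j = j' <;> by_cases h2 : i = i' <;> simp [h1, h2]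
  rw [heq] at hfin
  have := hfin.of_stab.inv
  rwa [inv_inv] at this
end Phi
end WM

namespace WM
open Matrix ContinuousMap unitInterval Filter Topology

/-! ### paths that are equivalent to even paths -/
section Paths
set_option linter.unusedSectionVars false
variable {Y : Type} [TopologicalSpace Y] [CompactSpace Y] [T2Space Y]
variable {ι κ : Type} [Fintype ι] [DecidableEq ι] [Fintype κ] [DecidableEq κ]

lemma coe_I_surj (s : UnitAddCircle) : ∃ t : I, ((t : ℝ) : UnitAddCircle) = s := by
  have h := AddCircle.coe_image_Icc_eq (1 : ℝ) 0
  have hs : s ∈ ((↑) : ℝ → UnitAddCircle) '' Set.Icc 0 (0 + 1) := by rw [h]; trivial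
  obtain ⟨t, ht, rfl⟩ := hs
  exact ⟨⟨t, ht.1, by simpa using ht.2⟩, rfl⟩

lemma coe_I_eq (t t' : I) (h : ((t : ℝ) : UnitAddCircle) = t') :
    t = t' ∨ (t = 0 ∧ t' = 1) ∨ (t = 1 ∧ t' = 0) := by
  rw [eq_comm, ← sub_eq_zero, ← AddCircle.coe_sub, AddCircle.coe_eq_zero_iff] at h
  obtain ⟨n, hn⟩ := h
  simp only [zsmul_eq_mul, mul_one] at hn
  have h1 := t.2.1
  have h2 := t.2.2
  have h3 := t'.2.1
  have h4 := t'.2.2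
  have hn1 : n ≤ 1 := by
    have : (n : ℝ) ≤ 1 := by linarith
    exact_mod_cast this
  have hn2 : -1 ≤ n := by
    have : (-1 : ℝ) ≤ n := by linarith
    exact_mod_cast this
  obtain rfl | rfl | rfl : n = -1 ∨ n = 0 ∨ n = 1 := by omega
  · right; right
    push_cast at hn
    exact ⟨Subtype.ext (show (t : ℝ) = 1 by linarith), Subtype.ext (show (t' : ℝ) = 0 by linarith)⟩
  · left
    push_cast at hn
    exact Subtype.ext (by linarith)
  · right; left
    push_cast at hn
    exact ⟨Subtype.ext (show (t : ℝ) = 0 by linarith), Subtype.ext (show (t' : ℝ) = 1 by linarith)⟩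

lemma hat_exists {V Z : Type} [TopologicalSpace V] [CompactSpace V] [T2Space V]
    [TopologicalSpace Z] (g : C(I × V, Z)) (hg : ∀ v, g (0, v) = g (1, v)) :
    ∃ f : C(UnitAddCircle × V, Z), ∀ (t : I) v, f (((t : ℝ) : UnitAddCircle), v) = g (t, v) := by
  let q : C(I × V, UnitAddCircle × V) := ⟨fun p => (((p.1 : ℝ) : UnitAddCircle), p.2), by
    have : Continuous ((↑) : ℝ → UnitAddCircle) := AddCircle.continuous_mk' 1
    fun_prop⟩
  have hq : Function.Surjective q := fun p => by
    obtain ⟨t, ht⟩ := coe_I_surj p.1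
    exact ⟨(t, p.2), Prod.ext ht rfl⟩
  have hQ : IsQuotientMap q := q.continuous.isClosedMap.isQuotientMap q.continuous hq
  have hfac : Function.FactorsThrough g q := by
    rintro ⟨t, v⟩ ⟨t', v'⟩ h
    have h1 : ((t : ℝ) : UnitAddCircle) = t' := congrArg Prod.fst h
    have h2 : v = v' := congrArg Prod.snd h
    subst h2
    rcases coe_I_eq t t' h1 with rfl | ⟨rfl, rfl⟩ | ⟨rfl, rfl⟩
    · rfl
    · exact hg v
    · exact (hg v).symm
  refine ⟨hQ.lift g hfac, fun t v => ?_⟩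
  exact DFunLike.congr_fun (hQ.lift_comp g hfac) (t, v)

abbrev PP (Y ι : Type) [TopologicalSpace Y] [Fintype ι] [DecidableEq ι] := C(I × (Circle × Y), GU ι)

lemma ext_coe {f g : C(XX Y, GU ι)}
    (h : ∀ (t : I) z y, f (((t : ℝ) : UnitAddCircle), z, y) = g (((t : ℝ) : UnitAddCircle), z, y)) :
    f = g := by
  ext1 ⟨s, z, y⟩
  obtain ⟨t, rfl⟩ := coe_I_surj s
  exact h t z y

def EvenP (g : PP Y ι) : Prop := ∀ t z y, g (t, -z, y) = g (t, z, y)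

/-- two paths with the same endpoints differ by a trivial loop -/
def Rel (g g' : PP Y ι) : Prop :=
  ∃ f : C(XX Y, GU ι), (∀ (t : I) z y, f (((t : ℝ) : UnitAddCircle), z, y)
    = g (t, z, y) * (g' (t, z, y))⁻¹) ∧ Triv f

def Good (g : PP Y ι) : Prop :=
  ∃ d : PP Y ι, EvenP d ∧ (∀ x, d (0, x) = g (0, x)) ∧ (∀ x, d (1, x) = g (1, x)) ∧ Rel g d

lemma Rel.of_even {g g' : PP Y ι} (hg : EvenP g) (hg' : EvenP g')
    (h0 : ∀ x, g (0, x) = g' (0, x)) (h1 : ∀ x, g (1, x) = g' (1, x)) : Rel g g' := by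
  obtain ⟨f, hf⟩ := hat_exists (g * g'⁻¹) (fun x => by simp [h0, h1])
  refine ⟨f, fun t z y => hf t (z, y), Triv.even fun s z y => ?_⟩
  obtain ⟨t, rfl⟩ := coe_I_surj s
  rw [hf, hf]
  simp [hg t z y, hg' t z y]

lemma Good.of_even {g : PP Y ι} (hg : EvenP g) : Good g :=
  ⟨g, hg, fun _ => rfl, fun _ => rfl, Rel.of_even hg hg (fun _ => rfl) (fun _ => rfl)⟩

lemma Good.rel {g g' : PP Y ι} (hg : Good g) (hg' : EvenP g')
    (h0 : ∀ x, g (0, x) = g' (0, x)) (h1 : ∀ x, g (1, x) = g' (1, x)) : Rel g g' := by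
  obtain ⟨d, hd, hd0, hd1, f, hf, hT⟩ := hg
  obtain ⟨f', hf', hT'⟩ := Rel.of_even hd hg' (fun x => (hd0 x).trans (h0 x))
    (fun x => (hd1 x).trans (h1 x))
  refine ⟨f * f', fun t z y => ?_, hT.mul hT'⟩
  rw [ContinuousMap.mul_apply, hf, hf']
  group

lemma Good.square (F : C(I × I × (Circle × Y), GU ι)) (g g' : PP Y ι)
    (h0 : ∀ r z y, F (r, 0, -z, y) = F (r, 0, z, y))
    (h1 : ∀ r z y, F (r, 1, -z, y) = F (r, 1, z, y))
    (hg : ∀ s x, F (0, s, x) = g (s, x)) (hg' : ∀ s x, F (1, s, x) = g' (s, x))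
    (h : Good g) : Good g' := by
  obtain ⟨d, hd, hd0, hd1, f, hf, hT⟩ := h
  let D : C(I × I × (Circle × Y), GU ι) := ⟨fun p =>
    F (p.1 * σ p.2.1, 0, p.2.2) * (F (0, 0, p.2.2))⁻¹ * d (p.2.1, p.2.2) *
      (F (0, 1, p.2.2))⁻¹ * F (p.1 * p.2.1, 1, p.2.2), by fun_prop⟩
  have hD : ∀ r s x, D (r, s, x) = F (r * σ s, 0, x) * (F (0, 0, x))⁻¹ * d (s, x) *
      (F (0, 1, x))⁻¹ * F (r * s, 1, x) := fun _ _ _ => rfl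
  have hD0 : ∀ r x, D (r, 0, x) = F (r, 0, x) := fun r x => by
    rw [hD, hd0, ← hg]; simp
  have hD1 : ∀ r x, D (r, 1, x) = F (r, 1, x) := fun r x => by
    rw [hD, hd1, ← hg]; simp
  obtain ⟨K, hK⟩ := hat_exists (V := I × (Circle × Y))
    ⟨fun p : I × (I × (Circle × Y)) => F (p.2.1, p.1, p.2.2) * (D (p.2.1, p.1, p.2.2))⁻¹,
      by fun_prop⟩ (fun v => by simp [hD0, hD1])
  refine ⟨⟨fun p => D (1, p.1, p.2), by fun_prop⟩, fun t z y => ?_, fun x => ?_, fun x => ?_,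
    ⟨fun q => K (q.1, 1, q.2), by fun_prop⟩, fun t z y => ?_, ?_⟩
  · show D (1, t, -z, y) = D (1, t, z, y)
    rw [hD, hD, h0, h0, h1, h1, hd]
  · show D (1, 0, x) = _
    rw [hD0, hg']
  · show D (1, 1, x) = _
    rw [hD1, hg']
  · show K (_, 1, (z, y)) = _
    rw [hK]
    show F (1, t, (z, y)) * _ = _
    rw [hg']
    rfl
  · refine hT.congr ⟨⟨⟨fun p => K (p.2.1, p.1, p.2.2), by fun_prop⟩, fun p => ?_, fun p => rfl⟩⟩
    obtain ⟨s, z, y⟩ := p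
    obtain ⟨t, rfl⟩ := coe_I_surj s
    show K (_, 0, (z, y)) = _
    rw [hK, hf]
    show F (0, t, (z, y)) * (D (0, t, (z, y)))⁻¹ = _
    rw [hD, hg]
    simp

end Paths
end WM

namespace WM
open Matrix ContinuousMap unitInterval Filter Topology

section LB
set_option linter.unusedSectionVars false
variable {Y : Type} [TopologicalSpace Y] [CompactSpace Y] [T2Space Y]
variable {ι κ : Type} [Fintype ι] [DecidableEq ι] [Fintype κ] [DecidableEq κ]

/-- scalar matrices -/
noncomputable def scU (ι : Type) [Fintype ι] [DecidableEq ι] (z : Circle) : GU ι :=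
  Units.map (algebraMap ℂ (Matrix ι ι ℂ)).toMonoidHom (Circle.toUnits z)

lemma scU_val (z : Circle) : (scU ι z).val = algebraMap ℂ (Matrix ι ι ℂ) z := rfl

lemma scU_comm (z : Circle) (a : GU ι) : scU ι z * a = a * scU ι z := by
  ext1
  exact Algebra.commutes _ _

lemma scU_neg (z : Circle) : scU ι (-z) = scU ι z * (-1) := by
  ext1
  simp [scU_val]

@[fun_prop] lemma continuous_scU : Continuous (scU ι) := by
  rw [Units.continuous_iff]
  have h : Continuous fun z : Circle => algebraMap ℂ (Matrix ι ι ℂ) z :=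
    (continuous_algebraMap ℂ _).comp continuous_subtype_val
  refine ⟨h, ?_⟩
  have : (fun z => ((scU ι z)⁻¹).val) = fun z : Circle => algebraMap ℂ (Matrix ι ι ℂ) (z⁻¹ : Circle) := by
    ext1 z
    show (scU ι z)⁻¹.val = (scU ι z⁻¹).val
    rw [scU, scU, ← map_inv, ← map_inv]
  exact this ▸ h.comp continuous_inv

lemma rot_add (θ φ : ℝ) : rot ι θ * rot ι φ = rot ι (θ + φ) := by
  ext1; exact rotM_mul θ φ

lemma rot_J (θ : ℝ) : blk (-1 : GU ι) (1 : GU ι) * rot ι θ = (rot ι θ)⁻¹ * blk (-1 : GU ι) (1 : GU ι) := by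
  ext1
  show (blk (-1 : GU ι) (1 : GU ι)).val * rotM ι θ = rotM ι (-θ) * (blk (-1 : GU ι) (1 : GU ι)).val
  rw [blk_val]
  simp [rotM, fromBlocks_multiply]

lemma swap_gen {G : Type} [Group G] (J g x y : G) (h1 : J * g = g⁻¹ * J) (h2 : J * y = y * J)
    (h3 : g * g * x * (g * g)⁻¹ = y) : J * (g * y * g⁻¹) * J⁻¹ = g * x * g⁻¹ := by
  have h4 : J * (g * y * g⁻¹) * J⁻¹ = g⁻¹ * y * g := by
    have : J * (g * y * g⁻¹) * J⁻¹ = (J * g) * y * (J * g)⁻¹ := by group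
    rw [this, h1]
    have : g⁻¹ * J * y * (g⁻¹ * J)⁻¹ = g⁻¹ * (J * y) * J⁻¹ * g := by group
    rw [this, h2]
    group
  rw [h4, ← h3]
  group

lemma rot_comm (θ : ℝ) (a : GU ι) : rot ι θ * blk a a = blk a a * rot ι θ := by
  ext1
  show rotM ι θ * (blk a a).val = (blk a a).val * rotM ι θ
  rw [blk_val]
  simp [rotM, fromBlocks_multiply]

lemma good_dd (v : PP Y ι) (h0 : ∀ z y, v (0, -z, y) = v (0, z, y))
    (h1 : ∀ z y, v (1, -z, y) = v (1, z, y)) (d : PP Y (ι ⊕ ι))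
    (hd : ∀ s z y, d (s, z, y) = blk (v (s, z, y)) (v (s, -z, y))) : Good d := by
  let T : C(I × Circle, GU (ι ⊕ ι)) :=
    ⟨fun p => blk (scU ι p.2) 1 * rot ι (Real.pi / 4 * (σ p.1 : ℝ)), by fun_prop⟩
  have hT : ∀ r z, T (r, z) = blk (scU ι z) 1 * rot ι (Real.pi / 4 * (σ r : ℝ)) := fun _ _ => rfl
  have hTc : ∀ r z (a : GU ι), T (r, z) * blk a a * (T (r, z))⁻¹ = blk a a := fun r z a => by
    rw [mul_inv_eq_iff_eq_mul, hT, mul_assoc, rot_comm, ← mul_assoc, ← blk_mul, scU_comm,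
      one_mul, ← mul_one (a : GU ι), blk_mul]
    simp only [mul_one, ← mul_assoc, ← blk_mul]
  let F : C(I × I × (Circle × Y), GU (ι ⊕ ι)) := ⟨fun p => T (p.1, p.2.2.1) *
    blk (v (p.2.1, p.2.2.1, p.2.2.2)) (v (p.2.1, -p.2.2.1, p.2.2.2)) * (T (p.1, p.2.2.1))⁻¹, by
      have : Continuous fun z : Circle => -z := continuous_neg
      fun_prop⟩
  have hF : ∀ r s z y, F (r, s, z, y) = T (r, z) * blk (v (s, z, y)) (v (s, -z, y)) * (T (r, z))⁻¹ :=
    fun _ _ _ _ => rfl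
  refine Good.square F ⟨fun p => F (0, p), by fun_prop⟩ d ?_ ?_ (fun _ _ => rfl) ?_
    (Good.of_even ?_)
  · intro r z y
    rw [hF, hF, neg_neg, h0, hTc, hTc]
  · intro r z y
    rw [hF, hF, neg_neg, h1, hTc, hTc]
  · rintro s ⟨z, y⟩
    rw [hF, hT, hd]
    simp only [symm_one, Set.Icc.coe_zero, mul_zero, rot_zero, mul_one, blk_inv, ← blk_mul, scU_comm z,
      one_mul, inv_one, mul_inv_cancel_right]
  · intro s z y
    show F (0, s, -z, y) = F (0, s, z, y)
    rw [hF, hF, hT, hT, scU_neg, neg_neg]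
    have e : blk (scU ι z * -1) (1 : GU ι) = blk (scU ι z) (1 : GU ι) * blk (-1 : GU ι) (1 : GU ι) := by
      rw [← blk_mul, one_mul]
    rw [e]
    set g := rot ι (Real.pi / 4 * (σ (0 : I) : ℝ)) with hg
    have hgg : g * g = rot ι (Real.pi / 2) := by
      rw [hg, rot_add]; congr 1; simp; ring
    have := swap_gen (blk (-1 : GU ι) (1 : GU ι)) g (blk (v (s, z, y)) (v (s, -z, y)))
      (blk (v (s, -z, y)) (v (s, z, y))) (rot_J _) (by simp [← blk_mul])
      (by rw [hgg, rot_pi_div_two])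
    have h2 : ∀ (A J g x y : GU (ι ⊕ ι)), J * (g * y * g⁻¹) * J⁻¹ = g * x * g⁻¹ →
        A * J * g * y * (A * J * g)⁻¹ = A * g * x * (A * g)⁻¹ := by
      intro A J g x y h
      have h3 : A * J * g * y * (A * J * g)⁻¹ = A * (J * (g * y * g⁻¹) * J⁻¹) * A⁻¹ := by group
      rw [h3, h]
      group
    exact h2 _ _ _ _ _ this

lemma good_uu (v : PP Y ι) (h0 : ∀ z y, v (0, -z, y) = v (0, z, y))
    (h1 : ∀ z y, v (1, -z, y) = v (1, z, y)) (d : PP Y (ι ⊕ ι))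
    (hd : ∀ s z y, d (s, z, y) = blk (v (s, z, y)) (v (s, z, y))) : Good d := by
  have hneg : Continuous fun z : Circle => -z := continuous_neg
  have hexp : Continuous fun r : I => Circle.exp (Real.pi * (σ r : ℝ)) := by fun_prop
  let F : C(I × I × (Circle × Y), GU (ι ⊕ ι)) := ⟨fun p =>
    blk (v (p.2.1, p.2.2.1, p.2.2.2))
      (v (p.2.1, Circle.exp (Real.pi * (σ p.1 : ℝ)) * p.2.2.1, p.2.2.2)), by fun_prop⟩
  have hF : ∀ r s z y, F (r, s, z, y) = blk (v (s, z, y))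
    (v (s, Circle.exp (Real.pi * (σ r : ℝ)) * z, y)) := fun _ _ _ _ => rfl
  refine Good.square F ⟨fun p => F (0, p), by fun_prop⟩ d ?_ ?_ (fun _ _ => rfl) ?_
    (good_dd v h0 h1 _ ?_)
  · intro r z y
    rw [hF, hF, mul_neg, h0, h0]
  · intro r z y
    rw [hF, hF, mul_neg, h1, h1]
  · rintro s ⟨z, y⟩
    rw [hF, hd]
    simp
  · intro s z y
    show F (0, s, z, y) = _
    rw [hF]
    congr 4
    have : Circle.exp Real.pi = -1 := by ext; simp
    simp [this]

/-- rotation -/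
noncomputable def gsM (θ : ℝ) : Matrix (Fin 2) (Fin 2) ℂ :=
  !![(Real.cos θ : ℂ), -(Real.sin θ : ℂ); (Real.sin θ : ℂ), (Real.cos θ : ℂ)]

lemma gsM_mul (θ φ : ℝ) : gsM θ * gsM φ = gsM (θ + φ) := by
  simp only [gsM, Matrix.mul_fin_two, Real.cos_add, Real.sin_add]
  push_cast
  ext i j; fin_cases i <;> fin_cases j <;> simp <;> ring

lemma gsM_zero : gsM 0 = 1 := by
  simp [gsM, Matrix.one_fin_two]

noncomputable def gs (θ : ℝ) : GU (Fin 2) where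
  val := gsM θ
  inv := gsM (-θ)
  val_inv := by simp [gsM_mul, gsM_zero]
  inv_val := by simp [gsM_mul, gsM_zero]

lemma continuous_gsM : Continuous gsM := by
  refine continuous_matrix fun i j => ?_
  fin_cases i <;> fin_cases j <;> simp [gsM] <;> fun_prop

@[fun_prop] lemma continuous_gs : Continuous gs := by
  rw [Units.continuous_iff]
  exact ⟨continuous_gsM, continuous_gsM.comp continuous_neg⟩

lemma gs_zero : gs 0 = 1 := by ext1; exact gsM_zero

/-- the disc in `SU(2)` -/
noncomputable def xd (s : I) (z : Circle) : GU (Fin 2) :=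
  dgU (Circle.toUnits z) 1 * gs (Real.pi / 2 * (s : ℝ)) * (dgU (Circle.toUnits z) 1)⁻¹ *
    (gs (Real.pi / 2 * (s : ℝ)))⁻¹

lemma xd_zero (z : Circle) : xd 0 z = 1 := by
  simp [xd, gs_zero]

lemma xd_one (z : Circle) : xd 1 z = dgU (Circle.toUnits z) (Circle.toUnits z)⁻¹ := by
  rw [xd, mul_inv_eq_iff_eq_mul, mul_inv_eq_iff_eq_mul]
  ext i j
  fin_cases i <;> fin_cases j <;> simp [dgU, gs, gsM, Matrix.mul_apply, Fin.sum_univ_two]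

@[fun_prop] lemma _root_.Continuous.xd {X : Type} [TopologicalSpace X] {f : X → I} {g : X → Circle}
    (hf : Continuous f) (hg : Continuous g) : Continuous fun x => WM.xd (f x) (g x) := by
  unfold WM.xd
  have := continuous_toUnits
  fun_prop

/-- Rotation path from `1` to `a ⊕ a⁻¹`. -/
noncomputable def Rpa (a : GU ι) (r : I) : GU (ι ⊕ ι) :=
  blk a 1 * (rot ι (Real.pi / 2 * (r : ℝ)) * blk a⁻¹ 1 * (rot ι (Real.pi / 2 * (r : ℝ)))⁻¹)

lemma Rpa_zero (a : GU ι) : Rpa a 0 = 1 := by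
  simp [Rpa, ← blk_mul, blk_one]

lemma Rpa_one (a : GU ι) : Rpa a 1 = blk a a⁻¹ := by
  simp [Rpa, rot_pi_div_two, ← blk_mul]

@[fun_prop] lemma _root_.Continuous.Rpa {X : Type} [TopologicalSpace X] {f : X → GU ι} {g : X → I}
    (hf : Continuous f) (hg : Continuous g) : Continuous fun x => WM.Rpa (f x) (g x) := by
  unfold WM.Rpa
  fun_prop

def bb (κ μ : Type) [Fintype κ] [DecidableEq κ] [Fintype μ] [DecidableEq μ] (x : GU ι) :
    GU ((ι ⊕ κ) ⊕ μ) := blk (blk x 1) 1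

lemma bb_mul {μ : Type} [Fintype μ] [DecidableEq μ] (x y : GU ι) :
    bb κ μ (x * y) = bb κ μ x * bb κ μ y := by
  simp [bb, ← blk_mul]
lemma bb_inv {μ : Type} [Fintype μ] [DecidableEq μ] (x : GU ι) :
    (bb κ μ x)⁻¹ = bb κ μ x⁻¹ := by
  simp [bb, blk_inv]
lemma bb_one {μ : Type} [Fintype μ] [DecidableEq μ] : bb κ μ (1 : GU ι) = 1 := by
  simp [bb, blk_one]

@[fun_prop] lemma _root_.Continuous.bb {μ : Type} [Fintype μ] [DecidableEq μ]
    {X : Type} [TopologicalSpace X] {f : X → GU ι}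
    (hf : Continuous f) : Continuous fun x => WM.bb κ μ (f x) := by
  unfold WM.bb
  fun_prop

/-- path1 is good whenever the lifted commutator is -/
lemma good_swap (F : C(I × I × (Circle × Y), GU ι)) (h0 : ∀ r x, F (0, r, x) = 1)
    (h1 : ∀ r x, F (r, 0, x) = 1)
    (hE : ∀ z y, F (1, 1, -z, y) = F (1, 1, z, y))
    (g g' : PP Y ι) (hg : ∀ s x, g (s, x) = F (s, 1, x)) (hg' : ∀ s x, g' (s, x) = F (1, s, x))
    (h : Good g) : Good g' := by
  have key : ∀ q t : I, (1 - (q : ℝ)) + q * t ∈ I := fun q t =>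
    ⟨by nlinarith [q.2.1, q.2.2, t.2.1, t.2.2], by nlinarith [q.2.1, q.2.2, t.2.1, t.2.2]⟩
  let m : C(I × I, I) := ⟨fun p => ⟨(1 - (p.1 : ℝ)) + p.1 * p.2, key p.1 p.2⟩, by fun_prop⟩
  have m0 : ∀ t, m (0, t) = 1 := fun t => Subtype.ext (by simp [m])
  have m1 : ∀ t, m (1, t) = t := fun t => Subtype.ext (by simp [m])
  have m2 : ∀ t, m (t, 1) = 1 := fun t => Subtype.ext (by simp [m])
  have hd : Good (⟨fun p => F (p.1, p.1, p.2), by fun_prop⟩ : PP Y ι) := by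
    refine Good.square ⟨fun p => F (p.2.1, m (p.1, p.2.1), p.2.2), by fun_prop⟩ g _ ?_ ?_ ?_ ?_ h
    · intro r z y
      show F (0, _, _) = F (0, _, _)
      rw [h0, h0]
    · intro r z y
      show F (1, m _, _) = F (1, m _, _)
      rw [m2, hE]
    · intro s x
      show F (s, m _, _) = _
      rw [m0, hg]
    · intro s x
      show F (s, m _, _) = F (s, s, x)
      rw [m1]
  refine Good.square ⟨fun p => F (m (σ p.1, p.2.1), p.2.1, p.2.2), by fun_prop⟩ _ g' ?_ ?_ ?_ ?_ hd
  · intro r z y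
    show F (_, 0, _) = F (_, 0, _)
    rw [h1, h1]
  · intro r z y
    show F (m _, 1, _) = F (m _, 1, _)
    rw [m2, hE]
  · intro s x
    show F (m (σ 0, s), s, x) = F (s, s, x)
    rw [symm_zero, m1]
  · intro s x
    show F (m (σ 1, s), s, x) = _
    rw [symm_one, m0, hg']

lemma fin_gen {G : Type} [Group G] (D ζ R S : G) (h : D = S * ζ⁻¹) :
    S⁻¹ * ((D * R * D⁻¹ * R⁻¹) * (S * R * S⁻¹ * R⁻¹)⁻¹) * S⁻¹⁻¹ = ζ⁻¹ * R * ζ * R⁻¹ := by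
  rw [h]
  group

lemma sq_dg (z : Circle) (b : GU (Fin 2)) : dgU (Circle.toUnits z) (Circle.toUnits z)⁻¹ * b *
    (dgU (Circle.toUnits z) (Circle.toUnits z)⁻¹)⁻¹ =
    dgU (Circle.toUnits (z * z)) 1 * b * (dgU (Circle.toUnits (z * z)) 1)⁻¹ := by
  have h : dgU (Circle.toUnits (z * z)) 1
      = dgU (Circle.toUnits z) (Circle.toUnits z)⁻¹ * scU (Fin 2) z := by
    ext i j
    fin_cases i <;> fin_cases j <;> simp [dgU, scU_val, Matrix.mul_apply, Fin.sum_univ_two,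
      Matrix.algebraMap_matrix_apply]
  rw [h, _root_.mul_inv_rev]
  have := scU_comm z b
  calc _ = dgU (Circle.toUnits z) (Circle.toUnits z)⁻¹ * (b * scU (Fin 2) z) * (scU (Fin 2) z)⁻¹ *
    (dgU (Circle.toUnits z) (Circle.toUnits z)⁻¹)⁻¹ := by group
    _ = _ := by rw [← this]; group

theorem lemmaB {P : Type} [TopologicalSpace P] (xb : C(I × Circle, P))
    (h0 : ∀ z, xb (0, -z) = xb (0, z)) (h1 : ∀ z, xb (1, -z) = xb (1, z))
    (a : C(Y, GU (Fin 2))) (a0 : C(P × Y, GU (Fin 2)))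
    (ha0 : ∀ s z y, a0 (xb (s, z), y) = xd s z * a y * (xd s z)⁻¹ * (a y)⁻¹) (hE : Ev a0) :
    Ev a := by
  obtain ⟨κ, _, _, u, hu⟩ := hE
  obtain ⟨H⟩ : (cblk (cblk a0 (1 : C(P × Y, GU κ))) (1 : C(P × Y, GU (Fin 2 ⊕ κ)))).Homotopic
    (cblk u u) := (cblk_homotopic hu (Homotopic.refl 1)).trans (whitehead u u)
  let v : PP Y (Fin 2 ⊕ κ) := ⟨fun p => u (xb (p.1, p.2.1), p.2.2), by fun_prop⟩
  have hv0 : ∀ z y, v (0, -z, y) = v (0, z, y) := fun z y => by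
    show u (xb _, y) = u (xb _, y)
    rw [h0]
  have hv1 : ∀ z y, v (1, -z, y) = v (1, z, y) := fun z y => by
    show u (xb _, y) = u (xb _, y)
    rw [h1]
  have g1 : Good (⟨fun p => H (1, (xb (p.1, p.2.1), p.2.2)), by fun_prop⟩ :
      PP Y ((Fin 2 ⊕ κ) ⊕ (Fin 2 ⊕ κ))) :=
    good_uu v hv0 hv1 _ fun s z y => by
      show H (1, _) = _
      rw [H.apply_one]
      rfl
  let gH : PP Y ((Fin 2 ⊕ κ) ⊕ (Fin 2 ⊕ κ)) := ⟨fun p => H (0, (xb (p.1, p.2.1), p.2.2)), by fun_prop⟩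
  have g0 : Good gH := by
    refine Good.square ⟨fun p => H (σ p.1, (xb (p.2.1, p.2.2.1), p.2.2.2)), by fun_prop⟩ _ _
      ?_ ?_ ?_ ?_ g1
    · intro r z y
      show H (_, (xb _, y)) = H (_, (xb _, y))
      rw [h0]
    · intro r z y
      show H (_, (xb _, y)) = H (_, (xb _, y))
      rw [h1]
    · intro s x
      show H (σ 0, _) = H (1, _)
      rw [symm_zero]
    · intro s x
      show H (σ 1, _) = H (0, _)
      rw [symm_one]
  have hgH : ∀ s z y, gH (s, z, y) = bb κ (Fin 2 ⊕ κ) (xd s z * a y * (xd s z)⁻¹ * (a y)⁻¹) := by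
    intro s z y
    show H (0, _) = _
    rw [H.apply_zero, ← ha0]
    rfl
  let R : C(I × Y, GU ((Fin 2 ⊕ κ) ⊕ (Fin 2 ⊕ κ))) := ⟨fun p => Rpa (blk (a p.2) 1) p.1, by fun_prop⟩
  have hR0 : ∀ y, R (0, y) = 1 := fun y => Rpa_zero _
  have hR1 : ∀ y, R (1, y) = blk (blk (a y) 1) (blk (a y)⁻¹ 1) := fun y => by
    show Rpa _ 1 = _
    rw [Rpa_one, blk_inv, inv_one]
  have hcm : ∀ x y, bb κ (Fin 2 ⊕ κ) x * R (1, y) * (bb κ (Fin 2 ⊕ κ) x)⁻¹ * (R (1, y))⁻¹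
      = bb κ (Fin 2 ⊕ κ) (x * a y * x⁻¹ * (a y)⁻¹) := fun x y => by
    rw [hR1]
    simp [bb, blk_inv, ← blk_mul, blk_one]
  let F : C(I × I × (Circle × Y), GU ((Fin 2 ⊕ κ) ⊕ (Fin 2 ⊕ κ))) := ⟨fun p =>
    bb κ (Fin 2 ⊕ κ) (xd p.1 p.2.2.1) * R (p.2.1, p.2.2.2) *
      (bb κ (Fin 2 ⊕ κ) (xd p.1 p.2.2.1))⁻¹ * (R (p.2.1, p.2.2.2))⁻¹, by fun_prop⟩
  have hF : ∀ s r z y, F (s, r, z, y) = bb κ (Fin 2 ⊕ κ) (xd s z) * R (r, y) *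
      (bb κ (Fin 2 ⊕ κ) (xd s z))⁻¹ * (R (r, y))⁻¹ := fun _ _ _ _ => rfl
  have hF11 : ∀ z y, F (1, 1, z, y) = gH (1, z, y) := fun z y => by rw [hF, hcm, hgH]
  have gp : Good (⟨fun p => F (1, p.1, p.2), by fun_prop⟩ :
      PP Y ((Fin 2 ⊕ κ) ⊕ (Fin 2 ⊕ κ))) := by
    refine good_swap F ?_ ?_ ?_ gH _ ?_ (fun _ _ => rfl) g0
    · rintro r ⟨z, y⟩
      rw [hF, xd_zero, bb_one]
      simp
    · rintro r ⟨z, y⟩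
      rw [hF, hR0]
      simp
    · intro z y
      rw [hF11, hF11]
      show H (0, (xb _, y)) = H (0, (xb _, y))
      rw [h1]
    · rintro s ⟨z, y⟩
      rw [hF, hcm, hgH]
  have hct := continuous_toUnits
  let S : C(Circle, GU ((Fin 2 ⊕ κ) ⊕ (Fin 2 ⊕ κ))) :=
    ⟨fun z => bb κ (Fin 2 ⊕ κ) (dgU (Circle.toUnits (z * z)) 1), by fun_prop⟩
  have hS : ∀ z, S z = bb κ (Fin 2 ⊕ κ) (dgU (Circle.toUnits (z * z)) 1) := fun z => rfl
  let n : PP Y ((Fin 2 ⊕ κ) ⊕ (Fin 2 ⊕ κ)) :=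
    ⟨fun p => S p.2.1 * R (p.1, p.2.2) * (S p.2.1)⁻¹ * (R (p.1, p.2.2))⁻¹, by fun_prop⟩
  have hn : ∀ t z y, n (t, z, y) = S z * R (t, y) * (S z)⁻¹ * (R (t, y))⁻¹ := fun _ _ _ => rfl
  obtain ⟨f, hf, hT⟩ := gp.rel (g' := n) (fun t z y => by
      rw [hn, hn, hS, hS, neg_mul_neg]) (fun ⟨z, y⟩ => by
      show F (1, 0, z, y) = _
      rw [hF, hn, hR0]; simp) (fun ⟨z, y⟩ => by
      show F (1, 1, z, y) = _
      rw [hF, hn, hS, hcm, hcm, xd_one, sq_dg])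
  let p : Matrix ((Fin 2 ⊕ κ) ⊕ (Fin 2 ⊕ κ)) ((Fin 2 ⊕ κ) ⊕ (Fin 2 ⊕ κ)) ℂ :=
    fromBlocks (fromBlocks 1 0 0 0) 0 0 0
  have hp : p * p = p := by simp [p, fromBlocks_multiply]
  have h1p : 1 - p = fromBlocks (fromBlocks 0 0 0 1) 0 0 1 := by
    rw [sub_eq_iff_eq_add]
    simp [p, fromBlocks_add]
  have hz : ∀ z, zp p hp z = bb κ (Fin 2 ⊕ κ) (scU (Fin 2) z) := by
    intro z
    ext1
    rw [zp_val, h1p]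
    simp [p, bb, scU_val, fromBlocks_add, fromBlocks_smul, Algebra.algebraMap_eq_smul_one]
  let Si : C(XX Y, GU ((Fin 2 ⊕ κ) ⊕ (Fin 2 ⊕ κ))) := ⟨fun x => (S x.2.1)⁻¹, by fun_prop⟩
  have hD : ∀ z : Circle, dgU (Circle.toUnits (z * z)) 1
      = dgU (Circle.toUnits z) (Circle.toUnits z)⁻¹ * scU (Fin 2) z := by
    intro z
    ext i j
    fin_cases i <;> fin_cases j <;> simp [dgU, scU_val, Matrix.mul_apply, Fin.sum_univ_two,
      Matrix.algebraMap_matrix_apply]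
  have hfin := clutching p hp R hR0 (fun y => by
      rw [hR1]
      simp [p, fromBlocks_multiply]) (Si * f * Si⁻¹) (fun t z y => by
      show (S z)⁻¹ * f (_, z, y) * ((S z)⁻¹)⁻¹ = _
      rw [hf, hz, hn]
      show (S z)⁻¹ * (F (1, t, z, y) * _) * _ = _
      rw [hF]
      refine fin_gen _ _ _ _ ?_
      rw [hS, xd_one, hD, bb_mul, mul_inv_cancel_right]) (hT.conj Si)
    (cblk (cblk a 1) 1) (fun y => by
      rw [hR1, h1p]
      simp [p, fromBlocks_multiply, fromBlocks_add])
  exact hfin.of_stab.of_stab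

end LB
end WM

namespace WM
open Matrix ContinuousMap unitInterval Filter Topology

section S
set_option linter.unusedSectionVars false

instance compactU : CompactSpace (Matrix.unitaryGroup (Fin 2) ℂ) := by
  refine (isCompact_iff_compactSpace (s := {A : Matrix (Fin 2) (Fin 2) ℂ | A ∈ Matrix.unitaryGroup (Fin 2) ℂ})).1 ?_
  have hK : IsCompact (Set.pi Set.univ fun _ : Fin 2 => Set.pi Set.univ fun _ : Fin 2 =>
      Metric.closedBall (0 : ℂ) 1) :=
    isCompact_univ_pi fun _ => isCompact_univ_pi fun _ => isCompact_closedBall _ _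
  refine IsCompact.of_isClosed_subset (X := Matrix (Fin 2) (Fin 2) ℂ) hK ?_ ?_
  · simp only [Matrix.mem_unitaryGroup_iff]
    exact isClosed_eq (continuous_id.mul continuous_star) continuous_const
  · intro A hA i _ j _
    rw [mem_closedBall_zero_iff]
    exact entry_norm_bound_of_unitary hA i j

instance compactSU : CompactSpace (SU 2) := by
  have : IsClosed (SU 2 : Set (Matrix.unitaryGroup (Fin 2) ℂ)) :=
    isClosed_eq (Continuous.matrix_det continuous_subtype_val) continuous_const
  exact isCompact_iff_compactSpace.1 this.isCompact

/-- inclusion in the general linear group -/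
noncomputable def tau : SU 2 →* GU (Fin 2) := Unitary.toUnits.comp (SU 2).subtype

lemma tau_val (g : SU 2) : (tau g).val = (g : Matrix.unitaryGroup (Fin 2) ℂ).1 := rfl

@[fun_prop] lemma continuous_tau : Continuous tau := by
  rw [Units.continuous_iff]
  have h : Continuous fun g : SU 2 => (tau g).val :=
    continuous_subtype_val.comp continuous_subtype_val
  refine ⟨h, ?_⟩
  have : (fun g => ((tau g)⁻¹).val) = fun g : SU 2 => (tau g⁻¹).val := by
    ext1 g; rw [map_inv]
  exact this ▸ h.comp continuous_inv

lemma tau_inj : Function.Injective tau := fun g h hgh => by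
  apply Subtype.ext
  apply Subtype.ext
  exact congrArg Units.val hgh

/-- kernel of the conjugation action -/
noncomputable def NN0 : Subgroup (SU 2) := (Subgroup.center (GU (Fin 2))).comap tau

instance : NN0.Normal := by unfold NN0; infer_instance

lemma mem_NN0 {g : SU 2} : g ∈ NN0 ↔ ∀ a : GU (Fin 2), a * tau g = tau g * a := by
  rw [NN0, Subgroup.mem_comap, Subgroup.mem_center_iff]

lemma NN0_center {g : SU 2} (h : g ∈ NN0) : g ∈ Subgroup.center (SU 2) := by
  rw [Subgroup.mem_center_iff]
  intro a
  apply tau_inj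
  rw [map_mul, map_mul]
  exact mem_NN0.1 h _

instance closedN : IsClosed (NN0 : Set (SU 2)) := by
  have : (NN0 : Set (SU 2)) = ⋂ a : GU (Fin 2), {g | a * tau g = tau g * a} := by
    ext g; simp [mem_NN0]
  rw [this]
  exact isClosed_iInter fun a => isClosed_eq (by fun_prop) (by fun_prop)

abbrev PQ := SU 2 ⧸ NN0


lemma PQ_eq {g h : SU 2} : (g : PQ) = h ↔ g⁻¹ * h ∈ NN0 := QuotientGroup.eq

/-- conjugation descends -/
lemma cj_exists : ∃ c : C(PQ × GU (Fin 2), GU (Fin 2)), ∀ (g : SU 2) a, c ((g : PQ), a) = tau g * a * (tau g)⁻¹ := by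
  have hq : IsOpenQuotientMap (Prod.map (QuotientGroup.mk : SU 2 → PQ) (id : GU (Fin 2) → GU (Fin 2))) :=
    QuotientGroup.isOpenQuotientMap_mk.prodMap IsOpenQuotientMap.id
  let f : C(SU 2 × GU (Fin 2), GU (Fin 2)) := ⟨fun p => tau p.1 * p.2 * (tau p.1)⁻¹, by fun_prop⟩
  let q : C(SU 2 × GU (Fin 2), PQ × GU (Fin 2)) := ⟨_, hq.continuous⟩
  have hQ : IsQuotientMap q := hq.isQuotientMap
  have hf : Function.FactorsThrough f q := by
    rintro ⟨g, a⟩ ⟨h, b⟩ e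
    have e1 : (g : PQ) = h := congrArg Prod.fst e
    have e2 : a = b := congrArg Prod.snd e
    subst e2
    show tau g * a * (tau g)⁻¹ = tau h * a * (tau h)⁻¹
    have h1 := mem_NN0.1 (PQ_eq.1 e1) a
    rw [map_mul, map_inv] at h1
    have h2 : tau h * a * (tau h)⁻¹ = tau g * ((tau g)⁻¹ * tau h * a) * (tau h)⁻¹ := by group
    rw [h2, ← h1]
    group
  exact ⟨hQ.lift f hf, fun g a => DFunLike.congr_fun (hQ.lift_comp f hf) (g, a)⟩

noncomputable def cj : C(PQ × GU (Fin 2), GU (Fin 2)) := cj_exists.choose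
lemma cj_apply (g : SU 2) (a : GU (Fin 2)) : cj ((g : PQ), a) = tau g * a * (tau g)⁻¹ :=
  cj_exists.choose_spec g a

/-! elements of SU(2) -/
lemma mkSU_exists {X : Type} [TopologicalSpace X] (f : X → GU (Fin 2)) (hf : Continuous f)
    (h1 : ∀ x, (f x).val * star (f x).val = 1) (h2 : ∀ x, (f x).val.det = 1) :
    ∃ g : C(X, SU 2), ∀ x, tau (g x) = f x := by
  refine ⟨⟨fun x => ⟨⟨(f x).val, Matrix.mem_unitaryGroup_iff.2 (h1 x)⟩, h2 x⟩, ?_⟩, fun x => ?_⟩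
  · exact Continuous.subtype_mk (Continuous.subtype_mk (Units.continuous_val.comp hf) _) _
  · ext1; rfl

/-- the unitary subgroup of `GU` -/
def uSub : Subgroup (GU (Fin 2)) where
  carrier := {g | g.val * star g.val = 1}
  one_mem' := by simp
  mul_mem' {a b} ha hb := by
    show (a.val * b.val) * star (a.val * b.val) = 1
    rw [star_mul]
    calc a.val * b.val * (star b.val * star a.val) = a.val * (b.val * star b.val) * star a.val := by
          simp only [mul_assoc]
      _ = 1 := by rw [show b.val * star b.val = 1 from hb, mul_one]; exact ha
  inv_mem' {a} ha := by
    show a⁻¹.val * star a⁻¹.val = 1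
    have h : star a.val = a⁻¹.val := by
      have ha' : a.val * star a.val = 1 := ha
      calc star a.val = a⁻¹.val * (a.val * star a.val) := by rw [← mul_assoc]; simp
        _ = _ := by rw [ha', mul_one]
    rw [← h, star_star, h]
    simp

lemma mem_uSub {a : GU (Fin 2)} : a ∈ uSub ↔ a.val * star a.val = 1 := Iff.rfl

lemma dgU_uSub (z w : Circle) : dgU (Circle.toUnits z) (Circle.toUnits w) ∈ uSub := by
  rw [mem_uSub]
  ext i j
  fin_cases i <;> fin_cases j <;>
    simp [dgU, Matrix.mul_apply, Fin.sum_univ_two, Matrix.star_apply, Complex.mul_conj]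

lemma gs_uSub (θ : ℝ) : gs θ ∈ uSub := by
  rw [mem_uSub]
  have h : star (gs θ).val = gsM (-θ) := by
    ext i j
    fin_cases i <;> fin_cases j <;> simp [gs, gsM, Matrix.star_apply, ← Complex.ofReal_cos, ← Complex.ofReal_sin]
  rw [h]
  show gsM θ * gsM (-θ) = 1
  simp [gsM_mul, gsM_zero]

lemma det_comm (a b : GU (Fin 2)) : (a * b * a⁻¹ * b⁻¹).val.det = 1 := by
  have : (Units.map (Matrix.detMonoidHom (n := Fin 2) (R := ℂ))) (a * b * a⁻¹ * b⁻¹) = 1 := by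
    simp only [map_mul, map_inv]
    rw [mul_comm (Units.map _ a)]
    group
  exact congrArg Units.val this

lemma xb_exists : ∃ x : C(I × Circle, SU 2), ∀ s z, tau (x (s, z)) = xd s z := by
  have h1 : ∀ p : I × Circle, (xd p.1 p.2).val * star (xd p.1 p.2).val = 1 := fun p => by
    have := dgU_uSub p.2 1
    rw [map_one] at this
    exact uSub.mul_mem (uSub.mul_mem (uSub.mul_mem this (gs_uSub _)) (uSub.inv_mem this))
      (uSub.inv_mem (gs_uSub _))
  have h2 : ∀ p : I × Circle, (xd p.1 p.2).val.det = 1 := fun p => det_comm _ _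
  obtain ⟨g, hg⟩ := mkSU_exists (fun p : I × Circle => xd p.1 p.2) (by fun_prop) h1 h2
  exact ⟨g, fun s z => hg (s, z)⟩

lemma dc_exists : ∃ D : C(Circle, SU 2), ∀ z, tau (D z) = dgU (Circle.toUnits z) (Circle.toUnits z)⁻¹ := by
  refine mkSU_exists _ ?_ (fun z => ?_) (fun z => ?_)
  · have := continuous_toUnits
    fun_prop
  · have := dgU_uSub z z⁻¹
    rw [map_inv] at this
    exact this
  · simp [dgU]

noncomputable def DD : C(Circle, SU 2) := dc_exists.choose
lemma DD_tau (z : Circle) : tau (DD z) = dgU (Circle.toUnits z) (Circle.toUnits z)⁻¹ :=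
  dc_exists.choose_spec z

lemma dg_neg (z : Circle) : dgU (Circle.toUnits (-z)) (Circle.toUnits (-z))⁻¹
    = - dgU (Circle.toUnits z) (Circle.toUnits z)⁻¹ := by
  ext i j
  fin_cases i <;> fin_cases j <;> simp [dgU]

lemma PQ_neg {g h : SU 2} (e : tau g = - tau h) : (g : PQ) = h := by
  rw [PQ_eq, mem_NN0]
  intro a
  rw [map_mul, map_inv, e]
  simp

noncomputable def xbar : C(I × Circle, PQ) :=
  (⟨QuotientGroup.mk, QuotientGroup.continuous_mk⟩ : C(SU 2, PQ)).comp xb_exists.choose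

lemma xbar_eq (s : I) (z : Circle) : ∃ g : SU 2, xbar (s, z) = (g : PQ) ∧ tau g = xd s z :=
  ⟨xb_exists.choose (s, z), rfl, xb_exists.choose_spec s z⟩

lemma xbar_zero (z : Circle) : xbar (0, -z) = xbar (0, z) := by
  obtain ⟨g, hg, hg'⟩ := xbar_eq 0 z
  obtain ⟨h, hh, hh'⟩ := xbar_eq 0 (-z)
  rw [hg, hh]
  congr 1
  apply tau_inj
  rw [hg', hh', xd_zero, xd_zero]

lemma xbar_one (z : Circle) : xbar (1, -z) = xbar (1, z) := by
  obtain ⟨g, hg, hg'⟩ := xbar_eq 1 z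
  obtain ⟨h, hh, hh'⟩ := xbar_eq 1 (-z)
  rw [hg, hh]
  exact PQ_neg (by rw [hg', hh', xd_one, xd_one, dg_neg])

/-- the map from the circle of diagonal matrices -/
lemma delta_exists : ∃ d : C(Circle, PQ), ∀ z, d (z * z) = (DD z : PQ) := by
  let q : C(Circle, Circle) := ⟨fun z => z * z, by fun_prop⟩
  have hq : Function.Surjective q := fun z => by
    obtain ⟨θ, rfl⟩ : ∃ θ, Circle.exp θ = z := ⟨_, Circle.exp_arg z⟩
    refine ⟨Circle.exp (θ / 2), ?_⟩
    show Circle.exp (θ / 2) * Circle.exp (θ / 2) = _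
    rw [← Circle.exp_add]
    congr 1; ring
  have hQ : IsQuotientMap q := q.continuous.isClosedMap.isQuotientMap q.continuous hq
  let f : C(Circle, PQ) := (⟨QuotientGroup.mk, QuotientGroup.continuous_mk⟩ : C(SU 2, PQ)).comp DD
  have hf : Function.FactorsThrough f q := by
    intro z w e
    have e' : (z : ℂ) * z = w * w := congrArg ((↑) : Circle → ℂ) e
    rcases mul_self_eq_mul_self_iff.1 e' with h | h
    · rw [Circle.ext h]
    · have : z = -w := Circle.ext h
      subst this
      show ((DD (-w) : SU 2) : PQ) = (DD w : PQ)
      exact PQ_neg (by rw [DD_tau, DD_tau, dg_neg])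
  exact ⟨hQ.lift f hf, fun z => DFunLike.congr_fun (hQ.lift_comp f hf) z⟩

end S
end WM

namespace WM
open Matrix ContinuousMap unitInterval Filter Topology

section Z
set_option linter.unusedSectionVars false

/-- the tower of commutators -/
noncomputable def Ct : (m : ℕ) → C((Fin m → PQ) × Circle, GU (Fin 2))
  | 0 => dz.comp ⟨Prod.snd, continuous_snd⟩
  | m + 1 => ⟨fun p => cj (p.1 (Fin.last m), Ct m (fun i => p.1 i.castSucc, p.2)) *
      (Ct m (fun i => p.1 i.castSucc, p.2))⁻¹, by fun_prop⟩

lemma Ct_succ (m : ℕ) (p : Fin (m + 1) → PQ) (z : Circle) :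
    Ct (m + 1) (p, z) = cj (p (Fin.last m), Ct m (fun i => p i.castSucc, z)) *
      (Ct m (fun i => p i.castSucc, z))⁻¹ := rfl

lemma Ct_descend (m : ℕ) (h : Ev (Ct (m + 1))) : Ev (Ct m) := by
  let e : C(PQ × ((Fin m → PQ) × Circle), (Fin (m + 1) → PQ) × Circle) :=
    ⟨fun p => (Fin.snoc (α := fun _ => PQ) p.2.1 p.1, p.2.2), by fun_prop⟩
  refine lemmaB xbar xbar_zero xbar_one (Ct m) ((Ct (m + 1)).comp e) ?_ (h.pull e)
  rintro s z ⟨p, z'⟩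
  obtain ⟨g, hg, hg'⟩ := xbar_eq s z
  show Ct (m + 1) (Fin.snoc (α := fun _ => PQ) p (xbar (s, z)), z') = _
  rw [Ct_succ]
  simp only [Fin.snoc_last, Fin.snoc_castSucc]
  rw [hg, cj_apply, hg']

lemma not_ev_Ct (m : ℕ) : ¬ Ev (Ct m) := by
  induction m with
  | zero =>
    intro h
    exact not_ev_dz (h.pull (⟨fun z => (Fin.elim0, z), by fun_prop⟩ : C(Circle, (Fin 0 → PQ) × Circle)))
  | succ m ih => exact fun h => ih (Ct_descend m h)

lemma Ct_eq (m : ℕ) (g : Fin m → SU 2) (c : Circle) :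
    ∃ s : GU (Fin 2), (∀ a, s * a = a * s) ∧ Ct m (fun i => (g i : PQ), c * c)
      = tau (iteratedCommutator (m + 1) (Fin.cons (α := fun _ => SU 2) (DD c) g)) * s ∧
      (1 ≤ m → s = 1) := by
  induction m with
  | zero =>
    refine ⟨scU _ c, scU_comm c, ?_, by simp⟩
    show dgU (Circle.toUnits (c * c)) 1 = tau (DD c) * _
    rw [DD_tau]
    ext i j
    fin_cases i <;> fin_cases j <;> simp [dgU, scU_val, Matrix.mul_apply, Fin.sum_univ_two,
      Matrix.algebraMap_matrix_apply]
  | succ m ih =>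
    obtain ⟨s, hs, e, -⟩ := ih (fun i => g i.castSucc)
    refine ⟨1, by simp, ?_, fun _ => rfl⟩
    rw [Ct_succ, e, cj_apply]
    have h1 : (Fin.cons (α := fun _ => SU 2) (DD c) g) (Fin.last (m + 1)) = g (Fin.last m) := by
      rw [← Fin.succ_last, Fin.cons_succ]
    have h2 : (fun i : Fin (m + 1) => (Fin.cons (α := fun _ => SU 2) (DD c) g : Fin (m + 2) → SU 2) i.castSucc)
        = Fin.cons (α := fun _ => SU 2) (DD c) (fun i => g i.castSucc) := by
      ext1 i
      refine Fin.cases ?_ (fun j => ?_) i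
      · simp
      · rw [← Fin.succ_castSucc, Fin.cons_succ, Fin.cons_succ]
    have h3 : iteratedCommutator (m + 2) (Fin.cons (α := fun _ => SU 2) (DD c) g)
        = g (Fin.last m) * iteratedCommutator (m + 1) (Fin.cons (α := fun _ => SU 2) (DD c) (fun i => g i.castSucc)) *
          (g (Fin.last m))⁻¹ * (iteratedCommutator (m + 1) (Fin.cons (α := fun _ => SU 2) (DD c) (fun i => g i.castSucc)))⁻¹ := by
      rw [← h2, ← h1]
      rfl
    rw [h3]
    simp only [map_mul, map_inv, mul_one]
    generalize tau (iteratedCommutator (m + 1) _) = b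
    generalize tau (g (Fin.last m)) = a
    have : a * (b * s) * a⁻¹ * (b * s)⁻¹ = a * b * (s * a⁻¹) * s⁻¹ * b⁻¹ := by group
    rw [this, hs]
    group

/-! ### path connectedness -/
lemma const_homotopic {X ι : Type} [TopologicalSpace X] [Fintype ι] [DecidableEq ι] (h : GU ι) :
    ∃ γ : C(I, GU ι), γ 0 = h ∧ γ 1 = 1 := by
  let p : Polynomial ℂ := (Matrix.det ((1 : Matrix ι ι (Polynomial ℂ)) +
    (Polynomial.X : Polynomial ℂ) • (h.val - 1).map Polynomial.C))
  have hp : ∀ z, p.eval z = (1 + z • (h.val - 1)).det := by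
    intro z
    show (Polynomial.evalRingHom z) (Matrix.det _) = _
    rw [RingHom.map_det]
    congr 1
    ext i j
    by_cases hij : i = j
    · simp [Matrix.one_apply, hij] <;> ring
    · simp [Matrix.one_apply, hij] <;> ring
  have hp0 : p ≠ 0 := fun h0 => by
    have := hp 0
    rw [h0] at this
    simp at this
  have hc : (p.rootSet ℂ).Countable := (p.rootSet_finite ℂ).countable
  have hmem : ∀ z, z ∈ (p.rootSet ℂ)ᶜ ↔ (1 + z • (h.val - 1)).det ≠ 0 := by
    intro z
    rw [Set.mem_compl_iff, Polynomial.mem_rootSet]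
    simp [hp0, hp]
  have hpc := hc.isPathConnected_compl_of_one_lt_rank (by rw [Complex.rank_real_complex]; norm_num)
  obtain ⟨γ, hγ⟩ := hpc.joinedIn 1 ((hmem 1).2 (by
      rw [one_smul, add_sub_cancel]
      exact ((Matrix.isUnit_iff_isUnit_det _).1 h.isUnit).ne_zero)) 0 ((hmem 0).2 (by simp))
  obtain ⟨u, hu⟩ := exists_unitMap (f := fun t : I => 1 + γ t • (h.val - 1)) (by fun_prop) (fun t =>
    (Matrix.isUnit_iff_isUnit_det _).2 (isUnit_iff_ne_zero.2 ((hmem _).1 (hγ t))))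
  refine ⟨u, ?_, ?_⟩
  · ext1
    rw [hu]
    simp
  · ext1
    rw [hu]
    simp

lemma ev_const {X : Type} [TopologicalSpace X] (h : GU (Fin 2)) :
    Ev (ContinuousMap.const X h) := by
  obtain ⟨γ, h0, h1⟩ := const_homotopic (X := X) h
  refine Ev.one.congr ⟨⟨⟨fun p => γ p.1, by fun_prop⟩, fun x => ?_, fun x => ?_⟩⟩
  · simpa using h0
  · simpa using h1

/-- segment argument -/
lemma su_tr (U : SU 2) (hU : U ≠ 1) (t : ℝ) (h0 : 0 ≤ t) (h1 : t ≤ 1) :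
    ((1 - (t : ℂ)) • (tau U).val + (t : ℂ) • (-1 : Matrix (Fin 2) (Fin 2) ℂ)).det ≠ 0 := by
  set A := (tau U).val with hA
  have hdet : A.det = 1 := U.2
  have hu : A * star A = 1 := Matrix.mem_unitaryGroup_iff.1 U.1.2
  have hu' : star A = A.adjugate := by
    have : A.adjugate * (A * star A) = A.adjugate := by rw [hu, mul_one]
    rw [← mul_assoc, adjugate_mul, hdet, one_smul, one_mul] at this
    exact this
  have e00 : (starRingEnd ℂ) (A 0 0) = A 1 1 := by
    have := congrFun (congrFun hu' 0) 0
    simpa [Matrix.star_apply, adjugate_fin_two] using this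
  have e10 : (starRingEnd ℂ) (A 1 0) = - A 0 1 := by
    have := congrFun (congrFun hu' 0) 1
    simpa [Matrix.star_apply, adjugate_fin_two] using this
  rw [det_fin_two] at hdet ⊢
  have e01 : A 0 1 = - (starRingEnd ℂ) (A 1 0) := by rw [e10, neg_neg]
  have hn : (A 0 0).re ^ 2 + (A 0 0).im ^ 2 + ((A 1 0).re ^ 2 + (A 1 0).im ^ 2) = 1 := by
    rw [← e00, e01] at hdet
    have := congrArg Complex.re hdet
    simp at this
    linarith
  have hlt : (A 0 0).re < 1 := by
    by_contra hcon
    apply hU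
    apply tau_inj
    rw [map_one]
    have a0 : (A 0 0).re = 1 := by nlinarith [sq_nonneg (A 0 0).im, sq_nonneg (A 1 0).re, sq_nonneg (A 1 0).im]
    have a1 : (A 0 0).im = 0 := by nlinarith [sq_nonneg (A 0 0).im, sq_nonneg (A 1 0).re, sq_nonneg (A 1 0).im]
    have a2 : (A 1 0).re = 0 := by nlinarith [sq_nonneg (A 0 0).im, sq_nonneg (A 1 0).re, sq_nonneg (A 1 0).im]
    have a3 : (A 1 0).im = 0 := by nlinarith [sq_nonneg (A 0 0).im, sq_nonneg (A 1 0).re, sq_nonneg (A 1 0).im]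
    have b0 : A 0 0 = 1 := Complex.ext (by simpa using a0) (by simpa using a1)
    have b1 : A 1 0 = 0 := Complex.ext (by simpa using a2) (by simpa using a3)
    have b2 : A 0 1 = 0 := by rw [e01, b1]; simp
    have b3 : A 1 1 = 1 := by rw [← e00, b0]; simp
    ext i j
    rw [← hA]
    fin_cases i <;> fin_cases j <;> simp [b0, b1, b2, b3]
  intro h
  simp only [Matrix.add_apply, Matrix.smul_apply, Matrix.neg_apply, Matrix.one_apply, smul_eq_mul] at h
  simp at h
  rw [← e00, e01] at h
  have := congrArg Complex.re h
  simp [-Complex.ofReal_sub] at this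
  have key : (1 - t) ^ 2 - 2 * t * (1 - t) * (A 0 0).re + t ^ 2 = 0 := by
    have : (1 - t) ^ 2 * ((A 0 0).re ^ 2 + (A 0 0).im ^ 2 + ((A 1 0).re ^ 2 + (A 1 0).im ^ 2))
      - 2 * t * (1 - t) * (A 0 0).re + t ^ 2 = 0 := by linarith
    rwa [hn, mul_one] at this
  rcases h0.eq_or_lt with rfl | ht0
  · norm_num at key
  rcases h1.eq_or_lt with rfl | ht1
  · norm_num at key
  have : 0 < t * (1 - t) * (1 - (A 0 0).re) := by
    have := sub_pos.2 ht1
    have := sub_pos.2 hlt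
    positivity
  nlinarith [sq_nonneg (1 - 2 * t)]

/-! ### words -/
lemma lift_central {n : ℕ} (c : Fin n → SU 2) (hc : ∀ i, c i ∈ NN0) (x : FreeGroup (Fin n)) :
    FreeGroup.lift c x ∈ NN0 := by
  induction x using FreeGroup.induction_on with
  | C1 => rw [map_one]; exact NN0.one_mem
  | of i => rw [FreeGroup.lift_apply_of]; exact hc i
  | inv_of i h => rw [map_inv]; exact NN0.inv_mem h
  | mul x y hx hy => rw [map_mul]; exact NN0.mul_mem hx hy

lemma lift_mul {n : ℕ} (g c : Fin n → SU 2) (hc : ∀ i, c i ∈ NN0) (x : FreeGroup (Fin n)) :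
    FreeGroup.lift (g * c) x = FreeGroup.lift g x * FreeGroup.lift c x := by
  have hZ : ∀ x, ∀ a, a * FreeGroup.lift c x = FreeGroup.lift c x * a := fun x =>
    Subgroup.mem_center_iff.1 (NN0_center (lift_central c hc x))
  induction x using FreeGroup.induction_on with
  | C1 => simp
  | of i => simp
  | inv_of i h => rw [map_inv, h, _root_.mul_inv_rev, map_inv, map_inv, ← map_inv (FreeGroup.lift c), hZ]
  | mul x y hx hy =>
    rw [map_mul, hx, hy, map_mul, map_mul]
    have := hZ x (FreeGroup.lift g y)
    simp only [mul_assoc]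
    rw [← mul_assoc (FreeGroup.lift c x), ← this, mul_assoc]

lemma continuous_lift {n : ℕ} (x : FreeGroup (Fin n)) :
    Continuous fun g : Fin n → SU 2 => FreeGroup.lift g x := by
  induction x using FreeGroup.induction_on with
  | C1 => simp only [map_one]; fun_prop
  | of i => simp only [FreeGroup.lift_apply_of]; fun_prop
  | inv_of i h => simp only [map_inv]; fun_prop
  | mul x y hx hy => simp only [map_mul]; fun_prop

lemma word_homotopy {n : ℕ} (w : Monoid.Coprod (SU 2) (FreeGroup (Fin n))) :
    ∃ Γ : C(I × (Fin n → SU 2), GU (Fin 2)),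
      (∀ g, Γ (0, g) = tau (Monoid.Coprod.lift (MonoidHom.id (SU 2)) (FreeGroup.lift g) w)) ∧
      (∀ g, Γ (1, g) = tau (FreeGroup.lift g (Monoid.Coprod.lift (1 : SU 2 →* FreeGroup (Fin n))
        (MonoidHom.id (FreeGroup (Fin n))) w))) ∧
      ∀ t g c, (∀ i, c i ∈ NN0) → Γ (t, g * c) = Γ (t, g) *
        tau (FreeGroup.lift c (Monoid.Coprod.lift (1 : SU 2 →* FreeGroup (Fin n))
        (MonoidHom.id (FreeGroup (Fin n))) w)) := by
  induction w using Monoid.Coprod.induction_on with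
  | inl h =>
    obtain ⟨γ, h0, h1⟩ := const_homotopic (X := Unit) (tau h)
    refine ⟨⟨fun p => γ p.1, by fun_prop⟩, fun g => ?_, fun g => ?_, fun t g c hc => ?_⟩
    · simpa using h0
    · simpa using h1
    · simp
  | inr x =>
    have := continuous_lift x
    refine ⟨⟨fun p => tau (FreeGroup.lift p.2 x), by fun_prop⟩, fun g => ?_, fun g => ?_, fun t g c hc => ?_⟩
    · simp
    · simp
    · simp [lift_mul g c hc]
  | mul x y hx hy =>
    obtain ⟨Γ, h0, h1, h2⟩ := hx
    obtain ⟨Δ, k0, k1, k2⟩ := hy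
    refine ⟨Γ * Δ, fun g => ?_, fun g => ?_, fun t g c hc => ?_⟩
    · simp only [ContinuousMap.mul_apply, h0, k0, map_mul]
    · simp only [ContinuousMap.mul_apply, h1, k1, map_mul]
    · simp only [ContinuousMap.mul_apply, h2 t g c hc, k2 t g c hc, map_mul]
      have := mem_NN0.1 (lift_central c hc (Monoid.Coprod.lift (1 : SU 2 →* FreeGroup (Fin n))
        (MonoidHom.id (FreeGroup (Fin n))) x)) (Δ (t, g))
      simp only [mul_assoc]
      congr 1
      rw [← mul_assoc, ← this, mul_assoc]

lemma map_itC {G H : Type*} [Group G] [Group H] (f : G →* H) (n : ℕ) (g : Fin n → G) :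
    f (iteratedCommutator n g) = iteratedCommutator n (fun i => f (g i)) := by
  induction n with
  | zero => exact map_one f
  | succ n ih =>
    cases n with
    | zero => rfl
    | succ n =>
      rw [iteratedCommutator, iteratedCommutator]
      simp only [map_mul, map_inv, ih]

theorem main (m : ℕ) (w : Monoid.Coprod (SU 2) (FreeGroup (Fin (m + 2))))
    (hw : Monoid.Coprod.lift (1 : SU 2 →* FreeGroup (Fin (m + 2)))
        (MonoidHom.id (FreeGroup (Fin (m + 2)))) w
      = iteratedCommutator (m + 2) (fun i => FreeGroup.of i)) :
    Function.Surjective (fun g : Fin (m + 2) → SU 2 =>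
        Monoid.Coprod.lift (MonoidHom.id (SU 2)) (FreeGroup.lift g) w) := by
  intro h
  by_contra hcon
  push Not at hcon
  obtain ⟨Γ, h0, h1, h2⟩ := word_homotopy w
  rw [hw] at h1 h2
  have hi : ∀ g : Fin (m + 2) → SU 2, FreeGroup.lift g (iteratedCommutator (m + 2) (fun i => FreeGroup.of i))
      = iteratedCommutator (m + 2) g := fun g => by
    rw [map_itC]
    simp
  have hinv : ∀ t g c, (∀ i, c i ∈ NN0) → Γ (t, g * c) = Γ (t, g) := fun t g c hc => by
    rw [h2 t g c hc, hi, iteratedCommutator]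
    have := Subgroup.mem_center_iff.1 (NN0_center (hc (Fin.last (m + 1))))
    rw [← this]
    simp
  -- descend
  let pr : (Fin (m + 2) → SU 2) → (Fin (m + 2) → PQ) := Pi.map fun _ => QuotientGroup.mk
  have hpr : IsOpenQuotientMap pr := IsOpenQuotientMap.piMap fun _ => QuotientGroup.isOpenQuotientMap_mk
  have hq : IsOpenQuotientMap (Prod.map (id : I → I) pr) := IsOpenQuotientMap.id.prodMap hpr
  let q : C(I × (Fin (m + 2) → SU 2), I × (Fin (m + 2) → PQ)) := ⟨_, hq.continuous⟩
  have hQ : IsQuotientMap q := hq.isQuotientMap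
  have hf : Function.FactorsThrough Γ q := by
    rintro ⟨t, g⟩ ⟨t', g'⟩ e
    have e1 : t = t' := congrArg Prod.fst e
    have e2 : pr g = pr g' := congrArg Prod.snd e
    subst e1
    have e3 : g' = g * (g⁻¹ * g') := by group
    rw [e3, hinv t g _ fun i => ?_]
    exact PQ_eq.1 (congrFun e2 i)
  let K := hQ.lift Γ hf
  have hK : ∀ t g, K (t, pr g) = Γ (t, g) := fun t g => DFunLike.congr_fun (hQ.lift_comp Γ hf) (t, g)
  let W : C(Fin (m + 2) → PQ, GU (Fin 2)) := ⟨fun p => K (0, p), by fun_prop⟩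
  let C' : C(Fin (m + 2) → PQ, GU (Fin 2)) := ⟨fun p => K (1, p), by fun_prop⟩
  have hWC : C'.Homotopic W := Homotopic.symm ⟨⟨K, fun _ => rfl, fun _ => rfl⟩⟩
  have hW : W.Homotopic (ContinuousMap.const _ (-tau h)) := by
    refine homotopic_of_segment fun t p => ?_
    obtain ⟨g, rfl⟩ := hpr.surjective p
    show IsUnit ((1 - ((t : ℝ) : ℂ)) • (K (0, pr g)).val + ((t : ℝ) : ℂ) • (-tau h).val)
    rw [hK, h0]
    set v := Monoid.Coprod.lift (MonoidHom.id (SU 2)) (FreeGroup.lift g) w with hv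
    have hne : h⁻¹ * v ≠ 1 := fun e => hcon g (inv_mul_eq_one.1 e).symm
    have hd := su_tr (h⁻¹ * v) hne t t.2.1 t.2.2
    have : (1 - ((t : ℝ) : ℂ)) • (tau v).val + ((t : ℝ) : ℂ) • (-tau h).val
        = (tau h).val * ((1 - ((t : ℝ) : ℂ)) • (tau (h⁻¹ * v)).val + ((t : ℝ) : ℂ) • (-1)) := by
      rw [mul_add, mul_smul_comm, mul_smul_comm, ← Units.val_mul, ← map_mul, mul_inv_cancel_left]
      simp
    rw [this]
    exact (tau h).isUnit.mul ((Matrix.isUnit_iff_isUnit_det _).2 (isUnit_iff_ne_zero.2 hd))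
  have hEv : Ev C' := ((ev_const _).congr hW).congr hWC
  obtain ⟨d, hd⟩ := delta_exists
  let E : C((Fin (m + 1) → PQ) × Circle, Fin (m + 2) → PQ) :=
    ⟨fun p => Fin.cons (α := fun _ => PQ) (d p.2) p.1, by fun_prop⟩
  have hE : C'.comp E = Ct (m + 1) := by
    ext1 ⟨p, z⟩
    obtain ⟨c, rfl⟩ : ∃ c : Circle, c * c = z := by
      obtain ⟨θ, rfl⟩ : ∃ θ, Circle.exp θ = z := ⟨_, Circle.exp_arg z⟩
      exact ⟨Circle.exp (θ / 2), by rw [← Circle.exp_add]; congr 1; ring⟩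
    choose g hg using fun i => QuotientGroup.mk_surjective (p i)
    obtain rfl : (fun i => (g i : PQ)) = p := funext hg
    obtain ⟨s, -, e, hs⟩ := Ct_eq (m + 1) g c
    rw [e, hs (by omega), mul_one]
    show K (1, Fin.cons (α := fun _ => PQ) (d (c * c)) fun i => (g i : PQ)) = _
    have : (Fin.cons (α := fun _ => PQ) (d (c * c)) fun i => (g i : PQ))
        = pr (Fin.cons (α := fun _ => SU 2) (DD c) g) := by
      rw [hd]
      ext1 i
      refine Fin.cases ?_ (fun j => ?_) i <;> simp [pr]
    rw [this, hK, h1, hi]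
  exact not_ev_Ct (m + 1) (hE ▸ hEv.pull E)

end Z
end WM

/-- Let `n ≥ 2` and let `w ∈ SU(2) ∗ Fₙ` be a word whose content is the iterated
commutator `cₙ ∈ Fₙ`. Then the word map `SU(2)ⁿ → SU(2)` associated with `w` is
surjective; in particular the equation `w(g₁, …, gₙ) = 1` can be solved in `SU(2)`. -/
theorem wordMap_surjective_of_content_eq_iteratedCommutator
    (n : ℕ) (hn : 2 ≤ n)
    (w : Monoid.Coprod (SU 2) (FreeGroup (Fin n)))
    (hw : Monoid.Coprod.lift (1 : SU 2 →* FreeGroup (Fin n))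
        (MonoidHom.id (FreeGroup (Fin n))) w
      = iteratedCommutator n (fun i => FreeGroup.of i)) :
    Function.Surjective (fun g : Fin n → SU 2 =>
        Monoid.Coprod.lift (MonoidHom.id (SU 2)) (FreeGroup.lift g) w) ∧
    ∃ g : Fin n → SU 2,
        Monoid.Coprod.lift (MonoidHom.id (SU 2)) (FreeGroup.lift g) w = 1 := by
  obtain ⟨m, rfl⟩ : ∃ m, n = m + 2 := ⟨n - 2, by omega⟩
  have h := WM.main m w hw
  exact ⟨h, h 1⟩
end

section
/- For every k ∈ ℕ and every neighborhood V ⊆ SU(k) of the identity matrix, there exists a nontrivial element w ∈ F₂, w ≠ e, such that the image of the word map SU(k) × SU(k) → SU(k) associated with w is contained in V. -/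
namespace WordAux

open scoped Matrix.Norms.L2Operator commutatorElement

/-- The letter inverse to `s`. -/
def flipLetter (s : Fin 2 × Bool) : Fin 2 × Bool := (s.1, !s.2)

lemma exists_letter : ∀ (i : Fin 2) (a b : Fin 2 × Bool), ∃ s : Fin 2 × Bool,
    (i = s.1 → true = s.2) ∧ (s.1 = a.1 → s.2 = a.2) ∧
    (b.1 = s.1 → b.2 = !s.2) := by
  decide

lemma exists_conj (i : Fin 2) (u : FreeGroup (Fin 2)) (hu : u ≠ 1) :
    ∃ (g : FreeGroup (Fin 2)) (L : List (Fin 2 × Bool)),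
      (g * u * g⁻¹).toWord = (i, true) :: (L ++ [(i, false)]) := by
  have hM : u.toWord ≠ [] := by rwa [Ne, FreeGroup.toWord_eq_nil_iff]
  have hred : FreeGroup.IsReduced u.toWord := FreeGroup.isReduced_toWord
  obtain ⟨s, h1, h2, h3⟩ := exists_letter i (u.toWord.head hM) (u.toWord.getLast hM)
  refine ⟨FreeGroup.mk [(i, true), s], s :: (u.toWord ++ [flipLetter s]), ?_⟩
  have e : FreeGroup.mk [(i, true), s] * u * (FreeGroup.mk [(i, true), s])⁻¹ =
      FreeGroup.mk ([(i, true), s] ++ (u.toWord ++ [flipLetter s, (i, false)])) := by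
    conv_lhs => rw [← FreeGroup.mk_toWord (x := u)]
    rw [FreeGroup.inv_mk, FreeGroup.mul_mk, FreeGroup.mul_mk]
    simp [FreeGroup.invRev, flipLetter]
  rw [e, FreeGroup.toWord_mk, FreeGroup.IsReduced.reduce_eq]
  · simp
  · unfold FreeGroup.IsReduced at *
    rw [List.isChain_append, List.isChain_append]
    refine ⟨?_, ⟨hred, ?_, ?_⟩, ?_⟩
    · simpa using h1
    · simp only [List.isChain_cons_cons, List.isChain_singleton, and_true, flipLetter]
      intro h
      have := h1 h.symm
      simp [← this]
    · intro x hx y hy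
      rw [List.getLast?_eq_getLast_of_ne_nil hM] at hx
      simp [flipLetter] at hx hy
      subst hx hy
      exact h3
    · intro x hx y hy
      rw [List.head?_append_of_ne_nil _ hM, List.head?_eq_some_head hM] at hy
      simp at hx hy
      subst hx hy
      exact h2

lemma exists_comm (u v : FreeGroup (Fin 2)) (hu : u ≠ 1) (hv : v ≠ 1) :
    ∃ g h : FreeGroup (Fin 2), ⁅g * u * g⁻¹, h * v * h⁻¹⁆ ≠ 1 := by
  obtain ⟨g, A, hA⟩ := exists_conj 0 u hu
  obtain ⟨h, B, hB⟩ := exists_conj 1 v hv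
  refine ⟨g, h, fun H => ?_⟩
  rw [commutatorElement_eq_one_iff_mul_comm] at H
  have H' := congrArg FreeGroup.toWord H
  have rA : FreeGroup.IsReduced (g * u * g⁻¹).toWord := FreeGroup.isReduced_toWord
  have rB : FreeGroup.IsReduced (h * v * h⁻¹).toWord := FreeGroup.isReduced_toWord
  rw [FreeGroup.toWord_mul, FreeGroup.toWord_mul (h * v * h⁻¹), hA, hB] at H'
  rw [hA] at rA
  rw [hB] at rB
  rw [FreeGroup.IsReduced.reduce_eq, FreeGroup.IsReduced.reduce_eq] at H'
  · simp at H'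
  · unfold FreeGroup.IsReduced at *
    rw [List.isChain_append]
    refine ⟨rB, rA, ?_⟩
    intro x hx y hy
    rw [← List.cons_append, List.getLast?_concat] at hx
    simp at hx hy
    subst hx hy
    simp
  · unfold FreeGroup.IsReduced at *
    rw [List.isChain_append]
    refine ⟨rA, rB, ?_⟩
    intro x hx y hy
    rw [← List.cons_append, List.getLast?_concat] at hx
    simp at hx hy
    subst hx hy
    simp

variable {k : ℕ}

/-- Distance to the identity in operator norm. -/
noncomputable def len (g : SU k) : ℝ := ‖(1 : Matrix (Fin k) (Fin k) ℂ) - g.1.1‖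

lemma len_nonneg (g : SU k) : 0 ≤ len g := norm_nonneg _

lemma norm_mul_right (A : Matrix (Fin k) (Fin k) ℂ) (g : SU k) : ‖A * g.1.1‖ = ‖A‖ :=
  CStarRing.norm_mul_mem_unitary A g.1.2

lemma norm_mul_left (A : Matrix (Fin k) (Fin k) ℂ) (g : SU k) : ‖g.1.1 * A‖ = ‖A‖ :=
  CStarRing.norm_mem_unitary_mul A g.1.2

lemma coe_mul (g h : SU k) : (g * h).1.1 = g.1.1 * h.1.1 := rfl

lemma len_mul_inv (g h : SU k) : len (g * h⁻¹) = ‖h.1.1 - g.1.1‖ := by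
  rw [len, ← norm_mul_right _ h, sub_mul, ← coe_mul, inv_mul_cancel_right, one_mul]

lemma len_conj (g h : SU k) : len (g * h * g⁻¹) = len h := by
  rw [len_mul_inv, len, ← norm_mul_left (1 - h.1.1) g, mul_sub, mul_one, coe_mul]

lemma len_comm (g h : SU k) : len ⁅g, h⁆ ≤ 2 * len g * len h := by
  have e : ⁅g, h⁆ = g * h * (h * g)⁻¹ := by rw [commutatorElement_def]; group
  rw [e, len_mul_inv, coe_mul, coe_mul]
  have : h.1.1 * g.1.1 - g.1.1 * h.1.1 =
      (1 - h.1.1) * (1 - g.1.1) - (1 - g.1.1) * (1 - h.1.1) := by noncomm_ring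
  rw [this]
  refine (norm_sub_le _ _).trans ?_
  have a := norm_mul_le (1 - h.1.1) (1 - g.1.1)
  have b := norm_mul_le (1 - g.1.1) (1 - h.1.1)
  unfold len
  nlinarith

lemma len_comm_left (g h : SU k) : len ⁅g, h⁆ ≤ 2 * len g := by
  have e : ⁅g, h⁆ = g * (h * g * h⁻¹)⁻¹ := by rw [commutatorElement_def]; group
  have hc := len_conj h g
  rw [e, len_mul_inv]
  have : (h * g * h⁻¹).1.1 - g.1.1 = (1 - g.1.1) - (1 - (h * g * h⁻¹).1.1) := by abel
  rw [this]
  refine (norm_sub_le _ _).trans ?_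
  unfold len at *
  linarith

lemma len_comm_right (g h : SU k) : len ⁅g, h⁆ ≤ 2 * len h := by
  have e : ⁅g, h⁆ = g * h * g⁻¹ * h⁻¹ := commutatorElement_def g h
  have hc := len_conj g h
  rw [e, len_mul_inv]
  have : h.1.1 - (g * h * g⁻¹).1.1 = (1 - (g * h * g⁻¹).1.1) - (1 - h.1.1) := by abel
  rw [this]
  refine (norm_sub_le _ _).trans ?_
  unfold len at *
  linarith

lemma exists_contract (u : FreeGroup (Fin 2)) (hu : u ≠ 1) (m : ℕ) :
    ∃ w : FreeGroup (Fin 2), w ≠ 1 ∧ ∀ φ : FreeGroup (Fin 2) →* SU k,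
      len (φ u) ≤ 1 / 4 → len (φ w) ≤ 1 / 4 * (1 / 2) ^ m := by
  induction m with
  | zero => exact ⟨u, hu, fun φ h => by simpa using h⟩
  | succ m ih =>
    obtain ⟨w, hw, H⟩ := ih
    obtain ⟨g, h, hgh⟩ := exists_comm w w hw hw
    refine ⟨_, hgh, fun φ hφ => ?_⟩
    have h1 := H φ hφ
    have h2 : len (φ w) ≤ 1 / 4 :=
      h1.trans (mul_le_of_le_one_right (by norm_num) (pow_le_one₀ (by norm_num) (by norm_num)))
    rw [map_commutatorElement]
    refine (len_comm _ _).trans ?_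
    simp only [map_mul, map_inv, len_conj]
    have h0 := len_nonneg (φ w)
    rw [pow_succ]
    nlinarith

lemma exists_contract' (u : FreeGroup (Fin 2)) (hu : u ≠ 1) (δ : ℝ) (hδ : 0 < δ) :
    ∃ w : FreeGroup (Fin 2), w ≠ 1 ∧ ∀ φ : FreeGroup (Fin 2) →* SU k,
      len (φ u) ≤ 1 / 4 → len (φ w) ≤ δ := by
  obtain ⟨m, hm⟩ := exists_pow_lt_of_lt_one hδ (by norm_num : (1 / 2 : ℝ) < 1)
  obtain ⟨w, hw, H⟩ := exists_contract (k := k) u hu m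
  refine ⟨w, hw, fun φ hφ => (H φ hφ).trans ?_⟩
  have : (0 : ℝ) < (1 / 2) ^ m := by positivity
  linarith

lemma exists_combine (N : ℕ) : ∀ (δ : ℝ), 0 < δ →
    ∃ w : FreeGroup (Fin 2), w ≠ 1 ∧ ∀ φ : FreeGroup (Fin 2) →* SU k,
      (∃ n, 1 ≤ n ∧ n ≤ N ∧ len (φ (FreeGroup.of 0) ^ n) ≤ 1 / 4) → len (φ w) ≤ δ := by
  induction N with
  | zero =>
    intro δ _
    refine ⟨FreeGroup.of 0, FreeGroup.of_ne_one _, ?_⟩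
    rintro φ ⟨n, h1, h2, -⟩
    omega
  | succ N ih =>
    intro δ hδ
    obtain ⟨w, hw, H⟩ := ih (δ / 2) (by positivity)
    have hx : (FreeGroup.of (0 : Fin 2)) ^ (N + 1) ≠ 1 := by
      intro h
      have := congrArg FreeGroup.norm h
      simp at this
    obtain ⟨v, hv, H'⟩ := exists_contract' (k := k) _ hx (δ / 2) (by positivity)
    obtain ⟨g, h, hgh⟩ := exists_comm w v hw hv
    refine ⟨_, hgh, ?_⟩
    rintro φ ⟨n, h1, h2, h3⟩
    rw [map_commutatorElement]
    simp only [map_mul, map_inv]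
    rcases Nat.lt_or_ge N n with hn | hn
    · obtain rfl : n = N + 1 := by omega
      have := H' φ (by rwa [map_pow])
      refine (len_comm_right _ _).trans ?_
      rw [len_conj]
      linarith
    · have := H φ ⟨n, h1, hn, h3⟩
      refine (len_comm_left _ _).trans ?_
      rw [len_conj]
      linarith

lemma exists_bound (k : ℕ) : ∃ N : ℕ, ∀ a : SU k, ∃ n, 1 ≤ n ∧ n ≤ N ∧ len (a ^ n) ≤ 1 / 4 := by
  have : ProperSpace (Matrix (Fin k) (Fin k) ℂ) := FiniteDimensional.proper ℂ _
  obtain ⟨t, -, ht, hcov⟩ := (isCompact_closedBall (0 : Matrix (Fin k) (Fin k) ℂ)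
    ‖(1 : Matrix (Fin k) (Fin k) ℂ)‖).finite_cover_balls (e := 1 / 8) (by norm_num)
  have key : ∀ a : SU k, ∃ c ∈ t, dist a.1.1 c < 1 / 8 := by
    intro a
    have : a.1.1 ∈ Metric.closedBall (0 : Matrix (Fin k) (Fin k) ℂ)
        ‖(1 : Matrix (Fin k) (Fin k) ℂ)‖ := by
      rw [mem_closedBall_zero_iff, ← norm_mul_left 1 a, mul_one]
    simpa using hcov this
  choose c hc hd using key
  refine ⟨ht.toFinset.card, fun a => ?_⟩
  obtain ⟨i, hi, j, hj, hij, he⟩ := Finset.exists_ne_map_eq_of_card_lt_of_maps_to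
    (s := Finset.range (ht.toFinset.card + 1)) (t := ht.toFinset) (by simp)
    (f := fun n => c (a ^ n)) (by intro n _; simpa using hc (a ^ n))
  wlog hlt : i < j generalizing i j
  · exact this j hj i hi hij.symm he.symm (by omega)
  refine ⟨j - i, by omega, by simp at hj; omega, ?_⟩
  have e : a ^ (j - i) = a ^ j * (a ^ i)⁻¹ := pow_sub a hlt.le
  rw [e, len_mul_inv, ← dist_eq_norm]
  have h1 := hd (a ^ i)
  have h2 := hd (a ^ j)
  rw [he] at h1
  have := dist_triangle_right (a ^ i).1.1 (a ^ j).1.1 (c (a ^ j))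
  linarith

lemma nhds_len (V : Set (SU k)) (hV : V ∈ nhds (1 : SU k)) :
    ∃ δ > 0, ∀ g : SU k, len g ≤ δ → g ∈ V := by
  rw [mem_nhds_induced] at hV
  obtain ⟨U, hU, hUV⟩ := hV
  rw [mem_nhds_induced] at hU
  obtain ⟨W, hW, hWU⟩ := hU
  obtain ⟨ε, hε, hb⟩ := Metric.mem_nhds_iff.1 hW
  refine ⟨ε / 2, by positivity, fun g hg => hUV (hWU (hb ?_))⟩
  rw [Metric.mem_ball, dist_comm, dist_eq_norm]
  change len g < ε
  linarith

end WordAux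

/-- **Theorem (Thom).** For every `k` and every neighborhood `V` of the identity in
`SU(k)` there is a nontrivial word `w ∈ F₂` whose word map on `SU(k)` has image
contained in `V`. -/
theorem exists_word_with_image_in_neighborhood
    (k : ℕ) (V : Set (SU k)) (hV : V ∈ nhds (1 : SU k)) :
    ∃ w : FreeGroup (Fin 2), w ≠ 1 ∧
      ∀ a b : SU k, FreeGroup.lift ![a, b] w ∈ V := by
  obtain ⟨δ, hδ, hVδ⟩ := WordAux.nhds_len V hV
  obtain ⟨N, hN⟩ := WordAux.exists_bound k
  obtain ⟨w, hw, H⟩ := WordAux.exists_combine (k := k) N δ hδ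
  refine ⟨w, hw, fun a b => hVδ _ (H _ ?_)⟩
  simpa using hN a
end
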